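/- arXiv:1803.10337 — 2 statements merged into one kernel-verified Lean document; each statement's English description precedes it below -/
import Mathlib

section
/- Assume a−b is odd and N_m ≠ 0 (i.e. the associated normalized rank-2 bundle with c_1 = −1 is unstable), and let k = max{ j ∈ ℤ : N_{m−j} ≠ 0 } be the index of instability (necessarily k ≥ 0). Then for a general linear form L ∈ R_1, the multiplication map ×L : M_{d−1} → M_d is injective for all d ≤ m+k and surjective for all d ≥ m−k−1. -/
open MvPolynomial

noncomputable section

variable {K : Type*} [Field K]

/-- `p` is homogeneous of (integer) degree `d`; for `d < 0` this forces `p = 0`. -/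
def homog (p : MvPolynomial (Fin 3) K) (d : ℤ) : Prop :=
  IsWeightedHomogeneous (fun _ : Fin 3 => (1 : ℤ)) p d

/-- The degree-`d` graded piece of `⊕_{i=1}^{N} R(-a i)`, as a `K`-subspace of
`Fin N → R`, `R = K[x,y,z]`. -/
def degPiece (N : ℕ) (a : Fin N → ℤ) (d : ℤ) :
    Submodule K (Fin N → MvPolynomial (Fin 3) K) :=
  Submodule.pi Set.univ fun i =>
    weightedHomogeneousSubmodule K (fun _ : Fin 3 => (1 : ℤ)) (d - a i)

lemma mem_degPiece {N : ℕ} {a : Fin N → ℤ} {d : ℤ} {v : Fin N → MvPolynomial (Fin 3) K} :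
    v ∈ degPiece (K := K) N a d ↔ ∀ i, homog (v i) (d - a i) := by
  simp [degPiece, Submodule.mem_pi, mem_weightedHomogeneousSubmodule, homog]

/-- The map `φ : ⊕ R(-a i) → ⊕ R(-b j)` given by the matrix `Φ`, as a `K`-linear map. -/
def phiK (n : ℕ) (Φ : Matrix (Fin n) (Fin (n + 2)) (MvPolynomial (Fin 3) K)) :
    (Fin (n + 2) → MvPolynomial (Fin 3) K) →ₗ[K] (Fin n → MvPolynomial (Fin 3) K) :=
  (Matrix.mulVecLin Φ).restrictScalars K

/-- The degree-`d` graded piece of `N = ker φ`. -/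
def Nd (n : ℕ) (a : Fin (n + 2) → ℤ) (Φ : Matrix (Fin n) (Fin (n + 2)) (MvPolynomial (Fin 3) K))
    (d : ℤ) : Submodule K (Fin (n + 2) → MvPolynomial (Fin 3) K) :=
  degPiece (n + 2) a d ⊓ LinearMap.ker (phiK n Φ)

/-- The image of the degree-`d` piece of `F` inside the degree-`d` piece of `G`,
viewed as a subspace of the latter. -/
def MdSub (n : ℕ) (a : Fin (n + 2) → ℤ) (b : Fin n → ℤ)
    (Φ : Matrix (Fin n) (Fin (n + 2)) (MvPolynomial (Fin 3) K)) (d : ℤ) :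
    Submodule K ↥(degPiece (K := K) n b d) :=
  Submodule.comap (degPiece (K := K) n b d).subtype
    (Submodule.map (phiK n Φ) (degPiece (n + 2) a d))

/-- The degree-`d` graded piece of `M = coker φ`. -/
abbrev Md (n : ℕ) (a : Fin (n + 2) → ℤ) (b : Fin n → ℤ)
    (Φ : Matrix (Fin n) (Fin (n + 2)) (MvPolynomial (Fin 3) K)) (d : ℤ) :=
  ↥(degPiece (K := K) n b d) ⧸ MdSub n a b Φ d

/-- Multiplication by `L` on tuples of polynomials, as a `K`-linear map. -/
def mulL (N : ℕ) (L : MvPolynomial (Fin 3) K) :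
    (Fin N → MvPolynomial (Fin 3) K) →ₗ[K] (Fin N → MvPolynomial (Fin 3) K) :=
  ((LinearMap.lsmul (MvPolynomial (Fin 3) K) (Fin N → MvPolynomial (Fin 3) K)) L).restrictScalars K

lemma mulL_apply {N : ℕ} (L : MvPolynomial (Fin 3) K) (v : Fin N → MvPolynomial (Fin 3) K) :
    mulL N L v = L • v := rfl

lemma mulL_mem {N : ℕ} {a : Fin N → ℤ} {L : MvPolynomial (Fin 3) K} (hL : homog L 1)
    {d : ℤ} {v : Fin N → MvPolynomial (Fin 3) K} (hv : v ∈ degPiece (K := K) N a (d - 1)) :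
    mulL N L v ∈ degPiece (K := K) N a d := by
  rw [mem_degPiece] at hv ⊢
  intro i
  have h := hL.mul (hv i)
  have e : (1 : ℤ) + (d - 1 - a i) = d - a i := by ring
  rw [e] at h
  simpa [mulL_apply, smul_eq_mul, homog] using h

/-- Multiplication by `L` from the degree-`d-1` piece of `G` to the degree-`d` piece. -/
def mulLres (n : ℕ) (b : Fin n → ℤ) (L : MvPolynomial (Fin 3) K) (hL : homog L 1) (d : ℤ) :
    ↥(degPiece (K := K) n b (d - 1)) →ₗ[K] ↥(degPiece (K := K) n b d) :=
  (mulL n L).restrict fun _ hv => mulL_mem hL hv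

lemma mulLres_comap (n : ℕ) (a : Fin (n + 2) → ℤ) (b : Fin n → ℤ)
    (Φ : Matrix (Fin n) (Fin (n + 2)) (MvPolynomial (Fin 3) K))
    (L : MvPolynomial (Fin 3) K) (hL : homog L 1) (d : ℤ) :
    MdSub n a b Φ (d - 1) ≤ Submodule.comap (mulLres n b L hL d) (MdSub n a b Φ d) := by
  rintro ⟨w, hw⟩ hmem
  obtain ⟨v, hv, hφv⟩ := hmem
  refine ⟨mulL (n + 2) L v, mulL_mem hL hv, ?_⟩
  show phiK n Φ (mulL (n + 2) L v) = ((mulLres n b L hL d) ⟨w, hw⟩ : Fin n → MvPolynomial (Fin 3) K)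
  have : phiK n Φ (mulL (n + 2) L v) = L • phiK n Φ v := by
    simp [phiK, mulL_apply]
  rw [this, hφv]
  rfl

/-- The map induced by multiplication by `L` from `M_{d-1}` to `M_d`,
where `M = coker φ`. -/
def mulLmap (n : ℕ) (a : Fin (n + 2) → ℤ) (b : Fin n → ℤ)
    (Φ : Matrix (Fin n) (Fin (n + 2)) (MvPolynomial (Fin 3) K))
    (L : MvPolynomial (Fin 3) K) (hL : homog L 1) (d : ℤ) :
    Md n a b Φ (d - 1) →ₗ[K] Md n a b Φ d :=
  Submodule.mapQ (MdSub n a b Φ (d - 1)) (MdSub n a b Φ d) (mulLres n b L hL d)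
    (mulLres_comap n a b Φ L hL d)

/-- The linear form with coefficient vector `c`. -/
def linform (c : Fin 3 → K) : MvPolynomial (Fin 3) K := ∑ i, C (c i) * X i

lemma homog_linform (c : Fin 3 → K) : homog (linform c) 1 := by
  rw [homog, ← mem_weightedHomogeneousSubmodule]
  refine sum_mem fun i _ => ?_
  rw [mem_weightedHomogeneousSubmodule]
  simpa using (isWeightedHomogeneous_C (fun _ : Fin 3 => (1 : ℤ)) (c i)).mul
    (isWeightedHomogeneous_X K (fun _ : Fin 3 => (1 : ℤ)) i)

/-- Finite length of `coker φ`: all sufficiently high graded pieces vanish. -/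
def FiniteColength (n : ℕ) (a : Fin (n + 2) → ℤ) (b : Fin n → ℤ)
    (Φ : Matrix (Fin n) (Fin (n + 2)) (MvPolynomial (Fin 3) K)) : Prop :=
  ∃ D : ℤ, ∀ d : ℤ, D ≤ d →
    degPiece (K := K) n b d ≤ Submodule.map (phiK n Φ) (degPiece (n + 2) a d)

end

namespace BR

set_option linter.unusedSectionVars false

section LinAlg

variable {R : Type*} [CommRing R] {n : Type*} [Fintype n] [DecidableEq n]

open Matrix

/-- The matrix `Φ` bordered by two additional rows `p`, `q`. -/
def TT (Φ : Matrix n (n ⊕ Fin 2) R) (p q : n ⊕ Fin 2 → R) : Matrix (n ⊕ Fin 2) (n ⊕ Fin 2) R :=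
  Matrix.fromRows Φ (Matrix.of ![p, q])

/-- The determinant of the bordered matrix. -/
def AA (Φ : Matrix n (n ⊕ Fin 2) R) (p q : n ⊕ Fin 2 → R) : R := (TT Φ p q).det

lemma TT_updateRow1 (Φ : Matrix n (n ⊕ Fin 2) R) (p q q' : n ⊕ Fin 2 → R) :
    (TT Φ p q).updateRow (Sum.inr 1) q' = TT Φ p q' := by
  ext i j
  rcases i with i | i
  · simp [TT, Matrix.updateRow_apply]
  · fin_cases i <;> simp [TT, Matrix.updateRow_apply]

lemma TT_updateRow0 (Φ : Matrix n (n ⊕ Fin 2) R) (p p' q : n ⊕ Fin 2 → R) :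
    (TT Φ p q).updateRow (Sum.inr 0) p' = TT Φ p' q := by
  ext i j
  rcases i with i | i
  · simp [TT, Matrix.updateRow_apply]
  · fin_cases i <;> simp [TT, Matrix.updateRow_apply]

/-- `AA` as a linear map in the last variable. -/
def AAl (Φ : Matrix n (n ⊕ Fin 2) R) (p : n ⊕ Fin 2 → R) : (n ⊕ Fin 2 → R) →ₗ[R] R where
  toFun q := AA Φ p q
  map_add' q q' := by
    have := Matrix.det_updateRow_add (TT Φ p 0) (Sum.inr 1) q q'
    simp only [TT_updateRow1] at this
    exact this
  map_smul' c q := by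
    have := Matrix.det_updateRow_smul (TT Φ p 0) (Sum.inr 1) c q
    simp only [TT_updateRow1] at this
    exact this

lemma AA_add_left (Φ : Matrix n (n ⊕ Fin 2) R) (p p' q : n ⊕ Fin 2 → R) :
    AA Φ (p + p') q = AA Φ p q + AA Φ p' q := by
  have := Matrix.det_updateRow_add (TT Φ 0 q) (Sum.inr 0) p p'
  simp only [TT_updateRow0] at this
  exact this

lemma AA_self (Φ : Matrix n (n ⊕ Fin 2) R) (p : n ⊕ Fin 2 → R) : AA Φ p p = 0 := by
  refine Matrix.det_zero_of_row_eq (i := Sum.inr 0) (j := Sum.inr 1) (by simp) ?_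
  ext j; simp [TT]

lemma AA_row (Φ : Matrix n (n ⊕ Fin 2) R) (p : n ⊕ Fin 2 → R) (r : n) : AA Φ p (Φ r) = 0 := by
  refine Matrix.det_zero_of_row_eq (i := Sum.inl r) (j := Sum.inr 1) (by simp) ?_
  ext j; simp [TT]

lemma AA_anti (Φ : Matrix n (n ⊕ Fin 2) R) (p q : n ⊕ Fin 2 → R) : AA Φ p q = - AA Φ q p := by
  have h := AA_self Φ (p + q)
  have e1 : AA Φ p (p + q) = AA Φ p p + AA Φ p q := (AAl Φ p).map_add p q
  have e2 : AA Φ q (p + q) = AA Φ q p + AA Φ q q := (AAl Φ q).map_add p q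
  rw [AA_add_left, e1, e2, AA_self, AA_self] at h
  linear_combination h

/-- The vector of `p`-bordered minors. -/
def al (Φ : Matrix n (n ⊕ Fin 2) R) (p : n ⊕ Fin 2 → R) : n ⊕ Fin 2 → R :=
  fun j => AA Φ p (Pi.single j 1)

lemma dot_al (Φ : Matrix n (n ⊕ Fin 2) R) (p q : n ⊕ Fin 2 → R) : q ⬝ᵥ al Φ p = AA Φ p q := by
  have := LinearMap.pi_apply_eq_sum_univ (AAl Φ p) q
  rw [show AA Φ p q = AAl Φ p q from rfl, this]
  simp only [dotProduct, al, AAl, smul_eq_mul]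
  refine Finset.sum_congr rfl fun i _ => ?_
  congr 2
  ext j; simp [Pi.single_apply, eq_comm]

lemma mulVec_al (Φ : Matrix n (n ⊕ Fin 2) R) (p : n ⊕ Fin 2 → R) : Φ *ᵥ al Φ p = 0 := by
  ext r
  show Φ r ⬝ᵥ al Φ p = 0
  rw [dot_al, AA_row]

lemma key_identity (Φ : Matrix n (n ⊕ Fin 2) R) (U : Matrix (n ⊕ Fin 2) n R)
    {s v : n ⊕ Fin 2 → R} (hs : Φ *ᵥ s = 0) (hv : Φ *ᵥ v = 0) (p q : n ⊕ Fin 2 → R) :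
    AA Φ p q * AA Uᵀ s v = (Φ * U).det * ((p ⬝ᵥ s) * (q ⬝ᵥ v) - (p ⬝ᵥ v) * (q ⬝ᵥ s)) := by
  have e : TT Φ p q * (TT Uᵀ s v)ᵀ = Matrix.fromBlocks (Φ * U) 0 (Matrix.of ![p, q] * U)
      !![p ⬝ᵥ s, p ⬝ᵥ v; q ⬝ᵥ s, q ⬝ᵥ v] := by
    rw [TT, TT, Matrix.transpose_fromRows, Matrix.transpose_transpose, Matrix.fromRows_mul_fromCols]
    congr 1
    · ext i j
      have h1 := congrFun hs i
      have h2 := congrFun hv i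
      fin_cases j
      · simpa [Matrix.mul_apply, Matrix.mulVec, dotProduct] using h1
      · simpa [Matrix.mul_apply, Matrix.mulVec, dotProduct] using h2
    · ext i j
      fin_cases i <;> fin_cases j <;> simp [Matrix.mul_apply, dotProduct]
  have := congrArg Matrix.det e
  rw [Matrix.det_mul, Matrix.det_transpose, Matrix.det_fromBlocks_zero₁₂, Matrix.det_fin_two_of]
    at this
  exact this

lemma TT_mulVec (Φ : Matrix n (n ⊕ Fin 2) R) (p q v : n ⊕ Fin 2 → R) :
    TT Φ p q *ᵥ v = Sum.elim (Φ *ᵥ v) ![p ⬝ᵥ v, q ⬝ᵥ v] := by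
  ext i
  rcases i with i | i
  · rfl
  · fin_cases i <;> rfl

lemma exists_AA_ne_zero [IsDomain R] (Φ : Matrix n (n ⊕ Fin 2) R)
    (hΦ : ∀ c : n → R, c ᵥ* Φ = 0 → c = 0) : ∃ p q, AA Φ p q ≠ 0 := by
  by_contra! H
  obtain ⟨v, hv0, hv⟩ := Matrix.exists_mulVec_eq_zero_iff.mpr (H 0 0)
  rw [TT_mulVec] at hv
  obtain ⟨j, hj⟩ := Function.ne_iff.mp hv0
  obtain ⟨v', hv0', hv'⟩ := Matrix.exists_mulVec_eq_zero_iff.mpr (H (Pi.single j 1) 0)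
  rw [TT_mulVec] at hv'
  obtain ⟨i, hi⟩ := Function.ne_iff.mp hv0'
  obtain ⟨c, hc0, hc⟩ :=
    Matrix.exists_vecMul_eq_zero_iff.mpr (H (Pi.single j 1) (Pi.single i 1))
  have dv : ∀ w, c ⬝ᵥ (TT Φ (Pi.single j 1) (Pi.single i 1) *ᵥ w) = 0 := by
    intro w
    rw [Matrix.dotProduct_mulVec, hc, zero_dotProduct]
  have hΦv : Φ *ᵥ v = 0 := by
    ext r; exact congrFun hv (Sum.inl r)
  have hΦv' : Φ *ᵥ v' = 0 := by
    ext r; exact congrFun hv' (Sum.inl r)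
  have hpv' : v' j = 0 := by
    have := congrFun hv' (Sum.inr 0)
    simpa using this
  have c2 : c (Sum.inr 1) = 0 := by
    have := dv v'
    rw [TT_mulVec, hΦv', single_one_dotProduct, single_one_dotProduct] at this
    simp [dotProduct, hpv'] at this
    exact this.resolve_right hi
  have c1 : c (Sum.inr 0) = 0 := by
    have := dv v
    rw [TT_mulVec, hΦv, single_one_dotProduct, single_one_dotProduct] at this
    simp [dotProduct, c2] at this
    exact this.resolve_right hj
  have c0 : (fun r => c (Sum.inl r)) = 0 := by
    apply hΦ
    ext l
    have := congrFun hc l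
    simpa [Matrix.vecMul, dotProduct, c1, c2, TT] using this
  apply hc0
  ext r
  rcases r with r | r
  · exact congrFun c0 r
  · fin_cases r
    · exact c1
    · exact c2

lemma rows_indep [IsDomain R] {Φ : Matrix n (n ⊕ Fin 2) R} {U : Matrix (n ⊕ Fin 2) n R} {δ : R}
    (hδ : δ ≠ 0) (hU : Φ * U = δ • (1 : Matrix n n R)) (c : n → R) (hc : c ᵥ* Φ = 0) : c = 0 := by
  have : c ᵥ* (Φ * U) = 0 := by rw [← Matrix.vecMul_vecMul, hc, Matrix.zero_vecMul]
  rw [hU, Matrix.vecMul_smul, Matrix.vecMul_one] at this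
  exact (smul_eq_zero.mp this).resolve_left hδ

lemma det_U {Φ : Matrix n (n ⊕ Fin 2) R} {U : Matrix (n ⊕ Fin 2) n R} {δ : R}
    (hU : Φ * U = δ • (1 : Matrix n n R)) : (Φ * U).det = δ ^ Fintype.card n := by
  rw [hU, Matrix.det_smul, Matrix.det_one, mul_one]

/-- Local exactness at `F`. -/
lemma local_A [IsDomain R] {Φ : Matrix n (n ⊕ Fin 2) R} {U : Matrix (n ⊕ Fin 2) n R} {δ : R}
    (hδ : δ ≠ 0) (hU : Φ * U = δ • (1 : Matrix n n R)) {s : n ⊕ Fin 2 → R} (hs : Φ *ᵥ s = 0) :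
    ∃ q, ∀ p, AA Φ p q = δ ^ Fintype.card n * (p ⬝ᵥ s) := by
  refine ⟨al Uᵀ s, ?_⟩
  obtain ⟨p0, q0, h0⟩ := exists_AA_ne_zero Φ (rows_indep hδ hU)
  have main : ∀ p q', AA Φ p q' ≠ 0 → AA Φ p (al Uᵀ s) = δ ^ Fintype.card n * (p ⬝ᵥ s) := by
    intro p q' h
    have k := key_identity Φ U hs (mulVec_al Φ p) p q'
    rw [dot_al, dot_al, AA_self, det_U hU] at k
    have e : AA Uᵀ s (al Φ p) = AA Φ p (al Uᵀ s) := by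
      rw [← dot_al Φ, ← dot_al Uᵀ, dotProduct_comm]
    rw [e] at k
    apply mul_left_cancel₀ h
    rw [k]; ring
  intro p
  by_cases hp : ∃ q', AA Φ p q' ≠ 0
  · obtain ⟨q', h⟩ := hp
    exact main p q' h
  · push Not at hp
    have h1 := main (p + p0) q0 (by rw [AA_add_left, hp, zero_add]; exact h0)
    have h2 := main p0 q0 h0
    rw [AA_add_left, add_dotProduct, h2] at h1
    linear_combination h1

/-- Local exactness at the dual of `F`. -/
lemma local_B [IsDomain R] {Φ : Matrix n (n ⊕ Fin 2) R} {U : Matrix (n ⊕ Fin 2) n R} {δ : R}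
    (hδ : δ ≠ 0) (hU : Φ * U = δ • (1 : Matrix n n R)) {q : n ⊕ Fin 2 → R}
    (hq : ∀ p, AA Φ p q = 0) : ∃ c : n → R, δ • q = c ᵥ* Φ := by
  have hker : ∀ s, Φ *ᵥ s = 0 → q ⬝ᵥ s = 0 := by
    intro s hs
    obtain ⟨q', hq'⟩ := local_A hδ hU hs
    have h := hq' q
    rw [AA_anti, hq, neg_zero] at h
    exact (mul_eq_zero.mp h.symm).resolve_left (pow_ne_zero _ hδ)
  refine ⟨q ᵥ* U, ?_⟩
  ext j
  have h := hker (δ • Pi.single j 1 - U *ᵥ (Φ *ᵥ Pi.single j 1)) (by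
    rw [Matrix.mulVec_sub, Matrix.mulVec_mulVec, hU, Matrix.mulVec_smul, Matrix.smul_mulVec,
      Matrix.one_mulVec, sub_self])
  rw [dotProduct_sub, dotProduct_smul, Matrix.dotProduct_mulVec, Matrix.dotProduct_mulVec] at h
  simp only [dotProduct_single, mul_one, smul_eq_mul] at h
  simpa [sub_eq_zero] using h

/-- Exactness at the dual of `F`. -/
lemma exact_B [IsDomain R] [DecompositionMonoid R] {Φ : Matrix n (n ⊕ Fin 2) R}
    {U₁ U₂ : Matrix (n ⊕ Fin 2) n R} {δ₁ δ₂ : R} (h₁ : δ₁ ≠ 0) (h₂ : δ₂ ≠ 0)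
    (hrel : IsRelPrime δ₁ δ₂)
    (hU₁ : Φ * U₁ = δ₁ • (1 : Matrix n n R)) (hU₂ : Φ * U₂ = δ₂ • (1 : Matrix n n R))
    {q : n ⊕ Fin 2 → R} (hq : ∀ p, AA Φ p q = 0) : ∃ c : n → R, q = c ᵥ* Φ := by
  obtain ⟨c₁, hc₁⟩ := local_B h₁ hU₁ hq
  obtain ⟨c₂, hc₂⟩ := local_B h₂ hU₂ hq
  have e : δ₂ • c₁ = δ₁ • c₂ := by
    rw [← sub_eq_zero]
    apply rows_indep h₁ hU₁
    rw [Matrix.sub_vecMul, Matrix.smul_vecMul, Matrix.smul_vecMul, ← hc₁, ← hc₂, smul_comm,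
      sub_self]
  have hd : ∀ r, ∃ c, c₁ r = δ₁ * c := by
    intro r
    have := congrFun e r
    simp only [Pi.smul_apply, smul_eq_mul] at this
    exact hrel.dvd_of_dvd_mul_left ⟨_, this⟩
  choose c hc using hd
  refine ⟨c, ?_⟩
  apply smul_right_injective _ h₁
  show δ₁ • q = δ₁ • (c ᵥ* Φ)
  rw [hc₁, ← Matrix.smul_vecMul]
  congr 1
  ext r; exact hc r

/-- Buchsbaum-Rim exactness at `F`. -/
lemma exact_A [IsDomain R] [DecompositionMonoid R] {Φ : Matrix n (n ⊕ Fin 2) R}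
    {U₁ U₂ U₃ : Matrix (n ⊕ Fin 2) n R} {δ₁ δ₂ δ₃ : R} (h₁ : δ₁ ≠ 0) (h₂ : δ₂ ≠ 0) (h₃ : δ₃ ≠ 0)
    (hrel : IsRelPrime δ₁ δ₂)
    (hreg : ∀ N : ℕ, ∀ h r t, δ₃ ^ N * h = δ₁ ^ N * r + δ₂ ^ N * t → ∃ r' t', h = δ₁ ^ N * r' + δ₂ ^ N * t')
    (hU₁ : Φ * U₁ = δ₁ • (1 : Matrix n n R)) (hU₂ : Φ * U₂ = δ₂ • (1 : Matrix n n R))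
    (hU₃ : Φ * U₃ = δ₃ • (1 : Matrix n n R))
    {s : n ⊕ Fin 2 → R} (hs : Φ *ᵥ s = 0) : ∃ q, ∀ p, AA Φ p q = p ⬝ᵥ s := by
  obtain ⟨q₁, hq₁⟩ := local_A h₁ hU₁ hs
  obtain ⟨q₂, hq₂⟩ := local_A h₂ hU₂ hs
  obtain ⟨q₃, hq₃⟩ := local_A h₃ hU₃ hs
  set N := Fintype.card n
  have hsm : ∀ (c : R) p q, AA Φ p (c • q) = c * AA Φ p q := fun c p q => (AAl Φ p).map_smul c q
  have hsub : ∀ p q q', AA Φ p (q - q') = AA Φ p q - AA Φ p q' :=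
    fun p q q' => (AAl Φ p).map_sub q q'
  obtain ⟨c₁₂, e₁₂⟩ := exact_B h₁ h₂ hrel hU₁ hU₂ (q := δ₂ ^ N • q₁ - δ₁ ^ N • q₂) (by
    intro p; rw [hsub, hsm, hsm, hq₁, hq₂]; ring)
  obtain ⟨c₂₃, e₂₃⟩ := exact_B h₁ h₂ hrel hU₁ hU₂ (q := δ₃ ^ N • q₂ - δ₂ ^ N • q₃) (by
    intro p; rw [hsub, hsm, hsm, hq₂, hq₃]; ring)
  obtain ⟨c₁₃, e₁₃⟩ := exact_B h₁ h₂ hrel hU₁ hU₂ (q := δ₃ ^ N • q₁ - δ₁ ^ N • q₃) (by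
    intro p; rw [hsub, hsm, hsm, hq₁, hq₃]; ring)
  have hrelN : δ₃ ^ N • c₁₂ - δ₂ ^ N • c₁₃ + δ₁ ^ N • c₂₃ = 0 := by
    apply rows_indep h₁ hU₁
    rw [Matrix.add_vecMul, Matrix.sub_vecMul, Matrix.smul_vecMul, Matrix.smul_vecMul,
      Matrix.smul_vecMul, ← e₁₂, ← e₂₃, ← e₁₃]
    ext j
    simp only [Pi.add_apply, Pi.sub_apply, Pi.smul_apply, smul_eq_mul, Pi.zero_apply]
    ring
  have hk : ∀ i, ∃ r' t', c₁₂ i = δ₁ ^ N * r' + δ₂ ^ N * t' := by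
    intro i
    apply hreg N (c₁₂ i) (- c₂₃ i) (c₁₃ i)
    have := congrFun hrelN i
    simp only [Pi.add_apply, Pi.sub_apply, Pi.smul_apply, smul_eq_mul, Pi.zero_apply] at this
    linear_combination this
  choose r t hrt using hk
  have hc : c₁₂ = δ₁ ^ N • r + δ₂ ^ N • t := by ext i; exact hrt i
  have e : δ₂ ^ N • (q₁ - t ᵥ* Φ) = δ₁ ^ N • (q₂ + r ᵥ* Φ) := by
    have e' := e₁₂
    rw [hc, Matrix.add_vecMul, Matrix.smul_vecMul, Matrix.smul_vecMul] at e'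
    rw [smul_sub, smul_add, ← sub_eq_zero]
    rw [← sub_eq_zero] at e'
    rw [← e']; abel
  have hd : ∀ j, ∃ x, (q₁ - t ᵥ* Φ) j = δ₁ ^ N * x := by
    intro j
    have := congrFun e j
    simp only [Pi.smul_apply, smul_eq_mul] at this
    exact (hrel.pow (m := N) (n := N)).dvd_of_dvd_mul_left ⟨_, this⟩
  choose q hq using hd
  refine ⟨q, fun p => ?_⟩
  have hq' : q₁ - t ᵥ* Φ = δ₁ ^ N • q := by ext j; exact hq j
  have hz : AA Φ p (t ᵥ* Φ) = 0 := by
    rw [← dot_al, ← Matrix.dotProduct_mulVec, mulVec_al, dotProduct_zero]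
  have h := congrArg (AA Φ p) hq'
  rw [hsub, hsm, hq₁, hz, sub_zero] at h
  exact (mul_left_cancel₀ (pow_ne_zero _ h₁) h).symm

/-- Two elements of the kernel: their wedge is a multiple of the bordered minors. -/
lemma wedge [IsDomain R] [DecompositionMonoid R] {Φ : Matrix n (n ⊕ Fin 2) R}
    {U₁ U₂ : Matrix (n ⊕ Fin 2) n R} {δ₁ δ₂ : R} (h₁ : δ₁ ≠ 0)
    (hrel : IsRelPrime δ₁ δ₂)
    (hU₁ : Φ * U₁ = δ₁ • (1 : Matrix n n R)) (hU₂ : Φ * U₂ = δ₂ • (1 : Matrix n n R))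
    {s v : n ⊕ Fin 2 → R} (hs : Φ *ᵥ s = 0) (hv : Φ *ᵥ v = 0) :
    ∃ g, ∀ p q, (p ⬝ᵥ s) * (q ⬝ᵥ v) - (p ⬝ᵥ v) * (q ⬝ᵥ s) = AA Φ p q * g := by
  have k₁ := key_identity Φ U₁ hs hv
  have k₂ := key_identity Φ U₂ hs hv
  rw [det_U hU₁] at k₁
  rw [det_U hU₂] at k₂
  obtain ⟨p0, q0, h0⟩ := exists_AA_ne_zero Φ (rows_indep h₁ hU₁)
  set N := Fintype.card n
  have e : δ₂ ^ N * AA U₁ᵀ s v = δ₁ ^ N * AA U₂ᵀ s v := by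
    apply mul_left_cancel₀ h0
    linear_combination δ₂ ^ N * k₁ p0 q0 - δ₁ ^ N * k₂ p0 q0
  obtain ⟨g, hg⟩ := (hrel.pow (m := N) (n := N)).dvd_of_dvd_mul_left ⟨_, e⟩
  refine ⟨g, fun p q => ?_⟩
  apply mul_left_cancel₀ (pow_ne_zero N h₁)
  rw [← k₁, hg]; ring

end LinAlg
section Graded

variable {K : Type*} [Field K] {σ : Type*}

open Matrix MvPolynomial

/-- Homogeneous of integer degree `d`. -/
abbrev hg (p : MvPolynomial σ K) (d : ℤ) : Prop :=
  IsWeightedHomogeneous (fun _ : σ => (1 : ℤ)) p d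

/-- The component of degree `d`. -/
noncomputable abbrev cmp (d : ℤ) : MvPolynomial σ K →ₗ[K] MvPolynomial σ K :=
  weightedHomogeneousComponent (fun _ : σ => (1 : ℤ)) d

lemma cmp_mul {A : MvPolynomial σ K} {α : ℤ} (hA : hg A α) (f : MvPolynomial σ K) (d : ℤ) :
    cmp d (A * f) = A * cmp (d - α) f := by
  classical
  induction f using MvPolynomial.induction_on' with
  | monomial u r =>
    have h1 : hg (monomial u r) (Finsupp.weight (fun _ : σ => (1 : ℤ)) u) :=
      isWeightedHomogeneous_monomial _ _ _ rfl
    have h2 := hA.mul h1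
    by_cases h : α + Finsupp.weight (fun _ : σ => (1 : ℤ)) u = d
    · rw [show d - α = Finsupp.weight (fun _ : σ => (1 : ℤ)) u by omega, ← h,
        h1.weightedHomogeneousComponent_same, h2.weightedHomogeneousComponent_same]
    · rw [cmp, cmp, h1.weightedHomogeneousComponent_ne, h2.weightedHomogeneousComponent_ne, mul_zero]
      · exact fun h' => h h'.symm
      · omega
  | add p q hp hq => rw [mul_add, map_add, map_add, mul_add, hp, hq]

lemma graded_lift {I J : Type*} [Fintype I] {M : Matrix J I (MvPolynomial σ K)} {a : I → ℤ}
    {b : J → ℤ} (hM : ∀ j i, hg (M j i) (a i - b j)) {d : ℤ} {g : J → MvPolynomial σ K}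
    (hgd : ∀ j, hg (g j) (d - b j)) {f : I → MvPolynomial σ K} (hf : M *ᵥ f = g) :
    M *ᵥ (fun i => cmp (d - a i) (f i)) = g := by
  ext1 j
  have h := congrArg (cmp (d - b j)) (congrFun hf j)
  rw [(hgd j).weightedHomogeneousComponent_same] at h
  rw [← h]
  simp only [Matrix.mulVec, dotProduct, map_sum]
  refine Finset.sum_congr rfl fun i _ => ?_
  rw [cmp_mul (hM j i)]
  rw [show d - b j - (a i - b j) = d - a i by ring]

lemma cmp_hg (d : ℤ) (f : MvPolynomial σ K) : hg (cmp d f) d :=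
  weightedHomogeneousComponent_isWeightedHomogeneous d f

lemma det_hg {I : Type*} [Fintype I] [DecidableEq I] {M : Matrix I I (MvPolynomial σ K)}
    {a b : I → ℤ} (hM : ∀ j i, hg (M j i) (a i - b j)) : hg M.det (∑ i, a i - ∑ i, b i) := by
  rw [Matrix.det_apply]
  refine IsWeightedHomogeneous.sum _ _ _ fun τ _ => ?_
  have h := IsWeightedHomogeneous.prod Finset.univ (fun i => M (τ i) i) (fun i => a i - b (τ i))
    (w := fun _ : σ => (1 : ℤ)) (fun i _ => hM _ _)
  rw [Finset.sum_sub_distrib, Equiv.sum_comp τ b] at h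
  have := (mem_weightedHomogeneousSubmodule K _ _ _).mpr h
  rw [← mem_weightedHomogeneousSubmodule]
  rw [Units.smul_def]
  exact Submodule.smul_of_tower_mem _ _ this

lemma weight_eq_degree (u : σ →₀ ℕ) :
    Finsupp.weight (fun _ : σ => (1 : ℤ)) u = (u.degree : ℤ) := by
  rw [Finsupp.weight_apply, Finsupp.sum, Finsupp.degree_apply]
  simp

lemma hg_totalDegree {p : MvPolynomial σ K} {d : ℤ} (hp : hg p d) (h0 : p ≠ 0) :
    (p.totalDegree : ℤ) = d := by
  have hs : p.support.Nonempty := by simpa using h0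
  have h : ∀ u ∈ p.support, (u.degree : ℤ) = d := by
    intro u hu
    rw [← weight_eq_degree]
    exact hp (mem_support_iff.mp hu)
  obtain ⟨u, hu⟩ := hs
  apply le_antisymm
  · obtain ⟨v, hv, hv'⟩ := Finset.exists_mem_eq_sup p.support ⟨u, hu⟩ (fun s => s.degree)
    have e : p.totalDegree = v.degree := by rw [← hv']; rfl
    rw [e, h v hv]
  · rw [← h u hu]
    exact_mod_cast Finset.le_sup (f := fun s : σ →₀ ℕ => s.degree) hu

end Graded

section Descent

variable {R : Type*} [CommRing R] {n : Type*} [Fintype n] [DecidableEq n]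

open Matrix

lemma proportional {I : Type*} [Fintype I] [IsDomain R] [DecompositionMonoid R] {s v α β : I → R}
    {a b : R} (ha : α ⬝ᵥ s = a) (hb : β ⬝ᵥ s = b) (ha0 : a ≠ 0) (hab : IsRelPrime a b)
    (h : ∀ i j, s i * v j = v i * s j) : ∃ c : R, v = c • s := by
  have h1 : a • v = (α ⬝ᵥ v) • s := by
    ext j
    simp only [← ha, dotProduct, Pi.smul_apply, smul_eq_mul, Finset.sum_mul]
    refine Finset.sum_congr rfl fun i _ => ?_
    rw [mul_assoc, h, mul_assoc]
  have h2 : b • v = (β ⬝ᵥ v) • s := by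
    ext j
    simp only [← hb, dotProduct, Pi.smul_apply, smul_eq_mul, Finset.sum_mul]
    refine Finset.sum_congr rfl fun i _ => ?_
    rw [mul_assoc, h, mul_assoc]
  have hs : s ≠ 0 := by
    rintro rfl
    exact ha0 (by rw [← ha, dotProduct_zero])
  obtain ⟨j, hj⟩ := Function.ne_iff.mp hs
  have e : b * (α ⬝ᵥ v) = a * (β ⬝ᵥ v) := by
    have e1 := congrFun h1 j
    have e2 := congrFun h2 j
    simp only [Pi.smul_apply, smul_eq_mul] at e1 e2
    apply mul_right_cancel₀ hj
    linear_combination a * e2 - b * e1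
  obtain ⟨c, hc⟩ := hab.dvd_of_dvd_mul_left ⟨_, e⟩
  refine ⟨c, ?_⟩
  apply smul_right_injective _ ha0
  show a • v = a • c • s
  rw [h1, hc, mul_smul]

/-- The image of `ker q` under `Φ`. -/
def IM (Φ : Matrix n (n ⊕ Fin 2) R) (q : n ⊕ Fin 2 → R) : Submodule R (n → R) where
  carrier := {g | ∃ f, Φ *ᵥ f = g ∧ q ⬝ᵥ f = 0}
  add_mem' := by
    rintro _ _ ⟨f, rfl, hf⟩ ⟨f', rfl, hf'⟩
    exact ⟨f + f', Matrix.mulVec_add _ _ _, by rw [dotProduct_add, hf, hf', add_zero]⟩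
  zero_mem' := ⟨0, by simp, by simp⟩
  smul_mem' := by
    rintro c _ ⟨f, rfl, hf⟩
    exact ⟨c • f, Matrix.mulVec_smul _ _ _, by rw [dotProduct_smul, hf, smul_zero]⟩

lemma minor_smul_mem {Φ : Matrix n (n ⊕ Fin 2) R} {q s : n ⊕ Fin 2 → R}
    (hq : ∀ i, AA Φ (Pi.single i 1) q = s i) (g : n → R) (i : n ⊕ Fin 2) :
    s i • g ∈ IM Φ q := by
  set T := TT Φ (Pi.single i 1) q with hT
  have h : T *ᵥ (T.adjugate *ᵥ Sum.elim g 0) = s i • Sum.elim g 0 := by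
    rw [Matrix.mulVec_mulVec, Matrix.mul_adjugate, Matrix.smul_mulVec, Matrix.one_mulVec,
      show T.det = s i from hq i]
  rw [hT, TT_mulVec, ← hT] at h
  refine ⟨T.adjugate *ᵥ Sum.elim g 0, ?_, ?_⟩
  · ext r
    have := congrFun h (Sum.inl r)
    simpa using this
  · have := congrFun h (Sum.inr 1)
    simpa using this

lemma dot_smul_mem {Φ : Matrix n (n ⊕ Fin 2) R} {q s : n ⊕ Fin 2 → R}
    (hq : ∀ i, AA Φ (Pi.single i 1) q = s i) (g : n → R) (α : n ⊕ Fin 2 → R) :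
    (α ⬝ᵥ s) • g ∈ IM Φ q := by
  rw [dotProduct, Finset.sum_smul]
  refine Submodule.sum_mem _ fun i _ => ?_
  rw [mul_smul]
  exact Submodule.smul_mem _ _ (minor_smul_mem hq g i)

lemma AA_of_single {Φ : Matrix n (n ⊕ Fin 2) R} {q s : n ⊕ Fin 2 → R}
    (hq : ∀ i, AA Φ (Pi.single i 1) q = s i) (p : n ⊕ Fin 2 → R) : AA Φ p q = p ⬝ᵥ s := by
  have : s = - al Φ q := by
    ext i
    rw [← hq, AA_anti]; rfl
  rw [this, dotProduct_neg, dot_al, ← AA_anti]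

lemma ker_bordered [IsDomain R] [DecompositionMonoid R] {Φ : Matrix n (n ⊕ Fin 2) R}
    {U₁ U₂ : Matrix (n ⊕ Fin 2) n R} {δ₁ δ₂ : R} (h₁ : δ₁ ≠ 0)
    (hrel : IsRelPrime δ₁ δ₂)
    (hU₁ : Φ * U₁ = δ₁ • (1 : Matrix n n R)) (hU₂ : Φ * U₂ = δ₂ • (1 : Matrix n n R))
    {q s v α β : n ⊕ Fin 2 → R} {a b : R}
    (ha : α ⬝ᵥ s = a) (hb : β ⬝ᵥ s = b) (ha0 : a ≠ 0) (hab : IsRelPrime a b)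
    (hq : ∀ i, AA Φ (Pi.single i 1) q = s i) (hs : Φ *ᵥ s = 0)
    (hv : Φ *ᵥ v = 0) (hqv : q ⬝ᵥ v = 0) : ∃ c : R, v = c • s := by
  obtain ⟨g, hg⟩ := wedge h₁ hrel hU₁ hU₂ hs hv
  have hqs : q ⬝ᵥ s = 0 := by rw [← AA_of_single hq, AA_self]
  have hg0 : g = 0 := by
    have := hg α q
    rw [hqs, hqv, mul_zero, mul_zero, sub_zero, AA_of_single hq, ha] at this
    exact (mul_eq_zero.mp this.symm).resolve_left ha0
  refine proportional ha hb ha0 hab fun i j => ?_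
  have := hg (Pi.single i 1) (Pi.single j 1)
  rw [hg0, mul_zero] at this
  simpa [sub_eq_zero] using this

end Descent

section Two

variable {K : Type*} [Field K] {n : Type*} [Fintype n] [DecidableEq n]

open Matrix MvPolynomial

lemma relPrime_X {σ : Type*} {i j : σ} (hij : i ≠ j) :
    IsRelPrime (X i : MvPolynomial σ K) (X j) := by
  have hp : Prime (X i : MvPolynomial σ K) := X_prime
  rw [hp.irreducible.isRelPrime_iff_not_dvd]
  rw [X_dvd_X]
  simpa using hij

lemma mem_vars {c : MvPolynomial (Fin 2) K} (hc : coeff 0 c = 0) :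
    ∃ c₁ c₂, c = X 0 * c₁ + X 1 * c₂ := by
  have : c ∈ Ideal.span (X '' (Set.univ : Set (Fin 2))) := by
    rw [mem_ideal_span_X_image]
    intro m hm
    by_contra! h
    have : m = 0 := by ext i; exact h i (Set.mem_univ _)
    rw [mem_support_iff, this] at hm
    exact hm hc
  have e : (X '' (Set.univ : Set (Fin 2)) : Set (MvPolynomial (Fin 2) K)) = {X 0, X 1} := by
    ext p
    simp [eq_comm]
  rw [e, Ideal.mem_span_pair] at this
  obtain ⟨r, t, h⟩ := this
  exact ⟨r, t, by rw [← h]; ring⟩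

/-- The socle argument: one step. -/
lemma socle_step {Φ : Matrix n (n ⊕ Fin 2) (MvPolynomial (Fin 2) K)}
    {a : n ⊕ Fin 2 → ℤ} {b : n → ℤ} (hΦ : ∀ j i, hg (Φ j i) (a i - b j))
    {q s : n ⊕ Fin 2 → MvPolynomial (Fin 2) K} {β e : ℤ} (hqh : ∀ i, hg (q i) (a i - β))
    (hsh : ∀ i, hg (s i) (e - a i)) (hs0 : s ≠ 0) (hs : Φ *ᵥ s = 0) (hqs : q ⬝ᵥ s = 0)
    (hker : ∀ v, Φ *ᵥ v = 0 → q ⬝ᵥ v = 0 → ∃ c : MvPolynomial (Fin 2) K, v = c • s)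
    {D : ℤ} (hD : e - 1 ≤ D) {g : n → MvPolynomial (Fin 2) K} (hgD : ∀ j, hg (g j) (D - b j))
    (h0 : (X 0 : MvPolynomial (Fin 2) K) • g ∈ IM Φ q)
    (h1 : (X 1 : MvPolynomial (Fin 2) K) • g ∈ IM Φ q) : g ∈ IM Φ q := by
  have hX : ∀ i : Fin 2, hg (X i : MvPolynomial (Fin 2) K) 1 := fun i => isWeightedHomogeneous_X _ _ _
  have lift : ∀ g' : n → MvPolynomial (Fin 2) K, (∀ j, hg (g' j) (D + 1 - b j)) → g' ∈ IM Φ q →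
      ∃ f, Φ *ᵥ f = g' ∧ q ⬝ᵥ f = 0 ∧ ∀ i, hg (f i) (D + 1 - a i) := by
    rintro g' hg' ⟨f, hf1, hf2⟩
    have := graded_lift (M := fromRows Φ (Matrix.of fun _ : Unit => q)) (a := a)
      (b := Sum.elim b fun _ => β) (d := D + 1) (g := Sum.elim g' 0) (f := f)
      (by rintro (j | j) i
          · exact hΦ j i
          · exact hqh i)
      (by rintro (j | j)
          · exact hg' j
          · exact isWeightedHomogeneous_zero _ _ _)
      (by ext1 j
          rcases j with j | j
          · exact congrFun hf1 j
          · exact hf2)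
    refine ⟨_, ?_, ?_, fun i => cmp_hg (D + 1 - a i) (f i)⟩
    · ext1 j; exact congrFun this (Sum.inl j)
    · exact congrFun this (Sum.inr ())
  have hXg : ∀ i : Fin 2, ∀ j, hg (((X i : MvPolynomial (Fin 2) K) • g) j) (D + 1 - b j) := by
    intro i j
    have := (hX i).mul (hgD j)
    rwa [show 1 + (D - b j) = D + 1 - b j by ring] at this
  obtain ⟨u, hu1, hu2, hu3⟩ := lift _ (hXg 0) h0
  obtain ⟨v, hv1, hv2, hv3⟩ := lift _ (hXg 1) h1
  obtain ⟨c, hc⟩ := hker ((X 1 : MvPolynomial (Fin 2) K) • u - (X 0 : MvPolynomial (Fin 2) K) • v)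
    (by rw [Matrix.mulVec_sub, Matrix.mulVec_smul, Matrix.mulVec_smul, hu1, hv1, smul_comm, sub_self])
    (by rw [dotProduct_sub, dotProduct_smul, dotProduct_smul, hu2, hv2]; simp)
  have hc0 : coeff 0 c = 0 := by
    obtain ⟨i, hi⟩ := Function.ne_iff.mp hs0
    have e1 : hg (s i * c) (D + 2 - a i) := by
      have := congrFun hc i
      simp only [Pi.sub_apply, Pi.smul_apply, smul_eq_mul] at this
      rw [mul_comm, ← this]
      have k1 := (hX 1).mul (hu3 i)
      have k2 := (hX 0).mul (hv3 i)
      rw [show 1 + (D + 1 - a i) = D + 2 - a i by ring] at k1 k2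
      exact IsWeightedHomogeneous.sub k1 k2
    have e2 := cmp_mul (hsh i) c (e - a i)
    rw [cmp, e1.weightedHomogeneousComponent_ne _ (by omega), sub_self] at e2
    have e3 := (mul_eq_zero.mp e2.symm).resolve_left hi
    have e4 := congrArg (coeff 0) e3
    classical
    rw [coeff_weightedHomogeneousComponent] at e4
    simpa using e4
  obtain ⟨c₁, c₂, rfl⟩ := mem_vars hc0
  have hdiv : ∀ i, ∃ w, (u - c₂ • s) i = X 0 * w := by
    intro i
    have := congrFun hc i
    simp only [Pi.sub_apply, Pi.smul_apply, smul_eq_mul] at this ⊢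
    refine (relPrime_X (K := K) (i := (0 : Fin 2)) (j := 1) (by decide)).dvd_of_dvd_mul_left
      ⟨v i + c₁ * s i, ?_⟩
    linear_combination this
  choose w hw using hdiv
  have hw' : u - c₂ • s = (X 0 : MvPolynomial (Fin 2) K) • w := by ext1 i; exact hw i
  have hX0 : (X 0 : MvPolynomial (Fin 2) K) ≠ 0 := X_ne_zero _
  refine ⟨w, ?_, ?_⟩
  · apply smul_right_injective _ hX0
    show (X 0 : MvPolynomial (Fin 2) K) • (Φ *ᵥ w) = X 0 • g
    rw [← Matrix.mulVec_smul, ← hw', Matrix.mulVec_sub, Matrix.mulVec_smul, hs, hu1, smul_zero,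
      sub_zero]
  · have : q ⬝ᵥ ((X 0 : MvPolynomial (Fin 2) K) • w) = 0 := by
      rw [← hw', dotProduct_sub, dotProduct_smul, hu2, hqs, smul_zero, sub_zero]
    rw [dotProduct_smul, smul_eq_mul] at this
    exact (mul_eq_zero.mp this).resolve_left hX0

lemma socle_induction {Φ : Matrix n (n ⊕ Fin 2) (MvPolynomial (Fin 2) K)}
    {a : n ⊕ Fin 2 → ℤ} {b : n → ℤ} (hΦ : ∀ j i, hg (Φ j i) (a i - b j))
    {q s : n ⊕ Fin 2 → MvPolynomial (Fin 2) K} {β e : ℤ} (hqh : ∀ i, hg (q i) (a i - β))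
    (hsh : ∀ i, hg (s i) (e - a i)) (hs0 : s ≠ 0) (hs : Φ *ᵥ s = 0) (hqs : q ⬝ᵥ s = 0)
    (hker : ∀ v, Φ *ᵥ v = 0 → q ⬝ᵥ v = 0 → ∃ c : MvPolynomial (Fin 2) K, v = c • s)
    (r : ℕ) : ∀ {D : ℤ} (_ : e - 1 ≤ D) {g : n → MvPolynomial (Fin 2) K}
    (_ : ∀ j, hg (g j) (D - b j))
    (_ : ∀ i j : ℕ, i + j = r → (X 0 ^ i * X 1 ^ j : MvPolynomial (Fin 2) K) • g ∈ IM Φ q),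
    g ∈ IM Φ q := by
  induction r with
  | zero =>
    intro D hD g hgD h
    simpa using h 0 0 rfl
  | succ r ih =>
    intro D hD g hgD h
    refine ih hD hgD fun i j hij => ?_
    have hX : ∀ i : Fin 2, hg (X i : MvPolynomial (Fin 2) K) 1 :=
      fun i => isWeightedHomogeneous_X _ _ _
    refine socle_step hΦ hqh hsh hs0 hs hqs hker (D := D + r) (by omega) (fun l => ?_) ?_ ?_
    · have := (((hX 0).pow i).mul ((hX 1).pow j)).mul (hgD l)
      rw [show i • (1 : ℤ) + j • (1 : ℤ) + (D - b l) = D + r - b l by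
        rw [← hij]; push_cast; simp; ring] at this
      exact this
    · rw [← mul_smul]
      convert h (i + 1) j (by omega) using 2
      ring
    · rw [← mul_smul]
      convert h i (j + 1) (by omega) using 2
      ring

end Two
section Generic

variable {K : Type*} [Field K]

open Matrix MvPolynomial

lemma sub_retract_mem {σ A : Type*} [CommRing A] [Algebra K A] (ρ : MvPolynomial σ K →ₐ[K] A)
    (θ : A →ₐ[K] MvPolynomial σ K) (J : Ideal (MvPolynomial σ K))
    (h : ∀ j, X j - θ (ρ (X j)) ∈ J) (p : MvPolynomial σ K) : p - θ (ρ p) ∈ J := by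
  have e : (Ideal.Quotient.mkₐ K J) = ((Ideal.Quotient.mkₐ K J).comp θ).comp ρ := by
    apply MvPolynomial.algHom_ext
    intro j
    exact Ideal.Quotient.eq.mpr (h j)
  exact Ideal.Quotient.eq.mp (congrArg (fun f => f p) e)

/-- Restriction of polynomials to the line through `u`. -/
noncomputable def lineMap (u : Fin 3 → K) : MvPolynomial (Fin 3) K →ₐ[K] Polynomial K :=
  aeval fun i => Polynomial.C (u i) * Polynomial.X

lemma lineMap_hg (u : Fin 3 → K) {p : MvPolynomial (Fin 3) K} {d : ℤ} (hp : hg p d)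
    (h0 : eval u p = 0) : lineMap u p = 0 := by
  have key : lineMap u p = Polynomial.C (eval u p) * Polynomial.X ^ d.toNat := by
    rw [lineMap, aeval_def, eval₂_eq, eval_eq, map_sum, Finset.sum_mul]
    refine Finset.sum_congr rfl fun m hm => ?_
    have hd : m.degree = d.toNat := by
      have := hp (mem_support_iff.mp hm)
      rw [weight_eq_degree] at this
      omega
    rw [← hd, Finsupp.degree_apply]
    have e2 : (∏ i ∈ m.support, (Polynomial.C (u i) * Polynomial.X) ^ m i : Polynomial K) =
      Polynomial.C (∏ i ∈ m.support, u i ^ m i) * Polynomial.X ^ (∑ i ∈ m.support, m i) := by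
      rw [map_prod, ← Finset.prod_pow_eq_pow_sum, ← Finset.prod_mul_distrib]
      refine Finset.prod_congr rfl fun i _ => ?_
      rw [mul_pow, map_pow]
    rw [e2, map_mul, mul_assoc]
    rfl
  rw [key, h0, map_zero, zero_mul]

lemma height_line (u : Fin 3 → K) (hu : u ≠ 0) : (RingHom.ker (lineMap u)).height ≤ 2 := by
  obtain ⟨i, hi⟩ := Function.ne_iff.mp hu
  simp only [Pi.zero_apply] at hi
  set J : Ideal (MvPolynomial (Fin 3) K) :=
    Ideal.span ((fun j => X j - C (u j / u i) * X i) '' {j | j ≠ i}) with hJ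
  have e : RingHom.ker (lineMap u) = J := by
    apply le_antisymm
    · intro p hp
      have := sub_retract_mem (lineMap u) (Polynomial.aeval (C (u i)⁻¹ * X i)) J (by
        intro j
        have e : (Polynomial.aeval (C (u i)⁻¹ * X i : MvPolynomial (Fin 3) K)) (lineMap u (X j)) =
            C (u j / u i) * X i := by
          simp only [lineMap, aeval_X, map_mul, Polynomial.aeval_C, Polynomial.aeval_X,
            div_eq_mul_inv, algebraMap_eq, mul_assoc]
        rw [e]
        by_cases hj : j = i
        · subst hj
          rw [div_self hi]
          simp
        · exact Ideal.subset_span ⟨j, hj, rfl⟩) p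
      rwa [(RingHom.mem_ker).mp hp, map_zero, sub_zero] at this
    · rw [hJ, Ideal.span_le]
      rintro _ ⟨j, -, rfl⟩
      show lineMap u _ = 0
      have e1 : (u j / u i) * u i = u j := div_mul_cancel₀ _ hi
      rw [map_sub, map_mul, lineMap, aeval_X, aeval_X, ← algebraMap_eq, AlgHom.commutes,
        Polynomial.algebraMap_apply, Algebra.algebraMap_self, RingHom.id_apply, ← mul_assoc,
        ← Polynomial.C_mul, e1, sub_self]
  rw [e]
  have hne : J ≠ ⊤ := by
    rw [← e]; exact RingHom.ker_ne_top _
  refine (Ideal.height_le_spanFinrank J hne).trans ?_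
  have h1 : J.spanFinrank ≤ ({j | j ≠ i} : Set (Fin 3)).ncard :=
    (Submodule.spanFinrank_span_le_ncard_of_finite (Set.toFinite _)).trans
      (Set.ncard_image_le (Set.toFinite _))
  have h2 : ({j | j ≠ i} : Set (Fin 3)).ncard = 2 := by
    rw [Set.ncard_eq_toFinset_card']
    fin_cases i <;> decide
  rw [h2] at h1
  exact_mod_cast h1

lemma linform_add (c c' : Fin 3 → K) : linform (c + c') = linform c + linform c' := by
  simp [linform, add_mul, Finset.sum_add_distrib]

lemma linform_smul (r : K) (c : Fin 3 → K) : linform (r • c) = r • linform c := by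
  simp [linform, Finset.smul_sum, smul_eq_C_mul, mul_assoc]

lemma linform_single (i : Fin 3) : linform (Pi.single i 1 : Fin 3 → K) = X i := by
  rw [linform, Finset.sum_eq_single i]
  · simp
  · intro j _ hj; simp [hj]
  · simp

lemma eval_linform (c u : Fin 3 → K) : eval u (linform c) = ∑ i, c i * u i := by
  simp [linform]

lemma generic_prime (p : Ideal (MvPolynomial (Fin 3) K)) : ∃ f : MvPolynomial (Fin 3) K, f ≠ 0 ∧
    ((∃ i, X i ∉ p) → ∀ c : Fin 3 → K, linform c ∈ p → eval c f = 0) := by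
  by_cases h : ∃ i, X i ∉ p
  · obtain ⟨i, hi⟩ := h
    let ℓ : (Fin 3 → K) →ₗ[K] MvPolynomial (Fin 3) K :=
      { toFun := linform, map_add' := linform_add, map_smul' := linform_smul }
    set W : Submodule K (Fin 3 → K) := (p.restrictScalars K).comap ℓ with hW
    have hlt : W < ⊤ := by
      refine lt_top_iff_ne_top.mpr fun htop => hi ?_
      have : (Pi.single i 1 : Fin 3 → K) ∈ W := by rw [htop]; trivial
      rw [← linform_single]
      exact this
    obtain ⟨f, hf0, hf⟩ := W.exists_le_ker_of_lt_top hlt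
    have hev : ∀ c, eval c (linform fun i => f (Pi.single i 1)) = f c := by
      intro c
      rw [eval_linform, LinearMap.pi_apply_eq_sum_univ f c]
      refine Finset.sum_congr rfl fun i _ => ?_
      rw [smul_eq_mul, mul_comm]
      congr 2
      ext j; simp [Pi.single_apply, eq_comm]
    refine ⟨linform fun i => f (Pi.single i 1), ?_, fun _ c hc => ?_⟩
    · intro h0
      exact hf0 (LinearMap.ext fun c => by rw [← hev, h0, map_zero]; rfl)
    · rw [hev]
      exact hf (x := c) hc
  · exact ⟨1, one_ne_zero, fun h' => absurd h' h⟩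

lemma generic_points {I : Type*} {s : I → MvPolynomial (Fin 3) K} {d : I → ℤ}
    (hs : ∀ i, hg (s i) (d i)) (hs0 : s ≠ 0) (hprim : ∀ π, Prime π → ¬ ∀ i, π ∣ s i) :
    ∃ P : MvPolynomial (Fin 3) K, P ≠ 0 ∧ ∀ c : Fin 3 → K, eval c P ≠ 0 →
      ∀ u : Fin 3 → K, (∀ i, eval u (s i) = 0) → ∑ i, c i * u i = 0 → u = 0 := by
  classical
  set J := Ideal.span (Set.range s) with hJ
  have hfin := Ideal.finite_minimalPrimes_of_isNoetherianRing (MvPolynomial (Fin 3) K) J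
  choose f hf0 hf using generic_prime (K := K)
  refine ⟨∏ p ∈ hfin.toFinset, f p, Finset.prod_ne_zero_iff.mpr fun p _ => hf0 p, ?_⟩
  intro c hc u hu hcu
  by_contra hu0
  set Q := RingHom.ker (lineMap u) with hQ
  have : Q.IsPrime := RingHom.ker_isPrime _
  have hJQ : J ≤ Q := by
    rw [hJ, Ideal.span_le]
    rintro _ ⟨i, rfl⟩
    exact lineMap_hg u (hs i) (hu i)
  obtain ⟨p, hp, hpQ⟩ := Ideal.exists_minimalPrimes_le hJQ
  have : p.IsPrime := hp.1.1
  have hJp : J ≤ p := hp.1.2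
  have hsp : ∀ i, s i ∈ p := fun i => hJp (Ideal.subset_span ⟨i, rfl⟩)
  have hpbot : p ≠ ⊥ := by
    rintro rfl
    apply hs0
    ext1 i
    exact hsp i
  obtain ⟨π, hπp, hπ⟩ := Ideal.IsPrime.exists_mem_prime_of_ne_bot ‹p.IsPrime› hpbot
  have : (Ideal.span {π}).IsPrime := (Ideal.span_singleton_prime hπ.ne_zero).mpr hπ
  have hlt1 : (⊥ : Ideal (MvPolynomial (Fin 3) K)) < Ideal.span {π} := by
    rw [bot_lt_iff_ne_bot, Ne, Ideal.span_singleton_eq_bot]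
    exact hπ.ne_zero
  have hlt2 : Ideal.span {π} < p := by
    refine lt_of_le_of_ne ((Ideal.span_singleton_le_iff_mem _).mpr hπp) fun h => ?_
    refine hprim π hπ fun i => ?_
    rw [← Ideal.mem_span_singleton, h]
    exact hsp i
  have hpeq : p = Q := by
    by_contra hne
    have hlt3 : p < Q := lt_of_le_of_ne hpQ hne
    have a1 := Ideal.height_add_one_le_of_lt_of_isPrime hlt1
    have a2 := Ideal.height_add_one_le_of_lt_of_isPrime hlt2
    have a3 := Ideal.height_add_one_le_of_lt_of_isPrime hlt3
    have a4 := height_line u hu0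
    rw [Ideal.height_bot, zero_add] at a1
    have : (3 : ℕ∞) ≤ 2 := calc
      (3 : ℕ∞) = 1 + 1 + 1 := by norm_num
      _ ≤ (Ideal.span {π}).height + 1 + 1 := by gcongr
      _ ≤ p.height + 1 := by gcongr
      _ ≤ Q.height := a3
      _ ≤ 2 := a4
    exact absurd this (by decide)
  rw [map_prod] at hc
  refine Finset.prod_ne_zero_iff.mp hc p (hfin.mem_toFinset.mpr hp) (hf p ?_ c ?_)
  · obtain ⟨i, hi⟩ := Function.ne_iff.mp hu0
    refine ⟨i, fun h => ?_⟩
    rw [hpeq] at h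
    have : lineMap u (X i) = 0 := h
    rw [lineMap, aeval_X] at this
    simp at this
    exact hi this
  · rw [hpeq]
    refine lineMap_hg u (homog_linform c) ?_
    rw [eval_linform]; exact hcu

end Generic
section Aux

variable {K : Type*} [Field K]

open Matrix MvPolynomial

lemma hg_cast {σ : Type*} {p : MvPolynomial σ K} {d d' : ℤ} (h : hg p d) (e : d = d') : hg p d' :=
  e ▸ h

lemma primitive_of_min {σ I J : Type*} [Fintype I] {Φ : Matrix J I (MvPolynomial σ K)}
    {a : I → ℤ} {b : J → ℤ} (hΦ : ∀ j i, hg (Φ j i) (a i - b j)) {s : I → MvPolynomial σ K} {e : ℤ}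
    (hsh : ∀ i, hg (s i) (e - a i)) (hs0 : s ≠ 0) (hs : Φ *ᵥ s = 0)
    (hmin : ∀ e' < e, ∀ v : I → MvPolynomial σ K, (∀ i, hg (v i) (e' - a i)) → Φ *ᵥ v = 0 → v = 0)
    (π : MvPolynomial σ K) (hπ : Prime π) : ¬ ∀ i, π ∣ s i := by
  intro hdvd
  choose t ht using hdvd
  have hst : s = π • t := funext ht
  have hΦt : Φ *ᵥ t = 0 := by
    rw [hst, Matrix.mulVec_smul] at hs
    exact (smul_eq_zero.mp hs).resolve_left hπ.ne_zero
  have ht0 : t ≠ 0 := by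
    rintro rfl
    exact hs0 (by rw [hst, smul_zero])
  obtain ⟨i, hi⟩ := Function.ne_iff.mp ht0
  replace hi : t i ≠ 0 := hi
  have hπd : 1 ≤ π.totalDegree := by
    by_contra h
    have h0 : π.totalDegree = 0 := by omega
    rw [totalDegree_eq_zero_iff_eq_C] at h0
    apply hπ.not_isUnit
    rw [h0]
    refine IsUnit.map C (isUnit_iff_ne_zero.mpr fun h1 => hπ.ne_zero ?_)
    rw [h0, h1, map_zero]
  have hsi : s i ≠ 0 := by rw [ht]; exact mul_ne_zero hπ.ne_zero hi
  have hdeg := hg_totalDegree (hsh i) hsi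
  rw [ht, totalDegree_mul_of_isDomain hπ.ne_zero hi] at hdeg
  obtain ⟨u, hu⟩ : (t i).support.Nonempty := by simpa using hi
  have hule : u.degree ≤ (t i).totalDegree := by
    have := le_totalDegree hu
    rwa [Finsupp.degree_apply]
  have hz : (fun i' => cmp ((u.degree + a i : ℤ) - a i') (t i')) = 0 := by
    refine hmin (u.degree + a i) (by push_cast at hdeg; omega) _ (fun i' => cmp_hg _ _) ?_
    exact graded_lift hΦ (fun j => by exact isWeightedHomogeneous_zero K _ _) hΦt
  have hz' := congrArg (coeff u) (congrFun hz i)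
  simp only [Pi.zero_apply, coeff_zero] at hz'
  rw [coeff_weightedHomogeneousComponent, weight_eq_degree, if_pos (by ring)] at hz'
  exact mem_support_iff.mp hu hz'

lemma exists_U {σ I J : Type*} [Fintype I] [Fintype J] [DecidableEq J]
    {Φ : Matrix J I (MvPolynomial σ K)} {b : J → ℤ}
    (hfin : ∃ D : ℤ, ∀ d, D ≤ d → ∀ g : J → MvPolynomial σ K, (∀ j, hg (g j) (d - b j)) →
      ∃ f, Φ *ᵥ f = g) (v : σ) :
    ∃ (N : ℕ) (U : Matrix I J (MvPolynomial σ K)), Φ * U = (X v ^ N : MvPolynomial σ K) • (1 : Matrix J J _) := by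
  obtain ⟨D, hD⟩ := hfin
  set N := ∑ j, (D - b j).toNat with hN
  have key : ∀ r : J, ∃ f, Φ *ᵥ f = Pi.single r (X v ^ N : MvPolynomial σ K) := by
    intro r
    refine hD (b r + N) ?_ _ fun j => ?_
    · have : (D - b r).toNat ≤ N :=
        Finset.single_le_sum (f := fun j => (D - b j).toNat) (fun _ _ => Nat.zero_le _) (Finset.mem_univ r)
      omega
    · by_cases h : j = r
      · subst h
        rw [Pi.single_eq_same]
        have := (isWeightedHomogeneous_X K (fun _ : σ => (1 : ℤ)) v).pow N
        convert this using 1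
        simp
      · rw [Pi.single_eq_of_ne h]
        exact isWeightedHomogeneous_zero K _ _
  choose f hf using key
  refine ⟨N, Matrix.of fun i r => f r i, ?_⟩
  ext1 j r
  have := congrFun (hf r) j
  rw [Matrix.smul_apply, Matrix.one_apply]
  refine Eq.trans this ?_
  rw [Pi.single_apply]
  split_ifs <;> simp

lemma mem_two_powers {p q : ℕ} (h : MvPolynomial (Fin 3) K) :
    (∃ r t, h = X 0 ^ p * r + X 1 ^ q * t) ↔
      ∀ u ∈ h.support, p ≤ u 0 ∨ q ≤ u 1 := by
  have e : (∃ r t, h = X 0 ^ p * r + X 1 ^ q * t) ↔ h ∈ Ideal.span ((fun s => monomial s (1 : K)) ''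
      {Finsupp.single 0 p, Finsupp.single 1 q}) := by
    rw [Set.image_pair, ← X_pow_eq_monomial, ← X_pow_eq_monomial, Ideal.mem_span_pair]
    constructor
    · rintro ⟨r, t, rfl⟩; exact ⟨r, t, by ring⟩
    · rintro ⟨r, t, rfl⟩; exact ⟨r, t, by ring⟩
  rw [e, mem_ideal_span_monomial_image]
  simp

lemma regular_third {p q r : ℕ} {h f g : MvPolynomial (Fin 3) K}
    (H : X 2 ^ r * h = X 0 ^ p * f + X 1 ^ q * g) :
    ∃ f' g', h = X 0 ^ p * f' + X 1 ^ q * g' := by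
  have h1 := (mem_two_powers (p := p) (q := q) (X 2 ^ r * h)).mp ⟨f, g, H⟩
  rw [mem_two_powers]
  intro u hu
  have := h1 (Finsupp.single 2 r + u) (by
    rw [mem_support_iff, X_pow_eq_monomial, coeff_monomial_mul, one_mul]
    exact mem_support_iff.mp hu)
  simpa using this

lemma aeval_hg {σ τ : Type*} {g : σ → MvPolynomial τ K} (hgg : ∀ i, hg (g i) 1)
    {p : MvPolynomial σ K} {d : ℤ} (hp : hg p d) : hg (aeval g p) d := by
  rw [aeval_def, eval₂_eq]
  refine IsWeightedHomogeneous.sum _ _ _ fun u hu => ?_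
  have hu' := hp (mem_support_iff.mp hu)
  rw [weight_eq_degree, Finsupp.degree_apply] at hu'
  have h2 := IsWeightedHomogeneous.prod u.support (fun i => g i ^ u i) (fun i => u i • (1 : ℤ))
    (w := fun _ : τ => (1 : ℤ)) (fun i _ => (hgg i).pow (u i))
  have h3 := (isWeightedHomogeneous_C (fun _ : τ => (1 : ℤ)) (coeff u p)).mul h2
  refine hg_cast h3 ?_
  rw [← hu']
  simp

lemma nullst [IsAlgClosed K] {I : Type*} [Fintype I] {s : I → MvPolynomial (Fin 2) K}
    (h : ∀ u : Fin 2 → K, (∀ i, eval u (s i) = 0) → u = 0) (v : Fin 2) :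
    ∃ (N : ℕ) (α : I → MvPolynomial (Fin 2) K), α ⬝ᵥ s = X v ^ N := by
  have h1 : (X v : MvPolynomial (Fin 2) K) ∈ (Ideal.span (Set.range s)).radical := by
    rw [← vanishingIdeal_zeroLocus_eq_radical (K := K), zeroLocus_span, mem_vanishingIdeal_iff]
    intro u hu
    have hu0 : u = 0 := h u fun i => by
      have := hu (s i) ⟨i, rfl⟩
      rwa [aeval_eq_eval] at this
    simp [hu0]
  obtain ⟨N, hN⟩ := h1
  rw [Ideal.mem_span_range_iff_exists_fun] at hN
  obtain ⟨α, hα⟩ := hN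
  exact ⟨N, α, hα⟩

lemma AA_hg {σ n : Type*} [Fintype n] [DecidableEq n] {Φ : Matrix n (n ⊕ Fin 2) (MvPolynomial σ K)}
    {a : n ⊕ Fin 2 → ℤ} {b : n → ℤ} (hΦ : ∀ j i, hg (Φ j i) (a i - b j)) (i j : n ⊕ Fin 2) :
    hg (AA Φ (Pi.single i 1) (Pi.single j 1)) (∑ i, a i - ∑ j, b j - a i - a j) := by
  have hone : ∀ i i' : n ⊕ Fin 2,
      hg ((Pi.single i 1 : n ⊕ Fin 2 → MvPolynomial σ K) i') (a i' - a i) := by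
    intro i i'
    by_cases h : i' = i
    · subst h
      rw [Pi.single_eq_same, sub_self]
      exact isWeightedHomogeneous_one K _
    · rw [Pi.single_eq_of_ne h]
      exact isWeightedHomogeneous_zero K _ _
  have := det_hg (M := TT Φ (Pi.single i 1) (Pi.single j 1)) (a := a)
    (b := Sum.elim b ![a i, a j]) (by
      intro j' i'
      rcases j' with j' | j'
      · exact hΦ j' i'
      · fin_cases j'
        · exact hone i i'
        · exact hone j i')
  refine hg_cast this ?_
  simp [Fintype.sum_sum_type]
  ring

lemma exists_q {n : Type*} [Fintype n] [DecidableEq n]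
    {Φ : Matrix n (n ⊕ Fin 2) (MvPolynomial (Fin 3) K)}
    {a : n ⊕ Fin 2 → ℤ} {b : n → ℤ} (hΦ : ∀ j i, hg (Φ j i) (a i - b j))
    (hU : ∀ v, ∃ (N : ℕ) (U : Matrix (n ⊕ Fin 2) n (MvPolynomial (Fin 3) K)),
      Φ * U = (X v ^ N : MvPolynomial (Fin 3) K) • (1 : Matrix n n _))
    {s : n ⊕ Fin 2 → MvPolynomial (Fin 3) K} {e : ℤ}
    (hsh : ∀ i, hg (s i) (e - a i)) (hs : Φ *ᵥ s = 0) :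
    ∃ q : n ⊕ Fin 2 → MvPolynomial (Fin 3) K,
      (∀ i, hg (q i) (a i - (∑ i, a i - ∑ j, b j - e))) ∧
      ∀ i, AA Φ (Pi.single i 1) q = s i := by
  obtain ⟨N₀, U₀, h₀⟩ := hU 0
  obtain ⟨N₁, U₁, h₁⟩ := hU 1
  obtain ⟨N₂, U₂, h₂⟩ := hU 2
  have hX : ∀ (v : Fin 3) (N : ℕ), (X v ^ N : MvPolynomial (Fin 3) K) ≠ 0 :=
    fun v N => pow_ne_zero _ (X_ne_zero v)
  obtain ⟨q, hq⟩ := exact_A (hX 0 N₀) (hX 1 N₁) (hX 2 N₂)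
    ((relPrime_X (K := K) (show (0 : Fin 3) ≠ 1 by decide)).pow) (by
      intro N h r t H
      rw [← pow_mul, ← pow_mul, ← pow_mul] at H
      rw [← pow_mul, ← pow_mul]
      exact regular_third H) h₀ h₁ h₂ hs
  set M : Matrix (n ⊕ Fin 2) (n ⊕ Fin 2) (MvPolynomial (Fin 3) K) :=
    Matrix.of fun i j => AA Φ (Pi.single i 1) (Pi.single j 1) with hM
  have hMv : ∀ f i, (M *ᵥ f) i = AA Φ (Pi.single i 1) f := by
    intro f i
    rw [← dot_al, dotProduct_comm]
    rfl
  have hMq : M *ᵥ q = s := by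
    ext1 i
    rw [hMv, hq]
    simp
  have := graded_lift (M := M) (a := fun j => - a j)
    (b := fun i => a i - (∑ i, a i - ∑ j, b j)) (d := e - (∑ i, a i - ∑ j, b j)) (g := s) (by
      intro i j
      exact hg_cast (AA_hg hΦ i j) (by ring)) (by
      intro j
      exact hg_cast (hsh j) (by ring)) hMq
  refine ⟨fun i => cmp (e - (∑ i, a i - ∑ j, b j) - - a i) (q i),
    fun i => hg_cast (cmp_hg _ _) (by ring), fun i => ?_⟩
  rw [← hMv, this]

lemma exists_restrict {c : Fin 3 → K} (hc : c 2 ≠ 0) :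
    ∃ (ρ : MvPolynomial (Fin 3) K →ₐ[K] MvPolynomial (Fin 2) K)
      (θ : MvPolynomial (Fin 2) K →ₐ[K] MvPolynomial (Fin 3) K),
      (∀ p, ρ (θ p) = p) ∧ ρ (linform c) = 0 ∧ (∀ p, ρ p = 0 → ∃ p', p = linform c * p') ∧
      (∀ p d, hg p d → hg (ρ p) d) ∧ (∀ p d, hg p d → hg (θ p) d) ∧
      ρ (X 0) = X 0 ∧ ρ (X 1) = X 1 ∧
      ∀ u : Fin 2 → K, ∃ u' : Fin 3 → K, (∀ p, eval u' p = eval u (ρ p)) ∧ u' 0 = u 0 ∧ u' 1 = u 1 := by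
  set γ : Fin 3 → MvPolynomial (Fin 2) K :=
    ![X 0, X 1, C (-(c 0 / c 2)) * X 0 + C (-(c 1 / c 2)) * X 1] with hγ
  set ρ : MvPolynomial (Fin 3) K →ₐ[K] MvPolynomial (Fin 2) K := aeval γ with hρ
  set θ : MvPolynomial (Fin 2) K →ₐ[K] MvPolynomial (Fin 3) K := aeval ![X 0, X 1] with hθ
  have hX : ∀ {τ : Type} (i : τ), hg (X i : MvPolynomial τ K) 1 :=
    fun {τ} i => isWeightedHomogeneous_X K (fun _ : τ => (1 : ℤ)) i
  have r0 : ρ (X 0) = X 0 := by simp [hρ, hγ]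
  have r1 : ρ (X 1) = X 1 := by simp [hρ, hγ]
  have r2 : ρ (X 2) = C (-(c 0 / c 2)) * X 0 + C (-(c 1 / c 2)) * X 1 := by simp [hρ, hγ]
  have t0 : θ (X 0) = X 0 := by simp [hθ]
  have t1 : θ (X 1) = X 1 := by simp [hθ]
  have hl : linform c = C (c 0) * X 0 + C (c 1) * X 1 + C (c 2) * X 2 := by
    rw [linform, Fin.sum_univ_three]
  have hC : ∀ r : K, ρ (C r) = C r := fun r => ρ.commutes r
  have hCt : ∀ r : K, θ (C r) = C r := fun r => θ.commutes r
  refine ⟨ρ, θ, ?_, ?_, ?_, ?_, ?_, r0, r1, ?_⟩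
  · intro p
    have : ρ.comp θ = AlgHom.id K _ := by
      apply MvPolynomial.algHom_ext
      intro i
      fin_cases i
      · simp [t0, r0]
      · simp [t1, r1]
    exact congrArg (fun f => f p) this
  · rw [hl]
    simp only [map_add, map_mul, hC, r0, r1, r2]
    have e0 : (C (c 2) * C (-(c 0 / c 2)) : MvPolynomial (Fin 2) K) = - C (c 0) := by
      rw [← C_mul, ← C_neg]; congr 1; field_simp
    have e1 : (C (c 2) * C (-(c 1 / c 2)) : MvPolynomial (Fin 2) K) = - C (c 1) := by
      rw [← C_mul, ← C_neg]; congr 1; field_simp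
    linear_combination X 0 * e0 + X 1 * e1
  · intro p hp
    have := sub_retract_mem ρ θ (Ideal.span {linform c}) (by
      intro j
      rw [Ideal.mem_span_singleton]
      fin_cases j
      · simp [r0, t0]
      · simp [r1, t1]
      · refine ⟨C (c 2)⁻¹, ?_⟩
        show X 2 - θ (ρ (X 2)) = _
        rw [r2, hl]
        simp only [map_add, map_mul, hCt, t0, t1]
        have e0 : (C (-(c 0 / c 2)) : MvPolynomial (Fin 3) K) = - (C (c 0) * C (c 2)⁻¹) := by
          rw [← C_mul, ← C_neg, div_eq_mul_inv]
        have e1 : (C (-(c 1 / c 2)) : MvPolynomial (Fin 3) K) = - (C (c 1) * C (c 2)⁻¹) := by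
          rw [← C_mul, ← C_neg, div_eq_mul_inv]
        have e2 : (C (c 2) * C (c 2)⁻¹ : MvPolynomial (Fin 3) K) = 1 := by
          rw [← C_mul, mul_inv_cancel₀ hc, C_1]
        rw [e0, e1]
        linear_combination - X 2 * e2) p
    rw [hp, map_zero, sub_zero, Ideal.mem_span_singleton] at this
    exact this
  · intro p d hp
    refine aeval_hg (fun i => ?_) hp
    have h2 : ∀ (r : K) (i : Fin 2), hg (C r * X i : MvPolynomial (Fin 2) K) 1 := by
      intro r i
      have := (isWeightedHomogeneous_C (fun _ : Fin 2 => (1 : ℤ)) r).mul (hX i)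
      simpa using this
    fin_cases i
    · exact hX _
    · exact hX _
    · exact (h2 _ 0).add (h2 _ 1)
  · intro p d hp
    refine aeval_hg (fun i => ?_) hp
    fin_cases i
    · exact hX _
    · exact hX _
  · intro u
    refine ⟨fun i => eval u (γ i), fun p => ?_, by simp [hγ], by simp [hγ]⟩
    have : (aeval fun i => eval u (γ i)) = (aeval u).comp ρ := by
      apply MvPolynomial.algHom_ext
      intro i
      simp [hρ, aeval_eq_eval]
    have := congrArg (fun f => f p) this
    simpa [aeval_eq_eval] using this

end Aux
section Core

variable {K : Type*} [Field K] {n : Type*} [Fintype n] [DecidableEq n]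

open Matrix MvPolynomial

lemma AA_map {R S : Type*} [CommRing R] [CommRing S] (ρ : R →+* S) (Φ : Matrix n (n ⊕ Fin 2) R)
    (p q : n ⊕ Fin 2 → R) : AA (Φ.map ρ) (ρ ∘ p) (ρ ∘ q) = ρ (AA Φ p q) := by
  rw [AA, AA, RingHom.map_det]
  congr 1
  ext i j
  rcases i with i | i
  · rfl
  · fin_cases i <;> rfl

lemma map_U {R S : Type*} [CommRing R] [CommRing S] (ρ : R →+* S) {Φ : Matrix n (n ⊕ Fin 2) R}
    {U : Matrix (n ⊕ Fin 2) n R} {δ : R} (hU : Φ * U = δ • (1 : Matrix n n R)) :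
    Φ.map ρ * U.map ρ = ρ δ • (1 : Matrix n n S) := by
  rw [← Matrix.map_mul, hU]
  ext i j
  by_cases h : i = j
  · subst h; simp
  · simp [Matrix.one_apply_ne h]

lemma map_mv {R S : Type*} [CommRing R] [CommRing S] (ρ : R →+* S) {I J : Type*} [Fintype I]
    (Φ : Matrix J I R) (f : I → R) : Φ.map ρ *ᵥ (ρ ∘ f) = ρ ∘ (Φ *ᵥ f) := by
  ext1 i
  exact (RingHom.map_mulVec ρ Φ f i).symm

lemma wedge_vanish {Φ : Matrix n (n ⊕ Fin 2) (MvPolynomial (Fin 2) K)}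
    {a : n ⊕ Fin 2 → ℤ} {b : n → ℤ} (hΦ : ∀ j i, hg (Φ j i) (a i - b j))
    {s v : n ⊕ Fin 2 → MvPolynomial (Fin 2) K} {e d : ℤ}
    (hsh : ∀ i, hg (s i) (e - a i)) (hvh : ∀ i, hg (v i) (d - a i))
    (hd : e + d < ∑ i, a i - ∑ j, b j)
    {g : MvPolynomial (Fin 2) K}
    (hw : ∀ p q, (p ⬝ᵥ s) * (q ⬝ᵥ v) - (p ⬝ᵥ v) * (q ⬝ᵥ s) = AA Φ p q * g) (i j : n ⊕ Fin 2) :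
    s i * v j = v i * s j := by
  have h := hw (Pi.single i 1) (Pi.single j 1)
  simp only [single_dotProduct, one_mul] at h
  rw [← sub_eq_zero]
  by_contra h0
  have hA : AA Φ (Pi.single i 1) (Pi.single j 1) ≠ 0 := by
    intro hA; rw [hA, zero_mul] at h; exact h0 h
  have hg0 : g ≠ 0 := by
    rintro rfl; rw [mul_zero] at h; exact h0 h
  have hdeg : hg (s i * v j - v i * s j) (e + d - a i - a j) := by
    rw [sub_eq_add_neg]
    refine IsWeightedHomogeneous.add (hg_cast ((hsh i).mul (hvh j)) (by ring)) ?_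
    have := (hvh i).mul (hsh j)
    have := (mem_weightedHomogeneousSubmodule K _ _ _).mpr this
    have := (mem_weightedHomogeneousSubmodule K _ _ _).mp (neg_mem this)
    exact hg_cast this (by ring)
  have h1 := hg_totalDegree hdeg h0
  have h2 := hg_totalDegree (AA_hg hΦ i j) hA
  rw [h, totalDegree_mul_of_isDomain hA hg0] at h1
  push_cast at h1
  omega

theorem core [IsAlgClosed K] {Φ : Matrix n (n ⊕ Fin 2) (MvPolynomial (Fin 3) K)}
    {a : n ⊕ Fin 2 → ℤ} {b : n → ℤ} (hΦ : ∀ j i, hg (Φ j i) (a i - b j))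
    (hfin : ∃ D : ℤ, ∀ d, D ≤ d → ∀ g : n → MvPolynomial (Fin 3) K, (∀ j, hg (g j) (d - b j)) →
      ∃ f, Φ *ᵥ f = g)
    {s : n ⊕ Fin 2 → MvPolynomial (Fin 3) K} {e : ℤ}
    (hsh : ∀ i, hg (s i) (e - a i)) (hs0 : s ≠ 0) (hs : Φ *ᵥ s = 0)
    (hmin : ∀ e' < e, ∀ v : n ⊕ Fin 2 → MvPolynomial (Fin 3) K,
      (∀ i, hg (v i) (e' - a i)) → Φ *ᵥ v = 0 → v = 0) :
    ∃ P : MvPolynomial (Fin 3) K, P ≠ 0 ∧ ∀ c : Fin 3 → K, eval c P ≠ 0 →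
      (∀ d : ℤ, e + d < ∑ i, a i - ∑ j, b j → ∀ (w : n → MvPolynomial (Fin 3) K) v,
        (∀ j, hg (w j) (d - 1 - b j)) → (∀ i, hg (v i) (d - a i)) → Φ *ᵥ v = linform c • w →
        ∃ v', (∀ i, hg (v' i) (d - 1 - a i)) ∧ Φ *ᵥ v' = w) ∧
      (∀ d : ℤ, e - 1 ≤ d → ∀ g : n → MvPolynomial (Fin 3) K, (∀ j, hg (g j) (d - b j)) →
        ∃ v g', (∀ i, hg (v i) (d - a i)) ∧ (∀ j, hg (g' j) (d - 1 - b j)) ∧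
          g = Φ *ᵥ v + linform c • g') := by
  have hU := fun v => exists_U hfin v
  obtain ⟨q, hqh, hq⟩ := exists_q hΦ hU hsh hs
  obtain ⟨P, hP0, hP⟩ := generic_points hsh hs0 (primitive_of_min hΦ hsh hs0 hs hmin)
  refine ⟨X 2 * P, mul_ne_zero (X_ne_zero _) hP0, fun c hc => ?_⟩
  rw [map_mul, eval_X] at hc
  have hc2 : c 2 ≠ 0 := left_ne_zero_of_mul hc
  have hcP := hP c (right_ne_zero_of_mul hc)
  have hL0 : linform c ≠ 0 := by
    intro h
    have := congrArg (eval (Pi.single 2 1)) h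
    rw [eval_linform, map_zero] at this
    simp [Pi.single_apply] at this
    exact hc2 this
  obtain ⟨ρ, θ, hρθ, hρL, hρk, hρh, hθh, hρ0, hρ1, hu⟩ := exists_restrict hc2
  obtain ⟨N₀, U₀, h₀⟩ := hU 0
  obtain ⟨N₁, U₁, h₁⟩ := hU 1
  set σ : MvPolynomial (Fin 3) K →+* MvPolynomial (Fin 2) K := ρ.toRingHom with hσ
  have hσρ : ∀ p, σ p = ρ p := fun _ => rfl
  have h₀' := map_U σ h₀
  have h₁' := map_U σ h₁
  rw [map_pow, hσρ, hρ0] at h₀'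
  rw [map_pow, hσρ, hρ1] at h₁'
  set Ψ := Φ.map σ with hΨ
  set s' := σ ∘ s with hs'
  set q' := σ ∘ q with hq'
  have hΨh : ∀ j i, hg (Ψ j i) (a i - b j) := fun j i => hρh _ _ (hΦ j i)
  have hsh' : ∀ i, hg (s' i) (e - a i) := fun i => hρh _ _ (hsh i)
  have hqh' : ∀ i, hg (q' i) (a i - (∑ i, a i - ∑ j, b j - e)) := fun i => hρh _ _ (hqh i)
  have hsk : Ψ *ᵥ s' = 0 := by
    rw [hΨ, hs', map_mv, hs]; ext1 i; exact map_zero _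
  have hqq : ∀ i, AA Ψ (Pi.single i 1) q' = s' i := by
    intro i
    have := AA_map σ Φ (Pi.single i 1) q
    rw [hq] at this
    rw [← show σ (s i) = s' i from rfl, ← this]
    congr 1
    ext1 i'
    by_cases h : i' = i
    · subst h; simp
    · simp [Pi.single_eq_of_ne h]
  have hnull : ∀ v : Fin 2, ∃ (N : ℕ) (α : n ⊕ Fin 2 → MvPolynomial (Fin 2) K),
      α ⬝ᵥ s' = X v ^ N := by
    refine fun v => nullst (fun u hus => ?_) v
    obtain ⟨u', hu1, hu2, hu3⟩ := hu u
    have h0 : u' = 0 := by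
      refine hcP u' (fun i => ?_) ?_
      · rw [hu1]; exact hus i
      · rw [← eval_linform, hu1, hρL, map_zero]
    ext i
    fin_cases i
    · show u 0 = 0
      rw [← hu2, h0]; rfl
    · show u 1 = 0
      rw [← hu3, h0]; rfl
  obtain ⟨A, α, hα⟩ := hnull 0
  obtain ⟨B, β, hβ⟩ := hnull 1
  have hX : ∀ (v : Fin 2) (N : ℕ), (X v ^ N : MvPolynomial (Fin 2) K) ≠ 0 :=
    fun v N => pow_ne_zero _ (X_ne_zero v)
  have hrel : ∀ i j : ℕ, IsRelPrime (X 0 ^ i : MvPolynomial (Fin 2) K) (X 1 ^ j) := fun i j =>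
    (relPrime_X (K := K) (show (0 : Fin 2) ≠ 1 by decide)).pow
  have hs0' : s' ≠ 0 := by
    intro h
    rw [h, dotProduct_zero] at hα
    exact hX _ _ hα.symm
  constructor
  · intro d hd w v hw hv hvw
    have hvk : Ψ *ᵥ (σ ∘ v) = 0 := by
      rw [hΨ, map_mv, hvw]
      ext1 j
      simp [hσρ, hρL]
    obtain ⟨g, hgw⟩ := wedge (hX 0 N₀) (hrel _ _) h₀' h₁' hsk hvk
    obtain ⟨p, hp⟩ := proportional hα hβ (hX _ _) (hrel _ _)
      (wedge_vanish hΨh hsh' (fun i => hρh _ _ (hv i)) hd hgw)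
    have hex : ∀ i, ∃ x, v i - θ p * s i = linform c * x := by
      intro i
      apply hρk
      have h1 : ρ (v i) = p * ρ (s i) := congrFun hp i
      rw [map_sub, map_mul, hρθ, h1, sub_self]
    choose x hx using hex
    have hvx : v = θ p • s + linform c • x := by
      ext1 i
      simp only [Pi.add_apply, Pi.smul_apply, smul_eq_mul]
      rw [← hx]; ring
    have hxw : Φ *ᵥ x = w := by
      rw [hvx, Matrix.mulVec_add, Matrix.mulVec_smul, Matrix.mulVec_smul, hs, smul_zero,
        zero_add] at hvw
      exact smul_right_injective _ hL0 hvw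
    exact ⟨_, fun i => cmp_hg _ _, graded_lift hΦ hw hxw⟩
  · intro d hd g hgd
    have hmem : σ ∘ g ∈ IM Ψ q' := by
      refine socle_induction hΨh hqh' hsh' hs0' hsk ?_ ?_ (A + B) hd
        (fun j => hρh _ _ (hgd j)) ?_
      · rw [← AA_of_single hqq, AA_self]
      · intro v hv hqv
        exact ker_bordered (hX 0 N₀) (hrel _ _) h₀' h₁' hα hβ (hX _ _) (hrel _ _) hqq hsk hv hqv
      · intro i j hij
        have hcase : A ≤ i ∨ B ≤ j := by omega
        rcases hcase with h | h
        · obtain ⟨t, rfl⟩ := Nat.exists_eq_add_of_le h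
          have := dot_smul_mem hqq (σ ∘ g) α
          rw [hα] at this
          have := Submodule.smul_mem _ (X 0 ^ t * X 1 ^ j : MvPolynomial (Fin 2) K) this
          rwa [← mul_smul, show ((X 0 ^ t * X 1 ^ j * X 0 ^ A : MvPolynomial (Fin 2) K)) =
            X 0 ^ (A + t) * X 1 ^ j by ring] at this
        · obtain ⟨t, rfl⟩ := Nat.exists_eq_add_of_le h
          have := dot_smul_mem hqq (σ ∘ g) β
          rw [hβ] at this
          have := Submodule.smul_mem _ (X 0 ^ i * X 1 ^ t : MvPolynomial (Fin 2) K) this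
          rwa [← mul_smul, show ((X 0 ^ i * X 1 ^ t * X 1 ^ B : MvPolynomial (Fin 2) K)) =
            X 0 ^ i * X 1 ^ (B + t) by ring] at this
    obtain ⟨f, hf, -⟩ := hmem
    have hf' := graded_lift hΨh (fun j => hρh _ _ (hgd j)) hf
    set f' := fun i => cmp (d - a i) (f i) with hf'd
    set v : n ⊕ Fin 2 → MvPolynomial (Fin 3) K := fun i => θ (f' i) with hv
    have hvh : ∀ i, hg (v i) (d - a i) := fun i => hθh _ _ (cmp_hg _ _)
    have hex : ∀ j, ∃ x, g j - (Φ *ᵥ v) j = linform c * x := by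
      intro j
      apply hρk
      have h1 : σ ((Φ *ᵥ v) j) = (Ψ *ᵥ (σ ∘ v)) j := (congrFun (map_mv σ Φ v) j).symm
      have h2 : σ ∘ v = f' := funext fun i => hρθ _
      rw [h2, hf'] at h1
      rw [map_sub, ← hσρ, ← hσρ, h1]
      exact sub_self _
    choose x hx using hex
    have hΦv : ∀ j, hg ((Φ *ᵥ v) j) (d - b j) := by
      intro j
      refine IsWeightedHomogeneous.sum _ _ _ fun i _ => ?_
      exact hg_cast ((hΦ j i).mul (hvh i)) (by ring)
    refine ⟨v, fun j => cmp (d - 1 - b j) (x j), hvh, fun j => cmp_hg _ _, ?_⟩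
    ext1 j
    have h1 := congrArg (cmp (d - b j)) (hx j)
    rw [map_sub, (hgd j).weightedHomogeneousComponent_same,
      (hΦv j).weightedHomogeneousComponent_same, cmp_mul (homog_linform c),
      show d - b j - 1 = d - 1 - b j by ring] at h1
    simp only [Pi.add_apply, Pi.smul_apply, smul_eq_mul]
    rw [← h1]; ring

end Core

end BR

/-- If `a - b` is odd (`a - b = 2m + 1`) and `N_m ≠ 0` (the associated
normalized rank-2 bundle with `c₁ = -1` is unstable), and `k = max{ j : N_{m-j} ≠ 0 }` is the
index of instability, then for a general linear form `L` the multiplication map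
`×L : M_{d-1} → M_d` is injective for all `d ≤ m + k` and surjective for all
`d ≥ m - k - 1`. -/
theorem statement4 {K : Type*} [Field K] [IsAlgClosed K] [CharZero K]
    (n : ℕ) (a : Fin (n + 2) → ℤ) (b : Fin n → ℤ)
    (Φ : Matrix (Fin n) (Fin (n + 2)) (MvPolynomial (Fin 3) K))
    (hΦ : ∀ j i, homog (Φ j i) (a i - b j))
    (hfin : FiniteColength n a b Φ)
    (m : ℤ) (hm : (∑ i, a i) - (∑ j, b j) = 2 * m + 1)
    (hunstable : Nd n a Φ m ≠ ⊥)
    (k : ℤ) (hk₁ : Nd n a Φ (m - k) ≠ ⊥) (hk₂ : ∀ j : ℤ, Nd n a Φ (m - j) ≠ ⊥ → j ≤ k) :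
    ∃ P : MvPolynomial (Fin 3) K, P ≠ 0 ∧ ∀ c : Fin 3 → K, eval c P ≠ 0 →
      (∀ d : ℤ, d ≤ m + k →
        Function.Injective (mulLmap n a b Φ (linform c) (homog_linform c) d)) ∧
      (∀ d : ℤ, m - k - 1 ≤ d →
        Function.Surjective (mulLmap n a b Φ (linform c) (homog_linform c) d)) := by
  classical
  set ε : Fin n ⊕ Fin 2 ≃ Fin (n + 2) := finSumFinEquiv with hε
  set Ψ : Matrix (Fin n) (Fin n ⊕ Fin 2) (MvPolynomial (Fin 3) K) := Φ.submatrix id ε with hΨ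
  have hmv : ∀ f : Fin n ⊕ Fin 2 → MvPolynomial (Fin 3) K,
      Matrix.mulVec Ψ f = Matrix.mulVec Φ (f ∘ ε.symm) := fun f =>
    Matrix.submatrix_mulVec_equiv Φ f id ε
  have hmv' : ∀ f : Fin (n + 2) → MvPolynomial (Fin 3) K,
      Matrix.mulVec Ψ (f ∘ ε) = Matrix.mulVec Φ f := by
    intro f
    rw [hmv, Function.comp_assoc, Equiv.self_comp_symm, Function.comp_id]
  have hfin' : ∃ D : ℤ, ∀ d, D ≤ d → ∀ g : Fin n → MvPolynomial (Fin 3) K,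
      (∀ j, BR.hg (g j) (d - b j)) → ∃ f, Matrix.mulVec Ψ f = g := by
    obtain ⟨D, hD⟩ := hfin
    refine ⟨D, fun d hd g hg => ?_⟩
    obtain ⟨f, -, hf⟩ := hD d hd (mem_degPiece.mpr hg)
    exact ⟨f ∘ ε, (hmv' f).trans hf⟩
  obtain ⟨s, hsN, hs0⟩ := (Submodule.ne_bot_iff _).mp hk₁
  have hs1 : ∀ i, homog (s i) (m - k - a i) := mem_degPiece.mp hsN.1
  have hs2 : Matrix.mulVec Φ s = 0 := hsN.2
  have hmin : ∀ e' < m - k, ∀ v : Fin n ⊕ Fin 2 → MvPolynomial (Fin 3) K,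
      (∀ i, BR.hg (v i) (e' - a (ε i))) → Matrix.mulVec Ψ v = 0 → v = 0 := by
    intro e' he' v hv hv0
    by_contra hne
    have := hk₂ (m - e') (by
      rw [sub_sub_cancel]
      refine (Submodule.ne_bot_iff _).mpr ⟨v ∘ ε.symm, ⟨mem_degPiece.mpr fun i => ?_, ?_⟩, ?_⟩
      · have := hv (ε.symm i)
        rwa [Equiv.apply_symm_apply] at this
      · exact (hmv v).symm.trans hv0
      · intro h
        apply hne
        ext1 i
        have := congrFun h (ε i)
        simpa using this)
    omega
  obtain ⟨P, hP0, hP⟩ := BR.core (Φ := Ψ) (a := a ∘ ε) (b := b) (fun j i => hΦ j (ε i)) hfin'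
    (s := s ∘ ε) (e := m - k) (fun i => hs1 (ε i)) (by
      intro h
      apply hs0
      ext1 i
      have := congrFun h (ε.symm i)
      simpa using this) ((hmv' s).trans hs2) hmin
  have hsum : ∑ i, (a ∘ ε) i = ∑ i, a i := Equiv.sum_comp ε a
  refine ⟨P, hP0, fun c hc => ?_⟩
  obtain ⟨hinj, hsurj⟩ := hP c hc
  constructor
  · intro d hd
    rw [← LinearMap.ker_eq_bot, LinearMap.ker_eq_bot']
    intro x
    obtain ⟨⟨w, hw⟩, rfl⟩ := Submodule.Quotient.mk_surjective _ x
    intro hx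
    have hx' : mulLres n b (linform c) (homog_linform c) d ⟨w, hw⟩ ∈ MdSub n a b Φ d :=
      (Submodule.Quotient.mk_eq_zero _).mp hx
    obtain ⟨v, hv, hvw⟩ := hx'
    have hv1 := mem_degPiece.mp hv
    obtain ⟨v', hv', hvw'⟩ := hinj d (by rw [hsum, hm]; omega) w (v ∘ ε)
      (mem_degPiece.mp hw) (fun i => hv1 (ε i)) ((hmv' v).trans hvw)
    refine (Submodule.Quotient.mk_eq_zero _).mpr ⟨v' ∘ ε.symm, mem_degPiece.mpr fun i => ?_, ?_⟩
    · have := hv' (ε.symm i)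
      rwa [Function.comp_apply, Equiv.apply_symm_apply] at this
    · exact (hmv v').symm.trans hvw'
  · intro d hd y
    obtain ⟨⟨g, hg⟩, rfl⟩ := Submodule.Quotient.mk_surjective _ y
    obtain ⟨v, g', hv, hg', hgv⟩ := hsurj d (by omega) g (mem_degPiece.mp hg)
    refine ⟨Submodule.Quotient.mk ⟨g', mem_degPiece.mpr hg'⟩, ?_⟩
    refine (Submodule.Quotient.eq _).mpr ?_
    refine ⟨-(v ∘ ε.symm), neg_mem (mem_degPiece.mpr fun i => ?_), ?_⟩
    · have := hv (ε.symm i)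
      rwa [Function.comp_apply, Equiv.apply_symm_apply] at this
    · have h1 : phiK n Φ (v ∘ ε.symm) = Matrix.mulVec Ψ v := (hmv v).symm
      rw [map_neg, h1]
      show -(Matrix.mulVec Ψ v) = linform c • g' - g
      rw [hgv]
      abel
end

section
/- If F_1, F_2, F_3 are homogeneous polynomials of positive degree forming a regular sequence in R = K[x,y,z], then the Artinian graded algebra A = R/(F_1, F_2, F_3) has the Weak Lefschetz Property: there exists a linear form L ∈ R_1 such that multiplication ×L : A_d → A_{d+1} is injective or surjective for every d. -/
open MvPolynomial

noncomputable section

variable {K : Type*} [Field K]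

/-- The degree-`d` graded piece of `R = K[x,y,z]`, as a `K`-subspace. -/
def Rdeg (d : ℤ) : Submodule K (MvPolynomial (Fin 3) K) :=
  weightedHomogeneousSubmodule K (fun _ : Fin 3 => (1 : ℤ)) d

/-- The degree-`d` piece of the ideal `I`, inside the degree-`d` piece of `R`. -/
def IdealPiece (I : Ideal (MvPolynomial (Fin 3) K)) (d : ℤ) :
    Submodule K ↥(Rdeg (K := K) d) :=
  Submodule.comap (Rdeg (K := K) d).subtype (I.restrictScalars K)

/-- The degree-`d` graded piece of the graded algebra `A = R/I`. -/
abbrev Ad (I : Ideal (MvPolynomial (Fin 3) K)) (d : ℤ) :=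
  ↥(Rdeg (K := K) d) ⧸ IdealPiece I d

/-- Multiplication by `L` on `R`, as a `K`-linear map. -/
def mulScalar (L : MvPolynomial (Fin 3) K) :
    MvPolynomial (Fin 3) K →ₗ[K] MvPolynomial (Fin 3) K :=
  ((LinearMap.lsmul (MvPolynomial (Fin 3) K) (MvPolynomial (Fin 3) K)) L).restrictScalars K

lemma mulScalar_mem {L : MvPolynomial (Fin 3) K} (hL : homog L 1) {d : ℤ}
    {p : MvPolynomial (Fin 3) K} (hp : p ∈ Rdeg (K := K) (d - 1)) :
    mulScalar L p ∈ Rdeg (K := K) d := by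
  rw [Rdeg, mem_weightedHomogeneousSubmodule] at hp ⊢
  have h := hL.mul hp
  have e : (1 : ℤ) + (d - 1) = d := by ring
  rw [e] at h
  simpa [mulScalar, smul_eq_mul] using h

/-- The map induced by multiplication by `L` from `A_{d-1}` to `A_d`, where `A = R/I`. -/
def mulA (I : Ideal (MvPolynomial (Fin 3) K)) (L : MvPolynomial (Fin 3) K)
    (hL : homog L 1) (d : ℤ) : Ad I (d - 1) →ₗ[K] Ad I d :=
  Submodule.mapQ (IdealPiece I (d - 1)) (IdealPiece I d)
    ((mulScalar L).restrict fun _ hp => mulScalar_mem hL hp)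
    (by
      rintro ⟨p, hp⟩ hmem
      have hpI : p ∈ I := hmem
      show mulScalar L p ∈ Submodule.restrictScalars K I
      have : mulScalar L p = L * p := by simp [mulScalar, smul_eq_mul]
      rw [this]
      exact Ideal.mul_mem_left I L hpI)

/-! ### Homogeneous polynomials with integer degrees -/

/-- Homogeneity with integer degree in an arbitrary set of variables. -/
def hm {σ : Type*} (p : MvPolynomial σ K) (n : ℤ) : Prop :=
  IsWeightedHomogeneous (fun _ : σ => (1 : ℤ)) p n

lemma hm_mul {σ : Type*} {p q : MvPolynomial σ K} {m n : ℤ} (hp : hm p m) (hq : hm q n) :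
    hm (p * q) (m + n) := IsWeightedHomogeneous.mul hp hq

lemma hm_mul' {σ : Type*} {p q : MvPolynomial σ K} {m n k : ℤ} (hp : hm p m) (hq : hm q n)
    (h : m + n = k) : hm (p * q) k := h ▸ hm_mul hp hq

lemma hm_add {σ : Type*} {p q : MvPolynomial σ K} {n : ℤ} (hp : hm p n) (hq : hm q n) :
    hm (p + q) n := IsWeightedHomogeneous.add hp hq

lemma hm_sub {σ : Type*} {p q : MvPolynomial σ K} {n : ℤ} (hp : hm p n) (hq : hm q n) :
    hm (p - q) n := IsWeightedHomogeneous.sub hp hq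

lemma hm_zero {σ : Type*} (n : ℤ) : hm (0 : MvPolynomial σ K) n :=
  isWeightedHomogeneous_zero _ _ _

lemma hm_X {σ : Type*} (i : σ) : hm (X i : MvPolynomial σ K) 1 :=
  isWeightedHomogeneous_X _ _ _

lemma hm_C {σ : Type*} (c : K) : hm (C c : MvPolynomial σ K) 0 :=
  isWeightedHomogeneous_C _ _

lemma hm_C_mul {σ : Type*} (c : K) {p : MvPolynomial σ K} {n : ℤ} (hp : hm p n) :
    hm (C c * p) n := IsWeightedHomogeneous.C_mul hp c

lemma hm_pow {σ : Type*} {p : MvPolynomial σ K} {n : ℤ} (hp : hm p n) (k : ℕ) :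
    hm (p ^ k) (k * n) := by
  have := IsWeightedHomogeneous.pow hp k
  rwa [nsmul_eq_mul] at this

lemma hm_X_pow {σ : Type*} (i : σ) (k : ℕ) : hm (X i ^ k : MvPolynomial σ K) k := by
  have := hm_pow (hm_X (K := K) i) k
  rwa [mul_one] at this

lemma hm_sum {σ ι : Type*} (s : Finset ι) (f : ι → MvPolynomial σ K) {n : ℤ}
    (h : ∀ i ∈ s, hm (f i) n) : hm (∑ i ∈ s, f i) n :=
  IsWeightedHomogeneous.sum s f n h

/-- The homogeneous component of degree `n`. -/
def hcomp {σ : Type*} (n : ℤ) : MvPolynomial σ K →ₗ[K] MvPolynomial σ K :=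
  weightedHomogeneousComponent (fun _ : σ => (1 : ℤ)) n

lemma hm_hcomp {σ : Type*} (n : ℤ) (p : MvPolynomial σ K) : hm (hcomp n p) n := by
  unfold hm hcomp
  exact weightedHomogeneousComponent_isWeightedHomogeneous _ _

lemma hcomp_same {σ : Type*} {n : ℤ} {p : MvPolynomial σ K} (h : hm p n) : hcomp n p = p :=
  IsWeightedHomogeneous.weightedHomogeneousComponent_same h

lemma hcomp_mul {σ : Type*} {n e : ℤ} (c : MvPolynomial σ K) {F : MvPolynomial σ K} (h : hm F e) :
    hcomp n (c * F) = hcomp (n - e) c * F := by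
  classical
  induction c using MvPolynomial.induction_on' with
  | add p q hp hq => rw [add_mul, map_add, map_add, hp, hq, add_mul]
  | monomial u a =>
    have hmon : hm (monomial u a) (Finsupp.weight (fun _ : σ => (1 : ℤ)) u) :=
      isWeightedHomogeneous_monomial _ _ _ rfl
    by_cases hn : Finsupp.weight (fun _ : σ => (1 : ℤ)) u = n - e
    · rw [hn] at hmon
      rw [hcomp_same hmon, hcomp_same (hm_mul' hmon h (by ring))]
    · have h1 : hcomp (n - e) (monomial u a) = 0 :=
        IsWeightedHomogeneous.weightedHomogeneousComponent_ne _ hmon (Ne.symm hn)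
      have h2 : hcomp n (monomial u a * F) = 0 :=
        IsWeightedHomogeneous.weightedHomogeneousComponent_ne _ (hm_mul hmon h)
          (fun h' => hn (by linarith))
      rw [h1, h2, zero_mul]

lemma hm_of_mul {σ : Type*} {n e : ℤ} {c F : MvPolynomial σ K} (h : hm F e) (hF : F ≠ 0)
    (hc : hm (c * F) n) : hm c (n - e) := by
  have h1 := hcomp_mul (n := n) c h
  rw [hcomp_same hc] at h1
  rw [mul_right_cancel₀ hF h1]
  exact hm_hcomp _ _

/-- Homogeneous elements of a homogeneous ideal have homogeneous coefficients. -/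
lemma exists_hm_coeffs {σ : Type*} (f : Fin 3 → MvPolynomial σ K) (e : Fin 3 → ℤ)
    (hf : ∀ i, hm (f i) (e i)) {n : ℤ} {u : MvPolynomial σ K} (hu : hm u n)
    (hmem : u ∈ Ideal.span (Set.range f)) :
    ∃ c : Fin 3 → MvPolynomial σ K, (∀ i, hm (c i) (n - e i)) ∧ ∑ i, c i * f i = u := by
  obtain ⟨c, hc⟩ := (Ideal.mem_span_range_iff_exists_fun).1 hmem
  refine ⟨fun i => hcomp (n - e i) (c i), fun i => hm_hcomp _ _, ?_⟩
  rw [← hcomp_same hu, ← hc, map_sum]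
  exact Finset.sum_congr rfl fun i _ => (hcomp_mul _ (hf i)).symm

lemma hm_neg_eq_zero {σ : Type*} {p : MvPolynomial σ K} {n : ℤ} (hp : hm p n) (hn : n < 0) :
    p = 0 := by
  by_contra hne
  obtain ⟨m, hm'⟩ := MvPolynomial.ne_zero_iff.1 hne
  have := hp hm'
  have h0 : 0 ≤ Finsupp.weight (fun _ : σ => (1 : ℤ)) m := by
    rw [Finsupp.weight_apply]
    exact Finset.sum_nonneg fun i _ => by simp
  omega

lemma hm_zero_eq_C {σ : Type*} {p : MvPolynomial σ K} (hp : hm p 0) :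
    ∃ c, p = C c := by
  classical
  refine ⟨coeff 0 p, ?_⟩
  ext m
  rw [coeff_C]
  split_ifs with h
  · rw [h]
  · by_contra hne
    have h1 := hp hne
    rw [Finsupp.weight_apply] at h1
    have h2 : ∀ i ∈ m.support, m i • (1 : ℤ) = 0 :=
      (Finset.sum_eq_zero_iff_of_nonneg (fun i _ => by simp)).1 h1
    apply h
    ext i
    by_contra h3
    have := h2 i (by simpa [eq_comm] using h3)
    simp at this
    exact h3 (by simp [this])

/-! ### Binary forms -/

lemma monomial_fin_two (i j : Fin 2) (hij : i ≠ j) (m : Fin 2 →₀ ℕ) (a : K) :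
    (monomial m a : MvPolynomial (Fin 2) K) = C a * (X i ^ m i * X j ^ m j) := by
  rw [monomial_eq, Finsupp.prod_fintype _ _ (by simp), Fin.prod_univ_two]
  fin_cases i <;> fin_cases j <;> simp at hij ⊢
  left; ring

lemma weight_fin_two (i j : Fin 2) (hij : i ≠ j) (m : Fin 2 →₀ ℕ) :
    Finsupp.weight (fun _ : Fin 2 => (1 : ℤ)) m = m i + m j := by
  rw [Finsupp.weight_apply, Finsupp.sum_fintype _ _ (by simp), Fin.sum_univ_two]
  fin_cases i <;> fin_cases j <;> simp at hij ⊢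
  ring

lemma binary_dvd_aux {p : MvPolynomial (Fin 2) K} {k : ℕ} (hp : hm p k) (P : Fin 2 → K)
    (i j : Fin 2) (hij : i ≠ j) :
    (C (P j) * X i - C (P i) * X j) ∣ C (P i ^ k) * p - C (eval P p) * X i ^ k := by
  have key : ∀ m ∈ p.support, (C (P j) * X i - C (P i) * X j) ∣
      C (P i ^ k) * monomial m (coeff m p) - C (eval P (monomial m (coeff m p))) * X i ^ k := by
    intro m hmem
    have hw := hp (mem_support_iff.1 hmem)
    rw [weight_fin_two i j hij] at hw
    have hk : k = m i + m j := by exact_mod_cast hw.symm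
    rw [monomial_fin_two i j hij]
    have h1 : C (P i ^ k) * (C (coeff m p) * (X i ^ m i * X j ^ m j)) -
        C (eval P (C (coeff m p) * (X i ^ m i * X j ^ m j))) * X i ^ k =
        -(C (coeff m p) * C (P i ^ m i) * X i ^ m i) *
          ((C (P j) * X i) ^ m j - (C (P i) * X j) ^ m j : MvPolynomial (Fin 2) K) := by
      rw [hk]
      simp only [eval_mul, eval_C, eval_pow, eval_X, C_mul, C_pow]
      ring
    rw [h1]
    exact Dvd.dvd.mul_left (sub_dvd_pow_sub_pow _ _ _) _
  have h2 : C (P i ^ k) * p - C (eval P p) * X i ^ k = ∑ m ∈ p.support,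
      (C (P i ^ k) * monomial m (coeff m p) -
        C (eval P (monomial m (coeff m p))) * X i ^ k) := by
    conv_lhs => rw [p.as_sum]
    rw [Finset.sum_sub_distrib, Finset.mul_sum, map_sum, map_sum, Finset.sum_mul]
  rw [h2]
  exact Finset.dvd_sum key

lemma binary_dvd {p : MvPolynomial (Fin 2) K} {n : ℤ} (hp : hm p n) (P : Fin 2 → K)
    (hP : P ≠ 0) (h0 : eval P p = 0) :
    (C (P 1) * X 0 - C (P 0) * X 1) ∣ p := by
  rcases lt_or_ge n 0 with hn | hn
  · rw [hm_neg_eq_zero hp hn]; exact dvd_zero _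
  lift n to ℕ using hn
  have aux : ∀ i j : Fin 2, i ≠ j → P i ≠ 0 → (C (P j) * X i - C (P i) * X j) ∣ p := by
    intro i j hij hi
    have h := binary_dvd_aux hp P i j hij
    rw [h0, C_0, zero_mul, sub_zero] at h
    have hu : IsUnit (C (P i ^ n) : MvPolynomial (Fin 2) K) :=
      (isUnit_iff_ne_zero.2 (pow_ne_zero _ hi)).map C
    exact (hu.dvd_mul_left).1 h
  by_cases h : P 0 = 0
  · have h1 : P 1 ≠ 0 := fun h1 => hP (by ext i; fin_cases i <;> simp [h, h1])
    have := aux 1 0 (by simp) h1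
    rw [← neg_dvd]
    convert this using 1
    ring
  · exact aux 0 1 (by simp) h

lemma binary_zero [IsAlgClosed K] [CharZero K] {p : MvPolynomial (Fin 2) K} {n : ℤ} (hp : hm p n)
    (hn : 0 < n) : ∃ P : Fin 2 → K, P ≠ 0 ∧ eval P p = 0 := by
  lift n to ℕ using hn.le
  by_contra! hcon
  have ev1 : ∀ r : K, (aeval ![1, Polynomial.X] p : Polynomial K).eval r = eval ![1, r] p := by
    intro r
    rw [← Polynomial.coe_evalRingHom, aeval_def, eval₂_comp_left, MvPolynomial.eval,
      coe_eval₂Hom]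
    congr 1
    · ext; simp
    · ext i; fin_cases i <;> simp
  have ev2 : ∀ r : K, (aeval ![Polynomial.X, 1] p : Polynomial K).eval r = eval ![r, 1] p := by
    intro r
    rw [← Polynomial.coe_evalRingHom, aeval_def, eval₂_comp_left, MvPolynomial.eval,
      coe_eval₂Hom]
    congr 1
    · ext; simp
    · ext i; fin_cases i <;> simp
  have c1 : ∃ c, ∀ r, eval ![1, r] p = c := by
    by_cases hd : (aeval ![1, Polynomial.X] p : Polynomial K).degree = 0
    · rw [Polynomial.eq_C_of_degree_eq_zero hd] at ev1
      exact ⟨_, fun r => by rw [← ev1]; exact Polynomial.eval_C⟩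
    · obtain ⟨r, hr⟩ := IsAlgClosed.exists_root _ hd
      rw [Polynomial.IsRoot, ev1] at hr
      exact absurd hr (hcon _ (fun h => by simpa using congrFun h 0))
  have c2 : ∃ c, ∀ r, eval ![r, 1] p = c := by
    by_cases hd : (aeval ![Polynomial.X, 1] p : Polynomial K).degree = 0
    · rw [Polynomial.eq_C_of_degree_eq_zero hd] at ev2
      exact ⟨_, fun r => by rw [← ev2]; exact Polynomial.eval_C⟩
    · obtain ⟨r, hr⟩ := IsAlgClosed.exists_root _ hd
      rw [Polynomial.IsRoot, ev2] at hr
      exact absurd hr (hcon _ (fun h => by simpa using congrFun h 1))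
  obtain ⟨c, hc⟩ := c1
  obtain ⟨c', hc'⟩ := c2
  have hcc : c = c' := by rw [← hc 1, ← hc' 1]
  have hne : c ≠ 0 := by
    rw [← hc 1]; exact hcon _ (fun h => by simpa using congrFun h 0)
  obtain ⟨w, hw⟩ := binary_dvd_aux hp ![(2 : K)⁻¹, 1] 1 0 (by simp)
  have h3 := congrArg (eval ![1, (2 : K)]) hw
  simp only [Matrix.cons_val_zero, Matrix.cons_val_one, one_pow, map_sub, map_mul,
    eval_C, eval_X, eval_pow, hc, hc', ← hcc] at h3
  have h4 : c * (2 ^ n - 1) = 0 := by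
    simp at h3
    linear_combination -h3
  rcases mul_eq_zero.1 h4 with h | h
  · exact hne h
  · have h5 : (2 : K) ^ n = 1 := by linear_combination h
    have h6 : (2 : ℕ) ^ n = 1 := by exact_mod_cast h5
    have : n ≠ 0 := by omega
    have := Nat.one_lt_two_pow this
    omega

/-! ### Syzygies of three binary forms -/

/-- Cross product. -/
def cr {A : Type*} [CommRing A] (u v : Fin 3 → A) : Fin 3 → A :=
  ![u 1 * v 2 - u 2 * v 1, u 2 * v 0 - u 0 * v 2, u 0 * v 1 - u 1 * v 0]

lemma cr_zero' {A : Type*} [CommRing A] (u v : Fin 3 → A) :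
    cr u v 0 = u 1 * v 2 - u 2 * v 1 := rfl
lemma cr_one' {A : Type*} [CommRing A] (u v : Fin 3 → A) :
    cr u v 1 = u 2 * v 0 - u 0 * v 2 := rfl
lemma cr_two' {A : Type*} [CommRing A] (u v : Fin 3 → A) :
    cr u v 2 = u 0 * v 1 - u 1 * v 0 := rfl

lemma cr_par {A : Type*} [CommRing A] (f u v : Fin 3 → A)
    (hu : ∑ i, u i * f i = 0) (hv : ∑ i, v i * f i = 0) (i j : Fin 3) :
    cr u v i * f j = cr u v j * f i := by
  rw [Fin.sum_univ_three] at hu hv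
  fin_cases i <;> fin_cases j <;> simp [cr_zero', cr_one', cr_two']
  · linear_combination v 2 * hu - u 2 * hv
  · linear_combination u 1 * hv - v 1 * hu
  · linear_combination u 2 * hv - v 2 * hu
  · linear_combination v 0 * hu - u 0 * hv
  · linear_combination v 1 * hu - u 1 * hv
  · linear_combination u 0 * hv - v 0 * hu

lemma cr_eq_mul (f u v : Fin 3 → MvPolynomial (Fin 2) K) {N : ℕ}
    (hx : X 0 ^ N ∈ Ideal.span (Set.range f)) (hy : X 1 ^ N ∈ Ideal.span (Set.range f))
    (hu : ∑ i, u i * f i = 0) (hv : ∑ i, v i * f i = 0) :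
    ∃ g, ∀ i, cr u v i = g * f i := by
  obtain ⟨a, ha⟩ := (Ideal.mem_span_range_iff_exists_fun).1 hx
  obtain ⟨b, hb⟩ := (Ideal.mem_span_range_iff_exists_fun).1 hy
  have hA : ∀ i, X 0 ^ N * cr u v i = (∑ j, a j * cr u v j) * f i := by
    intro i
    rw [← ha, Finset.sum_mul, Finset.sum_mul]
    refine Finset.sum_congr rfl fun j _ => ?_
    linear_combination a j * cr_par f u v hu hv i j
  have hB : ∀ i, X 1 ^ N * cr u v i = (∑ j, b j * cr u v j) * f i := by
    intro i
    rw [← hb, Finset.sum_mul, Finset.sum_mul]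
    refine Finset.sum_congr rfl fun j _ => ?_
    linear_combination b j * cr_par f u v hu hv i j
  set A := ∑ j, a j * cr u v j
  set B := ∑ j, b j * cr u v j
  have hf : ∃ i, f i ≠ 0 := by
    by_contra! h
    simp [h] at ha
    exact pow_ne_zero _ (X_ne_zero 0) ha.symm
  obtain ⟨i₀, hi₀⟩ := hf
  have h1 : X 1 ^ N * A = X 0 ^ N * B := by
    apply mul_right_cancel₀ hi₀
    linear_combination X 0 ^ N * hB i₀ - X 1 ^ N * hA i₀
  have h2 : (X 0 : MvPolynomial (Fin 2) K) ^ N ∣ A := by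
    have hp : Prime (X 0 : MvPolynomial (Fin 2) K) := X_prime
    refine hp.pow_dvd_of_dvd_mul_left N (a := X 1 ^ N) ?_ ⟨B, h1⟩
    intro h
    have := hp.dvd_of_dvd_pow h
    rw [X_dvd_X] at this
    simp at this
  obtain ⟨g, hg⟩ := h2
  refine ⟨g, fun i => ?_⟩
  have hX : (X 0 : MvPolynomial (Fin 2) K) ^ N ≠ 0 := pow_ne_zero _ (X_ne_zero 0)
  apply mul_left_cancel₀ hX
  rw [hA, hg, mul_assoc]

lemma hm_cr {σ : Type*} {u v : Fin 3 → MvPolynomial σ K} {e : Fin 3 → ℤ} {p q : ℤ}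
    (hu : ∀ i, hm (u i) (p - e i)) (hv : ∀ i, hm (v i) (q - e i)) (i : Fin 3) :
    hm (cr u v i) (p + q - (e 0 + e 1 + e 2) + e i) := by
  fin_cases i
  · exact hm_sub (hm_mul' (hu 1) (hv 2) (by simp; ring)) (hm_mul' (hu 2) (hv 1) (by simp; ring))
  · exact hm_sub (hm_mul' (hu 2) (hv 0) (by simp; ring)) (hm_mul' (hu 0) (hv 2) (by simp; ring))
  · exact hm_sub (hm_mul' (hu 0) (hv 1) (by simp; ring)) (hm_mul' (hu 1) (hv 0) (by simp; ring))

/-- The multiplier in `cr_eq_mul` is homogeneous. -/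
lemma cr_eq_mul_hm (f u v : Fin 3 → MvPolynomial (Fin 2) K) (e : Fin 3 → ℤ)
    (hf : ∀ i, hm (f i) (e i)) {N : ℕ}
    (hx : X 0 ^ N ∈ Ideal.span (Set.range f)) (hy : X 1 ^ N ∈ Ideal.span (Set.range f))
    {p q : ℤ} (hud : ∀ i, hm (u i) (p - e i)) (hvd : ∀ i, hm (v i) (q - e i))
    (hu : ∑ i, u i * f i = 0) (hv : ∑ i, v i * f i = 0) :
    ∃ g, hm g (p + q - (e 0 + e 1 + e 2)) ∧ ∀ i, cr u v i = g * f i := by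
  obtain ⟨g, hg⟩ := cr_eq_mul f u v hx hy hu hv
  refine ⟨g, ?_, hg⟩
  have hf0 : ∃ i, f i ≠ 0 := by
    by_contra! h
    obtain ⟨a, ha⟩ := (Ideal.mem_span_range_iff_exists_fun).1 hx
    simp [h] at ha
    exact pow_ne_zero _ (X_ne_zero 0) ha.symm
  obtain ⟨i, hi⟩ := hf0
  have h1 := hm_cr hud hvd i
  rw [hg i] at h1
  have h2 := hm_of_mul (hf i) hi h1
  rwa [add_sub_cancel_right] at h2

/-- A binary form of positive degree lies in the ideal `(X 0, X 1)`. -/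
lemma exists_of_hm_pos {p : MvPolynomial (Fin 2) K} {n : ℤ} (hp : hm p n) (hn : 0 < n) :
    ∃ a b, p = X 1 * a - X 0 * b := by
  have h : p ∈ Ideal.span {(X 1 : MvPolynomial (Fin 2) K), X 0} := by
    rw [p.as_sum]
    refine Ideal.sum_mem _ fun m hm' => ?_
    have hw := hp (mem_support_iff.1 hm')
    rw [weight_fin_two 0 1 (by simp)] at hw
    rw [monomial_fin_two 0 1 (by simp)]
    apply Ideal.mul_mem_left
    by_cases h0 : m 0 = 0
    · have h1 : m 1 ≠ 0 := by omega
      exact Ideal.mul_mem_left _ _ (Ideal.pow_mem_of_mem _ (Ideal.subset_span (by simp)) _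
        (Nat.pos_of_ne_zero h1))
    · exact Ideal.mul_mem_right _ _ (Ideal.pow_mem_of_mem _ (Ideal.subset_span (by simp)) _
        (Nat.pos_of_ne_zero h0))
  obtain ⟨a, b, hab⟩ := Ideal.mem_span_pair.1 h
  exact ⟨a, -b, by rw [← hab]; ring⟩

/-- High degree binary forms lie in the ideal. -/
lemma hm_mem_of_large (I : Ideal (MvPolynomial (Fin 2) K)) {N : ℕ}
    (hx : X 0 ^ N ∈ I) (hy : X 1 ^ N ∈ I) {p : MvPolynomial (Fin 2) K} {n : ℤ} (hp : hm p n)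
    (hn : 2 * (N : ℤ) ≤ n) : p ∈ I := by
  rw [p.as_sum]
  refine Ideal.sum_mem _ fun m hm' => ?_
  have hw := hp (mem_support_iff.1 hm')
  rw [weight_fin_two 0 1 (by simp)] at hw
  rw [monomial_fin_two 0 1 (by simp)]
  apply Ideal.mul_mem_left
  by_cases h0 : N ≤ m 0
  · exact Ideal.mul_mem_right _ _ (I.pow_mem_of_pow_mem hx h0)
  · exact Ideal.mul_mem_left _ _ (I.pow_mem_of_pow_mem hy (by omega))

/-- The case of a free basis of the syzygy module. -/
lemma syz_basis (f : Fin 3 → MvPolynomial (Fin 2) K) (e : Fin 3 → ℤ)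
    (hf : ∀ i, hm (f i) (e i)) {N : ℕ}
    (hx : X 0 ^ N ∈ Ideal.span (Set.range f)) (hy : X 1 ^ N ∈ Ideal.span (Set.range f))
    {d p q : ℤ} (u v : Fin 3 → MvPolynomial (Fin 2) K) (hpd : p ≤ d + 1) (hqd : q ≤ d + 1)
    (hud : ∀ i, hm (u i) (p - e i)) (hvd : ∀ i, hm (v i) (q - e i))
    (hu : ∑ i, u i * f i = 0) (hv : ∑ i, v i * f i = 0)
    (hpq : p + q = e 0 + e 1 + e 2) (c : K) (hc : c ≠ 0) (hcr : ∀ i, cr u v i = C c * f i)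
    (w : MvPolynomial (Fin 2) K) (n : ℤ) (hdn : d ≤ n) (hw : hm w n) :
    w ∈ Ideal.span (Set.range f) := by
  obtain ⟨k, hk⟩ : ∃ k : ℕ, 2 * (N : ℤ) ≤ n + k := ⟨(2 * (N : ℤ) - n).toNat, by omega⟩
  induction k generalizing n w with
  | zero => exact hm_mem_of_large _ hx hy hw (by simpa using hk)
  | succ k ih =>
    have hxw := ih (X 0 * w) (n + 1) (by omega) (hm_mul' (hm_X 0) hw (by ring))
      (by push_cast at hk ⊢; omega)
    have hyw := ih (X 1 * w) (n + 1) (by omega) (hm_mul' (hm_X 1) hw (by ring))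
      (by push_cast at hk ⊢; omega)
    obtain ⟨a, had, ha⟩ := exists_hm_coeffs f e hf (hm_mul' (hm_X 0) hw (add_comm 1 n)) hxw
    obtain ⟨b, hbd, hb⟩ := exists_hm_coeffs f e hf (hm_mul' (hm_X 1) hw (add_comm 1 n)) hyw
    set η : Fin 3 → MvPolynomial (Fin 2) K := fun i => X 1 * a i - X 0 * b i with hη
    have hηd : ∀ i, hm (η i) (n + 2 - e i) := fun i =>
      hm_sub (hm_mul' (hm_X 1) (had i) (by ring)) (hm_mul' (hm_X 0) (hbd i) (by ring))
    have hηs : ∑ i, η i * f i = 0 := by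
      have : ∑ i, η i * f i = X 1 * ∑ i, a i * f i - X 0 * ∑ i, b i * f i := by
        rw [Finset.mul_sum, Finset.mul_sum, ← Finset.sum_sub_distrib]
        exact Finset.sum_congr rfl fun i _ => by rw [hη]; ring
      rw [this, ha, hb]; ring
    obtain ⟨α, hαd, hα⟩ := cr_eq_mul_hm f η v e hf hx hy hηd hvd hηs hv
    obtain ⟨β, hβd, hβ⟩ := cr_eq_mul_hm f u η e hf hx hy hud hηd hu hηs
    obtain ⟨α₁, α₂, hα'⟩ := exists_of_hm_pos hαd (by omega)
    obtain ⟨β₁, β₂, hβ'⟩ := exists_of_hm_pos hβd (by omega)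
    have hdec : ∀ i, C c * η i = α * u i + β * v i := by
      have hf0 : ∃ i, f i ≠ 0 := by
        by_contra! h
        obtain ⟨a, ha⟩ := (Ideal.mem_span_range_iff_exists_fun).1 hx
        simp [h] at ha
        exact pow_ne_zero _ (X_ne_zero 0) ha.symm
      obtain ⟨i₀, hi₀⟩ := hf0
      intro i
      apply mul_right_cancel₀ hi₀
      have e0 := hα 0
      have e1 := hα 1
      have e2 := hα 2
      have g0 := hβ 0
      have g1 := hβ 1
      have g2 := hβ 2
      have c0 := hcr 0
      have c1 := hcr 1
      have c2 := hcr 2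
      simp only [cr_zero', cr_one', cr_two'] at e0 e1 e2 g0 g1 g2 c0 c1 c2
      have hs3 := hηs
      rw [Fin.sum_univ_three] at hs3
      clear_value η
      have hdet : η 0 * (u 1 * v 2 - u 2 * v 1) + η 1 * (u 2 * v 0 - u 0 * v 2) +
          η 2 * (u 0 * v 1 - u 1 * v 0) = 0 := by
        linear_combination η 0 * c0 + η 1 * c1 + η 2 * c2 + C c * hs3
      fin_cases i₀ <;> fin_cases i <;> simp only [Fin.zero_eta, Fin.mk_one, Fin.reduceFinMk]
      · linear_combination u 0 * e0 + v 0 * g0 - η 0 * c0 + hdet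
      · linear_combination u 1 * e0 + v 1 * g0 - η 1 * c0
      · linear_combination u 2 * e0 + v 2 * g0 - η 2 * c0
      · linear_combination u 0 * e1 + v 0 * g1 - η 0 * c1
      · linear_combination u 1 * e1 + v 1 * g1 - η 1 * c1 + hdet
      · linear_combination u 2 * e1 + v 2 * g1 - η 2 * c1
      · linear_combination u 0 * e2 + v 0 * g2 - η 0 * c2
      · linear_combination u 1 * e2 + v 1 * g2 - η 1 * c2
      · linear_combination u 2 * e2 + v 2 * g2 - η 2 * c2 + hdet
    have hdiv : ∀ i, ∃ t, C c * a i - α₁ * u i - β₁ * v i = X 0 * t := by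
      intro i
      have h1 : X 1 * (C c * a i - α₁ * u i - β₁ * v i) =
          X 0 * (C c * b i - α₂ * u i - β₂ * v i) := by
        have := hdec i
        rw [hα', hβ', hη] at this
        linear_combination this
      have hp : Prime (X 0 : MvPolynomial (Fin 2) K) := X_prime
      rcases hp.dvd_or_dvd ⟨_, h1⟩ with h | h
      · rw [X_dvd_X] at h
        simp at h
      · exact h
    choose t ht using hdiv
    have hwt : C c * w = ∑ i, t i * f i := by
      apply mul_left_cancel₀ (X_ne_zero (R := K) (0 : Fin 2))
      have h1 : X 0 * ∑ i, t i * f i = C c * ∑ i, a i * f i - α₁ * ∑ i, u i * f i -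
          β₁ * ∑ i, v i * f i := by
        rw [Finset.mul_sum, Finset.mul_sum, Finset.mul_sum, Finset.mul_sum,
          ← Finset.sum_sub_distrib, ← Finset.sum_sub_distrib]
        refine Finset.sum_congr rfl fun i _ => ?_
        linear_combination (-f i) * ht i
      rw [h1, ha, hu, hv]; ring
    have hu' : IsUnit (C c : MvPolynomial (Fin 2) K) := (isUnit_iff_ne_zero.2 hc).map C
    rw [← Ideal.unit_mul_mem_iff_mem _ hu', hwt]
    exact Ideal.sum_mem _ fun i _ => Ideal.mul_mem_left _ _ (Ideal.subset_span ⟨i, rfl⟩)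

/-- One reduction step: if `u P` and `v P` are dependent, the degree can be lowered. -/
lemma syz_reduce (f : Fin 3 → MvPolynomial (Fin 2) K) (e : Fin 3 → ℤ)
    {p q : ℤ} (u v : Fin 3 → MvPolynomial (Fin 2) K) (hpq : p ≤ q)
    (hud : ∀ i, hm (u i) (p - e i)) (hvd : ∀ i, hm (v i) (q - e i))
    (hu : ∑ i, u i * f i = 0) (hv : ∑ i, v i * f i = 0) (hcr : cr u v ≠ 0)
    (P : Fin 2 → K) (hP : P ≠ 0) (hPcr : ∀ i, eval P (cr u v i) = 0) :
    ∃ (p' q' : ℤ) (u' v' : Fin 3 → MvPolynomial (Fin 2) K), p' ≤ p ∧ q' ≤ q ∧ p' + q' = p + q - 1 ∧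
      (∀ i, hm (u' i) (p' - e i)) ∧ (∀ i, hm (v' i) (q' - e i)) ∧
      ∑ i, u' i * f i = 0 ∧ ∑ i, v' i * f i = 0 ∧ cr u' v' ≠ 0 := by
  set l : MvPolynomial (Fin 2) K := C (P 1) * X 0 - C (P 0) * X 1 with hl
  have hld : hm l 1 := hm_sub (hm_C_mul _ (hm_X _)) (hm_C_mul _ (hm_X _))
  obtain ⟨j, hj⟩ : ∃ j, P j ≠ 0 := by
    by_contra! h
    exact hP (funext h)
  have hl0 : l ≠ 0 := by
    intro h
    have h1 := congrArg (eval ![1, 0]) h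
    have h2 := congrArg (eval ![0, 1]) h
    simp [hl] at h1 h2
    fin_cases j <;> simp_all
  -- division by `l`
  have hdiv : ∀ (w : Fin 3 → MvPolynomial (Fin 2) K) (r : ℤ), (∀ i, hm (w i) (r - e i)) →
      ∑ i, w i * f i = 0 → (∀ i, eval P (w i) = 0) →
      ∃ w' : Fin 3 → MvPolynomial (Fin 2) K, (∀ i, hm (w' i) (r - 1 - e i)) ∧
        ∑ i, w' i * f i = 0 ∧ ∀ i, w i = w' i * l := by
    intro w r hwd hw hw0
    have h1 : ∀ i, ∃ t, w i = l * t := fun i => binary_dvd (hwd i) P hP (hw0 i)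
    choose t ht using h1
    refine ⟨t, fun i => ?_, ?_, fun i => by rw [ht, mul_comm]⟩
    · have h2 := hwd i
      rw [ht, mul_comm] at h2
      have h3 := hm_of_mul hld hl0 h2
      rwa [show r - 1 - e i = r - e i - 1 by ring]
    · apply mul_left_cancel₀ hl0
      rw [mul_zero, ← hw, Finset.mul_sum]
      exact Finset.sum_congr rfl fun i _ => by rw [ht]; ring
  by_cases hu0 : ∀ i, eval P (u i) = 0
  · obtain ⟨u', hud', hu', huu⟩ := hdiv u p hud hu hu0
    refine ⟨p - 1, q, u', v, by omega, le_rfl, by ring, hud', hvd, hu', hv, ?_⟩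
    intro h
    apply hcr
    have h0 := congrFun h 0
    have h1 := congrFun h 1
    have h2 := congrFun h 2
    simp only [cr_zero', cr_one', cr_two', Pi.zero_apply] at h0 h1 h2
    ext1 i
    fin_cases i <;> simp only [Fin.zero_eta, Fin.mk_one, Fin.reduceFinMk, cr_zero', cr_one',
      cr_two', Pi.zero_apply, huu]
    · linear_combination l * h0
    · linear_combination l * h1
    · linear_combination l * h2
  · push Not at hu0
    obtain ⟨i₀, hi₀⟩ := hu0
    obtain ⟨m, hm'⟩ : ∃ m : ℕ, q = p + m := ⟨(q - p).toNat, by omega⟩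
    set s : MvPolynomial (Fin 2) K :=
      C (eval P (v i₀) / (eval P (u i₀) * P j ^ m)) * X j ^ m with hs
    have hsd : hm s m := hm_C_mul _ (hm_X_pow _ _)
    have hsP : eval P s * eval P (u i₀) = eval P (v i₀) := by
      simp only [hs, eval_mul, eval_C, eval_pow, eval_X]
      field_simp
    have h0 := hPcr 0
    have h1 := hPcr 1
    have h2 := hPcr 2
    simp only [cr_zero', cr_one', cr_two', eval_sub, eval_mul] at h0 h1 h2
    obtain ⟨v', hvd', hv', hvv⟩ := hdiv (fun i => v i - s * u i) q
      (fun i => hm_sub (hvd i) (hm_mul' hsd (hud i) (by rw [hm']; ring)))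
      (by
        have : ∑ i, (v i - s * u i) * f i = ∑ i, v i * f i - s * ∑ i, u i * f i := by
          rw [Finset.mul_sum, ← Finset.sum_sub_distrib]
          exact Finset.sum_congr rfl fun i _ => by ring
        rw [this, hu, hv]; ring)
      (by
        intro i
        apply mul_left_cancel₀ hi₀
        rw [eval_sub, eval_mul, mul_zero]
        fin_cases i₀ <;> fin_cases i <;>
          simp only [Fin.zero_eta, Fin.mk_one, Fin.reduceFinMk] at hsP ⊢
        · linear_combination (-eval P (u 0)) * hsP
        · linear_combination (-eval P (u 1)) * hsP + h2
        · linear_combination (-eval P (u 2)) * hsP - h1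
        · linear_combination (-eval P (u 0)) * hsP - h2
        · linear_combination (-eval P (u 1)) * hsP
        · linear_combination (-eval P (u 2)) * hsP + h0
        · linear_combination (-eval P (u 0)) * hsP + h1
        · linear_combination (-eval P (u 1)) * hsP - h0
        · linear_combination (-eval P (u 2)) * hsP)
    refine ⟨p, q - 1, u, v', le_rfl, by omega, by ring, hud, hvd', hu, hv', ?_⟩
    intro h
    apply hcr
    have h0 := congrFun h 0
    have h1 := congrFun h 1
    have h2 := congrFun h 2
    simp only [cr_zero', cr_one', cr_two', Pi.zero_apply] at h0 h1 h2
    have hvv' : ∀ i, v i = v' i * l + s * u i := fun i => by rw [← hvv]; ring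
    ext1 i
    fin_cases i <;> simp only [Fin.zero_eta, Fin.mk_one, Fin.reduceFinMk, cr_zero', cr_one',
      cr_two', Pi.zero_apply, hvv']
    · linear_combination l * h0
    · linear_combination l * h1
    · linear_combination l * h2

lemma cr_swap {A : Type*} [CommRing A] (u v : Fin 3 → A) (i : Fin 3) : cr u v i = - cr v u i := by
  fin_cases i <;> simp [cr_zero', cr_one', cr_two'] <;> ring

/-- If there are two independent syzygies of degree at most `d + 1`, then every form of
degree `d` lies in the ideal. -/
theorem syz_main [IsAlgClosed K] [CharZero K] (f : Fin 3 → MvPolynomial (Fin 2) K)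
    (e : Fin 3 → ℤ) (hf : ∀ i, hm (f i) (e i)) {N : ℕ}
    (hx : X 0 ^ N ∈ Ideal.span (Set.range f)) (hy : X 1 ^ N ∈ Ideal.span (Set.range f))
    {d p q : ℤ} (u v : Fin 3 → MvPolynomial (Fin 2) K) (hpd : p ≤ d + 1) (hqd : q ≤ d + 1)
    (hud : ∀ i, hm (u i) (p - e i)) (hvd : ∀ i, hm (v i) (q - e i))
    (hu : ∑ i, u i * f i = 0) (hv : ∑ i, v i * f i = 0) (hcr : cr u v ≠ 0)
    (w : MvPolynomial (Fin 2) K) (hw : hm w d) :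
    w ∈ Ideal.span (Set.range f) := by
  obtain ⟨k, hk⟩ : ∃ k : ℕ, p + q - (e 0 + e 1 + e 2) ≤ k :=
    ⟨(p + q - (e 0 + e 1 + e 2)).toNat, by omega⟩
  induction k generalizing p q u v with
  | zero =>
    obtain ⟨g, hgd, hg⟩ := cr_eq_mul_hm f u v e hf hx hy hud hvd hu hv
    have hg0 : g ≠ 0 := by
      rintro rfl
      exact hcr (funext fun i => by simp [hg i])
    have hdeg : p + q - (e 0 + e 1 + e 2) = 0 := by
      by_contra hne
      exact hg0 (hm_neg_eq_zero hgd (by push_cast at hk; omega))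
    rw [hdeg] at hgd
    obtain ⟨c, rfl⟩ := hm_zero_eq_C hgd
    exact syz_basis f e hf hx hy u v hpd hqd hud hvd hu hv (by omega) c
      (fun h => hg0 (by simp [h])) hg w d le_rfl hw
  | succ k ih =>
    by_cases hlt : p + q - (e 0 + e 1 + e 2) ≤ k
    · exact ih u v hpd hqd hud hvd hu hv hcr hlt
    obtain ⟨g, hgd, hg⟩ := cr_eq_mul_hm f u v e hf hx hy hud hvd hu hv
    obtain ⟨P, hP, hPg⟩ := binary_zero hgd (by omega)
    have hPcr : ∀ i, eval P (cr u v i) = 0 := fun i => by rw [hg, eval_mul, hPg, zero_mul]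
    rcases le_total p q with hle | hle
    · obtain ⟨p', q', u', v', h1, h2, h3, h4, h5, h6, h7, h8⟩ :=
        syz_reduce f e u v hle hud hvd hu hv hcr P hP hPcr
      exact ih u' v' (by omega) (by omega) h4 h5 h6 h7 h8 (by push_cast at hk; omega)
    · obtain ⟨p', q', u', v', h1, h2, h3, h4, h5, h6, h7, h8⟩ :=
        syz_reduce f e v u hle hvd hud hv hu
          (fun h => hcr (funext fun i => by rw [cr_swap, h]; simp)) P hP
          (fun i => by rw [cr_swap, eval_neg, hPcr, neg_zero])
      exact ih u' v' (by omega) (by omega) h4 h5 h6 h7 h8 (by push_cast at hk; omega)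

/-! ### The regular sequence generates an ideal containing powers of the variables -/

lemma supportDim_add_length_le {R : Type*} [CommRing R] [IsNoetherianRing R] (rs : List R) :
    ∀ (M : Type _) [AddCommGroup M] [Module R M] [Module.Finite R M],
    RingTheory.Sequence.IsRegular M rs →
    Module.supportDim R (M ⧸ Ideal.ofList rs • (⊤ : Submodule R M)) + rs.length ≤
      Module.supportDim R M := by
  induction rs with
  | nil =>
    intro M _ _ _ _
    rw [Ideal.ofList_nil, Submodule.bot_smul]
    simpa using (Module.supportDim_eq_of_equiv (Submodule.quotEquivOfEqBot ⊥ rfl)).le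
  | cons x rs ih =>
    intro M _ _ _ reg
    rw [RingTheory.Sequence.isRegular_cons_iff] at reg
    have h1 := ih (QuotSMulTop x M) reg.2
    have h2 := Module.supportDim_quotSMulTop_succ_le_of_notMem_minimalPrimes (R := R) (M := M)
      (x := x) (fun _ hp => reg.1.notMem_of_mem_minimalPrimes hp)
    rw [Module.supportDim_eq_of_equiv
      (Submodule.quotOfListConsSMulTopEquivQuotSMulTopInner M x rs)]
    refine le_trans ?_ h2
    rw [List.length_cons, Nat.cast_add, Nat.cast_one, ← add_assoc]
    gcongr

lemma finite_quot (F : Fin 3 → MvPolynomial (Fin 3) K)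
    (hreg : RingTheory.Sequence.IsRegular (MvPolynomial (Fin 3) K) [F 0, F 1, F 2]) :
    Module.Finite K (MvPolynomial (Fin 3) K ⧸ Ideal.span (Set.range F)) := by
  have hI : Ideal.ofList [F 0, F 1, F 2] • (⊤ : Submodule (MvPolynomial (Fin 3) K)
      (MvPolynomial (Fin 3) K)) = Ideal.span (Set.range F) := by
    rw [smul_eq_mul, Ideal.mul_top, Ideal.ofList]
    congr 1
    ext p
    simp [Fin.exists_fin_succ, eq_comm]
  have h1 := supportDim_add_length_le _ _ hreg
  rw [hI, Module.supportDim_quotient_eq_ringKrullDim, Module.supportDim_self_eq_ringKrullDim,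
    MvPolynomial.ringKrullDim_of_isNoetherianRing, ringKrullDim_eq_zero_of_field] at h1
  have h2 : ringKrullDim (MvPolynomial (Fin 3) K ⧸ Ideal.span (Set.range F)) ≤ 0 := by
    have h3 : ringKrullDim (MvPolynomial (Fin 3) K ⧸ Ideal.span (Set.range F)) + (3 : ℕ) ≤
        0 + (3 : ℕ) := by
      simpa using h1
    exact ENat.WithBot.add_le_add_natCast_right_iff.1 h3
  have h3 : Ring.KrullDimLE 0 (MvPolynomial (Fin 3) K ⧸ Ideal.span (Set.range F)) :=
    Ring.krullDimLE_iff.2 (by simpa using h2)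
  rw [Module.finite_iff_krullDimLE_zero]
  exact h3

lemma exists_X_pow_mem (F : Fin 3 → MvPolynomial (Fin 3) K) (e : Fin 3 → ℤ)
    (hF : ∀ i, hm (F i) (e i))
    (hreg : RingTheory.Sequence.IsRegular (MvPolynomial (Fin 3) K) [F 0, F 1, F 2]) (j : Fin 3) :
    ∃ N : ℕ, X j ^ N ∈ Ideal.span (Set.range F) := by
  have h4 := finite_quot F hreg
  obtain ⟨q, hq, hq0⟩ := Algebra.IsIntegral.isIntegral (R := K)
    (Ideal.Quotient.mk (Ideal.span (Set.range F)) (X j))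
  have h5 : Polynomial.aeval (X j : MvPolynomial (Fin 3) K) q ∈ Ideal.span (Set.range F) := by
    rw [← Ideal.Quotient.eq_zero_iff_mem, ← hq0]
    have := Polynomial.aeval_algHom_apply (Ideal.Quotient.mkₐ K (Ideal.span (Set.range F)))
      (X j) q
    exact this.symm
  refine ⟨q.natDegree, ?_⟩
  have h6 : hcomp (q.natDegree : ℤ) (Polynomial.aeval (X j : MvPolynomial (Fin 3) K) q) =
      X j ^ q.natDegree := by
    rw [Polynomial.aeval_eq_sum_range, map_sum, Finset.sum_eq_single q.natDegree]
    · rw [hq.coeff_natDegree, one_smul, hcomp_same (hm_X_pow _ _)]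
    · intro b hb hne
      rw [map_smul]
      have h7 : hcomp (q.natDegree : ℤ) (X j ^ b : MvPolynomial (Fin 3) K) = 0 :=
        IsWeightedHomogeneous.weightedHomogeneousComponent_ne _ (hm_X_pow (K := K) j b)
          (by exact_mod_cast hne.symm)
      rw [h7, smul_zero]
    · simp
  rw [← h6]
  obtain ⟨c, hc⟩ := (Ideal.mem_span_range_iff_exists_fun).1 h5
  rw [← hc, map_sum]
  refine Ideal.sum_mem _ fun i _ => ?_
  rw [hcomp_mul _ (hF i)]
  exact Ideal.mul_mem_left _ _ (Ideal.subset_span ⟨i, rfl⟩)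

/-! ### Linear algebra over polynomial rings -/

lemma coeff_mem_of_eval [Infinite K] {A : Type*} [CommRing A] [Algebra K A] (U : Submodule K A)
    (p : MvPolynomial (Fin 2) A)
    (h : ∀ pt : Fin 2 → K, eval (fun i => algebraMap K A (pt i)) p ∈ U) (m : Fin 2 →₀ ℕ) :
    coeff m p ∈ U := by
  classical
  by_contra hm'
  obtain ⟨f, hf, hU⟩ := Submodule.exists_le_ker_of_notMem hm'
  set q : MvPolynomial (Fin 2) K := ∑ m ∈ p.support, monomial m (f (coeff m p)) with hq
  have hqc : coeff m q = f (coeff m p) := by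
    rw [hq, coeff_sum]
    simp only [coeff_monomial]
    rw [Finset.sum_ite_eq']
    split_ifs with h1
    · rfl
    · rw [notMem_support_iff.1 h1, map_zero]
  have hq0 : q = 0 := by
    apply MvPolynomial.funext
    intro pt
    have h1 := hU (h pt)
    rw [LinearMap.mem_ker, eval_eq', map_sum] at h1
    rw [hq, map_sum, map_zero, ← h1]
    refine Finset.sum_congr rfl fun m _ => ?_
    rw [eval_monomial, Finsupp.prod_fintype _ _ (by simp)]
    have : coeff m p * ∏ i, algebraMap K A (pt i) ^ m i = (∏ i, pt i ^ m i) • coeff m p := by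
      rw [Algebra.smul_def, map_prod, mul_comm]
      simp
    rw [this, map_smul, smul_eq_mul, mul_comm]
  apply hf
  rw [← hqc, hq0, coeff_zero]

lemma mat_left {P : Type*} [CommRing P] [IsDomain P] {m n : Type*} [Fintype m] [Fintype n]
    [DecidableEq m] [DecidableEq n] (A : Matrix m n P) :
    (∃ v : n → P, v ≠ 0 ∧ A.mulVec v = 0) ∨
      ∃ q : P, q ≠ 0 ∧ ∃ B : Matrix n m P, B * A = q • (1 : Matrix n n P) := by
  set Q := FractionRing P
  set A' : Matrix m n Q := A.map (algebraMap P Q)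
  by_cases hinj : LinearMap.ker (Matrix.toLin' A') = ⊥
  · right
    obtain ⟨g, hg⟩ := LinearMap.exists_leftInverse_of_injective _ hinj
    set B' := LinearMap.toMatrix' g
    have hB : B' * A' = 1 := by
      have := congrArg LinearMap.toMatrix' hg
      rwa [LinearMap.toMatrix'_comp, LinearMap.toMatrix'_toLin', LinearMap.toMatrix'_id] at this
    obtain ⟨b, hb⟩ := IsLocalization.exist_integer_multiples_of_finite (nonZeroDivisors P)
      (fun ij : n × m => B' ij.1 ij.2)
    choose B hB' using hb
    refine ⟨b, nonZeroDivisors.ne_zero b.2, Matrix.of fun i j => B (i, j), ?_⟩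
    ext i j
    apply IsFractionRing.injective P Q
    have h1 := congrFun (congrFun hB i) j
    rw [Matrix.mul_apply] at h1 ⊢
    rw [map_sum, Matrix.smul_apply, smul_eq_mul, map_mul]
    have h2 : algebraMap P Q ((1 : Matrix n n P) i j) = (1 : Matrix n n Q) i j := by
      rw [Matrix.one_apply, Matrix.one_apply]; split_ifs <;> simp
    rw [h2, ← h1, Finset.mul_sum]
    refine Finset.sum_congr rfl fun k _ => ?_
    rw [map_mul, Matrix.of_apply, hB', Algebra.smul_def, mul_assoc]
    rfl
  · left
    obtain ⟨w, hw, hw0⟩ := Submodule.exists_mem_ne_zero_of_ne_bot hinj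
    obtain ⟨b, hb⟩ := IsLocalization.exist_integer_multiples_of_finite (nonZeroDivisors P) w
    choose v hv using hb
    have hb0 : algebraMap P Q b ≠ 0 := by
      rw [Ne, IsFractionRing.to_map_eq_zero_iff (R := P)]
      exact nonZeroDivisors.ne_zero b.2
    refine ⟨v, ?_, ?_⟩
    · rintro rfl
      apply hw0
      ext j
      have := hv j
      simp only [Pi.zero_apply, map_zero, Algebra.smul_def] at this
      exact (mul_eq_zero.1 this.symm).resolve_left hb0
    · ext i
      apply IsFractionRing.injective P Q
      rw [LinearMap.mem_ker, Matrix.toLin'_apply] at hw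
      have h1 := congrFun hw i
      rw [Pi.zero_apply, map_zero]
      rw [Matrix.mulVec, dotProduct] at h1 ⊢
      rw [Pi.zero_apply] at h1
      rw [map_sum, ← mul_zero (algebraMap P Q b), ← h1, Finset.mul_sum]
      refine Finset.sum_congr rfl fun k _ => ?_
      rw [map_mul, hv, Algebra.smul_def, mul_left_comm]
      rfl

/-- A family of linear maps depending polynomially on two parameters: either it is generically
injective, or it has a polynomial kernel vector. -/
lemma family_inj {V W : Type*} [AddCommGroup V] [Module K V] [AddCommGroup W] [Module K W]
    {m n : Type*} [Fintype m] [Fintype n] [DecidableEq m] [DecidableEq n]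
    (bV : Module.Basis n K V) (bW : Module.Basis m K W) (M : (Fin 2 → K) → V →ₗ[K] W)
    (A : Matrix m n (MvPolynomial (Fin 2) K))
    (hA : ∀ pt, LinearMap.toMatrix bV bW (M pt) = A.map (eval pt)) :
    (∃ q : MvPolynomial (Fin 2) K, q ≠ 0 ∧ ∀ pt, eval pt q ≠ 0 → Function.Injective (M pt)) ∨
    ∃ v : n → MvPolynomial (Fin 2) K, v ≠ 0 ∧ ∀ pt, M pt (∑ j, eval pt (v j) • bV j) = 0 := by
  rcases mat_left A with ⟨v, hv, hAv⟩ | ⟨q, hq, B, hB⟩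
  · right
    refine ⟨v, hv, fun pt => ?_⟩
    have h1 := LinearMap.toMatrix_mulVec_repr bV bW (M pt) (∑ j, eval pt (v j) • bV j)
    have h2 : ⇑(bV.repr (∑ j, eval pt (v j) • bV j)) = fun j => eval pt (v j) := by
      rw [bV.repr_sum_self]
    rw [h2, hA] at h1
    have h3 : (A.map (eval pt)).mulVec (fun j => eval pt (v j)) = 0 := by
      ext i
      have := congrArg (eval pt) (congrFun hAv i)
      rw [Matrix.mulVec, dotProduct, map_sum] at this
      rw [Matrix.mulVec, dotProduct]
      simpa using this
    rw [h3] at h1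
    apply bW.repr.injective
    ext i
    rw [← congrFun h1 i]; simp
  · left
    refine ⟨q, hq, fun pt hpt => ?_⟩
    rw [← LinearMap.ker_eq_bot, LinearMap.ker_eq_bot']
    intro x hx
    have h1 := LinearMap.toMatrix_mulVec_repr bV bW (M pt) x
    rw [hx, hA] at h1
    have h2 : (B.map (eval pt)) * (A.map (eval pt)) = (eval pt q) • (1 : Matrix n n K) := by
      rw [← Matrix.map_mul, hB]
      ext i j
      simp [Matrix.one_apply]
      split_ifs <;> simp
    have h3 := congrArg (B.map (eval pt)).mulVec h1
    rw [Matrix.mulVec_mulVec, h2] at h3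
    simp only [map_zero, Finsupp.coe_zero, Matrix.mulVec_zero, Matrix.smul_mulVec,
      Matrix.one_mulVec] at h3
    have h4 := (smul_eq_zero.1 h3).resolve_left hpt
    apply bV.repr.injective
    ext i
    rw [congrFun h4 i]; simp

lemma family_surj {V W : Type*} [AddCommGroup V] [Module K V] [AddCommGroup W] [Module K W]
    {m n : Type*} [Fintype m] [Fintype n] [DecidableEq m] [DecidableEq n]
    (bV : Module.Basis n K V) (bW : Module.Basis m K W) (M : (Fin 2 → K) → V →ₗ[K] W)
    (A : Matrix m n (MvPolynomial (Fin 2) K))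
    (hA : ∀ pt, LinearMap.toMatrix bV bW (M pt) = A.map (eval pt))
    (pt₀ : Fin 2 → K) (h₀ : Function.Surjective (M pt₀)) :
    ∃ q : MvPolynomial (Fin 2) K, q ≠ 0 ∧ ∀ pt, eval pt q ≠ 0 → Function.Surjective (M pt) := by
  obtain ⟨g, hg⟩ := LinearMap.exists_rightInverse_of_surjective _ (LinearMap.range_eq_top.2 h₀)
  set N := LinearMap.toMatrix bW bV g
  have := Module.Finite.of_basis bW
  set NC : Matrix n m (MvPolynomial (Fin 2) K) := N.map C with hNC
  set Z : Matrix m m (MvPolynomial (Fin 2) K) := A * NC with hZ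
  have hev : ∀ pt, eval pt Z.det = LinearMap.det (M pt ∘ₗ g) := by
    intro pt
    rw [← LinearMap.det_toMatrix bW, LinearMap.toMatrix_comp bW bV bW, hA, RingHom.map_det]
    congr 1
    rw [RingHom.mapMatrix_apply, hZ, Matrix.map_mul]
    congr 1
    ext i j
    simp [hNC, N]
  refine ⟨Z.det, ?_, fun pt hpt => ?_⟩
  · intro h
    have := hev pt₀
    rw [h, hg, map_zero, LinearMap.det_id] at this
    exact one_ne_zero this.symm
  · rw [hev] at hpt
    have h1 : Function.Surjective (M pt ∘ₗ g) := by
      have := (LinearMap.isUnit_iff_isUnit_det _).2 (isUnit_iff_ne_zero.2 hpt)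
      exact ((Module.End.isUnit_iff _).1 this).2
    intro w
    obtain ⟨x, hx⟩ := h1 w
    exact ⟨g x, hx⟩

/-! ### Substitution maps -/

/-- Specialization of the two parameters. -/
def evp {σ : Type*} (pt : Fin 2 → K) :
    MvPolynomial (Fin 2) (MvPolynomial σ K) →+* MvPolynomial σ K :=
  eval fun i => C (pt i)

lemma evp_X {σ : Type*} (pt : Fin 2 → K) (i : Fin 2) :
    evp (σ := σ) pt (X i) = C (pt i) := by simp [evp]

lemma evp_C {σ : Type*} (pt : Fin 2 → K) (p : MvPolynomial σ K) :
    evp (σ := σ) pt (C p) = p := by simp [evp]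

/-- Restriction to the line `z = s x + t y`. -/
def rho (pt : Fin 2 → K) : MvPolynomial (Fin 3) K →ₐ[K] MvPolynomial (Fin 2) K :=
  aeval ![X 0, X 1, C (pt 0) * X 0 + C (pt 1) * X 1]

/-- Restriction to the generic line. -/
def phi : MvPolynomial (Fin 3) K →ₐ[K] MvPolynomial (Fin 2) (MvPolynomial (Fin 2) K) :=
  aeval ![C (X 0), C (X 1), X 0 * C (X 0) + X 1 * C (X 1)]

lemma phi_C (a : K) : phi (C a) = C (C a) := by
  rw [phi, aeval_C]; rfl
lemma phi_X0 : phi (X 0 : MvPolynomial (Fin 3) K) = C (X 0) := by simp [phi]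
lemma phi_X1 : phi (X 1 : MvPolynomial (Fin 3) K) = C (X 1) := by simp [phi]
lemma phi_X2 : phi (X 2 : MvPolynomial (Fin 3) K) = X 0 * C (X 0) + X 1 * C (X 1) := by
  simp [phi]

lemma rho_C (pt : Fin 2 → K) (a : K) : rho pt (C a) = C a := by
  rw [rho, aeval_C]; rfl
lemma rho_X0 (pt : Fin 2 → K) : rho pt (X 0) = X 0 := by simp [rho]
lemma rho_X1 (pt : Fin 2 → K) : rho pt (X 1) = X 1 := by simp [rho]
lemma rho_X2 (pt : Fin 2 → K) : rho pt (X 2) = C (pt 0) * X 0 + C (pt 1) * X 1 := by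
  simp [rho]

/-- The generic restriction, extended to polynomials with parameters. -/
def Phi : MvPolynomial (Fin 2) (MvPolynomial (Fin 3) K) →+*
    MvPolynomial (Fin 2) (MvPolynomial (Fin 2) K) :=
  eval₂Hom (phi (K := K)).toRingHom X

lemma Phi_C (p : MvPolynomial (Fin 3) K) : Phi (C p) = phi p := by
  simp [Phi]
lemma Phi_X (i : Fin 2) : Phi (K := K) (X i) = X i := by simp [Phi]

/-- The inclusion of binary forms in ternary forms. -/
def iota : MvPolynomial (Fin 2) K →ₐ[K] MvPolynomial (Fin 3) K := rename Fin.castSucc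

lemma iota_X0 : iota (X 0 : MvPolynomial (Fin 2) K) = X 0 := by simp [iota]
lemma iota_X1 : iota (X 1 : MvPolynomial (Fin 2) K) = X 1 := by simp [iota]
lemma iota_C (a : K) : iota (C a) = C a := by simp [iota]

/-- The inclusion with parameters. -/
def psi : MvPolynomial (Fin 2) (MvPolynomial (Fin 2) K) →+*
    MvPolynomial (Fin 2) (MvPolynomial (Fin 3) K) := MvPolynomial.map (iota (K := K)).toRingHom

lemma psi_C (p : MvPolynomial (Fin 2) K) : psi (C p) = C (iota p) := by
  simp [psi]
lemma psi_X (i : Fin 2) : psi (K := K) (X i) = X i := by simp [psi]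

/-- The generic linear form. -/
def LQ (K : Type*) [Field K] : MvPolynomial (Fin 2) (MvPolynomial (Fin 3) K) :=
  C (X 2) - X 0 * C (X 0) - X 1 * C (X 1)

/-- The linear form attached to a point. -/
def Lpt (pt : Fin 2 → K) : MvPolynomial (Fin 3) K :=
  X 2 - C (pt 0) * X 0 - C (pt 1) * X 1

lemma evp_LQ (pt : Fin 2 → K) : evp pt (LQ K) = Lpt pt := by
  simp only [LQ, Lpt, map_sub, map_mul, evp_X, evp_C]

lemma Phi_LQ : Phi (LQ K) = 0 := by
  simp only [LQ, map_sub, map_mul, Phi_X, Phi_C, phi_X0, phi_X1, phi_X2]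
  ring

lemma fin3_cases {P : Fin 3 → Prop} (h0 : P 0) (h1 : P 1) (h2 : P 2) (i : Fin 3) : P i := by
  fin_cases i
  exacts [h0, h1, h2]

lemma evp_phi (pt : Fin 2 → K) (p : MvPolynomial (Fin 3) K) : evp pt (phi p) = rho pt p := by
  have : (evp pt).comp (phi (K := K)).toRingHom = (rho pt).toRingHom := by
    apply MvPolynomial.ringHom_ext
    · intro a
      change evp pt (phi (C a)) = rho pt (C a)
      rw [phi_C, rho_C, evp_C]
    · intro i
      change evp pt (phi (X i)) = rho pt (X i)
      revert i
      apply fin3_cases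
      · rw [phi_X0, rho_X0, evp_C]
      · rw [phi_X1, rho_X1, evp_C]
      · rw [phi_X2, rho_X2, map_add, map_mul, map_mul, evp_C, evp_C, evp_X, evp_X]
  exact congrArg (fun f => f p) this

lemma evp_Phi (pt : Fin 2 → K) (H : MvPolynomial (Fin 2) (MvPolynomial (Fin 3) K)) :
    evp pt (Phi H) = rho pt (evp pt H) := by
  have : (evp pt).comp (Phi (K := K)) = (rho pt).toRingHom.comp (evp pt) := by
    apply MvPolynomial.ringHom_ext
    · intro a
      change evp pt (Phi (C a)) = rho pt (evp pt (C a))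
      rw [Phi_C, evp_phi, evp_C]
    · intro i
      change evp pt (Phi (X i)) = rho pt (evp pt (X i))
      rw [Phi_X, evp_X, evp_X, rho_C]
  exact congrArg (fun f => f H) this

lemma LQ_dvd (P : MvPolynomial (Fin 2) (MvPolynomial (Fin 3) K)) : LQ K ∣ P - psi (Phi P) := by
  rw [← Ideal.mem_span_singleton, ← Ideal.Quotient.eq]
  have : Ideal.Quotient.mk (Ideal.span {LQ K}) =
      (Ideal.Quotient.mk (Ideal.span {LQ K})).comp (psi.comp Phi) := by
    apply MvPolynomial.ringHom_ext'
    · apply MvPolynomial.ringHom_ext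
      · intro a
        change Ideal.Quotient.mk (Ideal.span {LQ K}) (C (C a)) =
          Ideal.Quotient.mk (Ideal.span {LQ K}) (psi (Phi (C (C a))))
        rw [Phi_C, phi_C, psi_C, iota_C]
      · intro i
        change Ideal.Quotient.mk (Ideal.span {LQ K}) (C (X i)) =
          Ideal.Quotient.mk (Ideal.span {LQ K}) (psi (Phi (C (X i))))
        rw [Phi_C]
        revert i
        apply fin3_cases
        · rw [phi_X0, psi_C, iota_X0]
        · rw [phi_X1, psi_C, iota_X1]
        · rw [phi_X2, map_add psi, map_mul psi, map_mul psi, psi_C, psi_C, psi_X, psi_X, iota_X0,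
            iota_X1, Ideal.Quotient.eq, Ideal.mem_span_singleton, LQ]
          exact dvd_of_eq (by ring)
    · intro i
      change Ideal.Quotient.mk (Ideal.span {LQ K}) (X i) =
          Ideal.Quotient.mk (Ideal.span {LQ K}) (psi (Phi (X i)))
      rw [Phi_X, psi_X]
  exact congrArg (fun f => f P) this

lemma evp_psi (pt : Fin 2 → K) (t : MvPolynomial (Fin 2) (MvPolynomial (Fin 2) K)) :
    evp pt (psi t) = iota (evp pt t) := by
  have : (evp pt).comp (psi (K := K)) = (iota (K := K)).toRingHom.comp (evp pt) := by
    apply MvPolynomial.ringHom_ext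
    · intro a
      change evp pt (psi (C a)) = iota (evp pt (C a))
      rw [psi_C, evp_C, evp_C]
    · intro i
      change evp pt (psi (X i)) = iota (evp pt (X i))
      rw [psi_X, evp_X, evp_X, iota_C]
  exact congrArg (fun f => f t) this

lemma Lpt_dvd (pt : Fin 2 → K) (p : MvPolynomial (Fin 3) K) :
    Lpt pt ∣ p - iota (rho pt p) := by
  have := map_dvd (evp pt) (LQ_dvd (C p))
  rwa [map_sub, evp_LQ, evp_C, evp_psi, Phi_C, evp_phi] at this

lemma phi_injective [Infinite K] (p : MvPolynomial (Fin 3) K) (hp : phi p = 0) : p = 0 := by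
  have h1 : ∀ pt, rho pt p = 0 := fun pt => by rw [← evp_phi, hp, map_zero]
  have h2 : X 0 * p = 0 := by
    apply MvPolynomial.funext
    intro a
    rw [eval_mul, eval_X, map_zero]
    by_cases ha : a 0 = 0
    · rw [ha, zero_mul]
    have h3 := congrArg (aeval ![a 0, a 1]) (h1 ![a 2 / a 0, 0])
    have h4 : ∀ q : MvPolynomial (Fin 3) K, aeval ![a 0, a 1] (rho ![a 2 / a 0, 0] q) =
        aeval a q := by
      intro q
      have : (aeval ![a 0, a 1]).comp (rho ![a 2 / a 0, 0]) = aeval a := by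
        apply MvPolynomial.algHom_ext
        intro i
        change aeval ![a 0, a 1] (rho ![a 2 / a 0, 0] (X i)) = aeval a (X i)
        revert i
        apply fin3_cases
        · rw [rho_X0]; simp
        · rw [rho_X1]; simp
        · rw [rho_X2]; simp; field_simp
      exact congrArg (fun f => f q) this
    rw [h4, map_zero] at h3
    have h5 : eval a p = 0 := by
      rw [← h3]; rfl
    rw [h5, mul_zero]
  exact (mul_eq_zero.1 h2).resolve_left (X_ne_zero 0)

/-! ### The derivation killing the generic restriction -/

/-- The derivation `y ∂/∂s - x ∂/∂t`. -/
def DD (f : MvPolynomial (Fin 2) (MvPolynomial (Fin 2) K)) :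
    MvPolynomial (Fin 2) (MvPolynomial (Fin 2) K) :=
  C (X 1) * pderiv 0 f - C (X 0) * pderiv 1 f

lemma DD_apply (f : MvPolynomial (Fin 2) (MvPolynomial (Fin 2) K)) :
    DD f = C (X 1) * pderiv 0 f - C (X 0) * pderiv 1 f := rfl

lemma DD_zero : DD (0 : MvPolynomial (Fin 2) (MvPolynomial (Fin 2) K)) = 0 := by
  simp [DD_apply]

lemma DD_add (f g : MvPolynomial (Fin 2) (MvPolynomial (Fin 2) K)) :
    DD (f + g) = DD f + DD g := by
  rw [DD_apply, DD_apply, DD_apply, map_add, map_add]; ring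

lemma DD_mul (f g : MvPolynomial (Fin 2) (MvPolynomial (Fin 2) K)) :
    DD (f * g) = f * DD g + g * DD f := by
  rw [DD_apply, DD_apply, DD_apply, pderiv_mul, pderiv_mul]; ring

lemma pderiv_phi (p : MvPolynomial (Fin 3) K) (i : Fin 2) :
    pderiv i (phi p) = C (X i) * phi (pderiv 2 p) := by
  induction p using MvPolynomial.induction_on with
  | C a => rw [phi_C, pderiv_C, pderiv_C, map_zero, mul_zero]
  | add p q hp hq => rw [map_add, map_add, hp, hq, map_add, map_add, mul_add]
  | mul_X p j hp =>
    rw [map_mul, pderiv_mul, hp, pderiv_mul, map_add, map_mul, map_mul]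
    have : pderiv i (phi (X j : MvPolynomial (Fin 3) K)) =
        C (X i) * phi (pderiv 2 (X j : MvPolynomial (Fin 3) K)) := by
      revert j
      apply fin3_cases
      · rw [phi_X0, pderiv_C, pderiv_X_of_ne (by decide), map_zero, mul_zero]
      · rw [phi_X1, pderiv_C, pderiv_X_of_ne (by decide), map_zero, mul_zero]
      · rw [phi_X2, pderiv_X_self, map_one, mul_one, map_add, pderiv_mul, pderiv_mul, pderiv_C,
          pderiv_C]
        fin_cases i
        · simp [pderiv_X]
        · simp [pderiv_X]
    rw [this]
    ring

lemma DD_phi (p : MvPolynomial (Fin 3) K) : DD (phi p) = 0 := by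
  rw [DD_apply, pderiv_phi, pderiv_phi]; ring

lemma exists_antideriv [CharZero K] (p : MvPolynomial (Fin 3) K) : ∃ P, pderiv 2 P = p := by
  induction p using MvPolynomial.induction_on' with
  | add p q hp hq =>
    obtain ⟨P, rfl⟩ := hp
    obtain ⟨Q, rfl⟩ := hq
    exact ⟨P + Q, map_add _ _ _⟩
  | monomial m a =>
    refine ⟨monomial (m + Finsupp.single 2 1) (a / ((m 2 : K) + 1)), ?_⟩
    rw [pderiv_monomial]
    have : (m 2 : K) + 1 ≠ 0 := by exact_mod_cast Nat.succ_ne_zero (m 2)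
    simp
    field_simp

lemma coeff_pderiv_zero_of {n : ℕ} {f : MvPolynomial (Fin 2) (MvPolynomial (Fin 2) K)}
    (hf : ∀ m : Fin 2 →₀ ℕ, n + 1 ≤ m.degree → coeff m f = 0) (i : Fin 2) (m : Fin 2 →₀ ℕ)
    (hm' : n ≤ m.degree) : coeff m (pderiv i f) = 0 := by
  rw [coeff_pderiv, hf, zero_mul]
  rw [map_add, Finsupp.degree_single]
  omega

lemma eq_C_of_pderiv [CharZero K] {f : MvPolynomial (Fin 2) (MvPolynomial (Fin 2) K)}
    (hf : ∀ i, pderiv i f = 0) : f = C (coeff 0 f) := by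
  classical
  ext1 m
  rw [coeff_C]
  split_ifs with h0
  · rw [h0]
  · have hne : m ≠ 0 := fun h => h0 h.symm
    obtain ⟨i, hi⟩ : ∃ i, m i ≠ 0 := by
      by_contra! h
      exact hne (Finsupp.ext h)
    have h1 := congrArg (coeff (m - Finsupp.single i 1)) (hf i)
    rw [coeff_pderiv, coeff_zero, tsub_add_cancel_of_le (by
      rw [Finsupp.single_le_iff]; omega)] at h1
    refine (mul_eq_zero.1 h1).resolve_right ?_
    exact_mod_cast Nat.succ_ne_zero ((m - Finsupp.single i (1 : ℕ)) i)

lemma phi_iota (p : MvPolynomial (Fin 2) K) : phi (iota p) = C p := by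
  have : (phi (K := K)).toRingHom.comp (iota (K := K)).toRingHom = C := by
    apply MvPolynomial.ringHom_ext
    · intro a
      change phi (iota (C a)) = C (C a)
      rw [iota_C, phi_C]
    intro i
    change phi (iota (X i)) = C (X i)
    fin_cases i
    · change phi (iota (X 0)) = C (X 0)
      rw [iota_X0, phi_X0]
    · change phi (iota (X 1)) = C (X 1)
      rw [iota_X1, phi_X1]
  exact congrArg (fun f => f p) this

lemma ker_DD [CharZero K] (n : ℕ) (f : MvPolynomial (Fin 2) (MvPolynomial (Fin 2) K))
    (hf : ∀ m : Fin 2 →₀ ℕ, n ≤ m.degree → coeff m f = 0) (hD : DD f = 0) : ∃ p, phi p = f := by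
  induction n generalizing f with
  | zero =>
    refine ⟨0, ?_⟩
    rw [map_zero]
    ext1 m
    rw [hf m (Nat.zero_le _), coeff_zero]
  | succ n ih =>
    rw [DD_apply, sub_eq_zero] at hD
    have hX0 : (C (X 0) : MvPolynomial (Fin 2) (MvPolynomial (Fin 2) K)) ≠ 0 := by
      rw [Ne, C_eq_zero]; exact X_ne_zero 0
    have hX1 : (C (X 1) : MvPolynomial (Fin 2) (MvPolynomial (Fin 2) K)) ≠ 0 := by
      rw [Ne, C_eq_zero]; exact X_ne_zero 1
    obtain ⟨g, hg⟩ : C (X 0) ∣ pderiv 0 f := by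
      have hp : Prime (C (X 0) : MvPolynomial (Fin 2) (MvPolynomial (Fin 2) K)) :=
        (prime_C_iff _).2 X_prime
      refine (hp.dvd_or_dvd ⟨_, hD⟩).resolve_left ?_
      rw [C_dvd_iff_dvd_coeff]
      intro h
      have := h 0
      rw [coeff_zero_C, X_dvd_X] at this
      simp at this
    have hg1 : pderiv 1 f = C (X 1) * g := by
      apply mul_left_cancel₀ hX0
      rw [← hD, hg]; ring
    have hDg : DD g = 0 := by
      apply mul_left_cancel₀ hX0
      have e1 := congrArg (pderiv 1) hg
      have e2 := congrArg (pderiv 0) hg1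
      have e3 : pderiv 1 (pderiv 0 f) = pderiv 0 (pderiv 1 f) := by
        ext1 m
        simp only [coeff_pderiv]
        rw [add_right_comm]
        simp
        ring
      rw [e1, e2, pderiv_mul, pderiv_mul, pderiv_C, pderiv_C] at e3
      rw [DD_apply]
      linear_combination (-C (X 0)) * e3
    obtain ⟨p, hp⟩ := ih g (fun m hm' => by
      have h1 := coeff_pderiv_zero_of hf 0 m hm'
      rw [hg, coeff_C_mul] at h1
      exact (mul_eq_zero.1 h1).resolve_left (X_ne_zero 0)) hDg
    obtain ⟨P, hP⟩ := exists_antideriv p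
    have h2 : f - phi P = C (coeff 0 (f - phi P)) := by
      apply eq_C_of_pderiv
      intro i
      rw [map_sub, pderiv_phi, hP, hp]
      fin_cases i
      · exact sub_eq_zero.2 hg
      · exact sub_eq_zero.2 hg1
    refine ⟨P + iota (coeff 0 (f - phi P)), ?_⟩
    rw [map_add, phi_iota, ← h2]; ring

lemma DD_eq_zero_of_dvd (f : MvPolynomial (Fin 2) (MvPolynomial (Fin 2) K)) (h : f ∣ DD f) :
    DD f = 0 := by
  by_contra hne
  obtain ⟨w, hw⟩ := h
  have hf0 : f ≠ 0 := by rintro rfl; exact hne DD_zero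
  have hw0 : w ≠ 0 := by rintro rfl; exact hne (by rw [hw, mul_zero])
  have h1 : f.totalDegree ≤ (DD f).totalDegree := by
    rw [hw, totalDegree_mul_of_isDomain hf0 hw0]; omega
  obtain ⟨m, hm', hmd⟩ := Finset.exists_mem_eq_sup (DD f).support
    (support_nonempty.2 hne) (fun s : Fin 2 →₀ ℕ => s.sum fun _ e => e)
  have h2 : (DD f).totalDegree = m.degree := hmd
  rw [mem_support_iff] at hm'
  apply hm'
  have h3 : ∀ m' : Fin 2 →₀ ℕ, m.degree + 1 ≤ m'.degree → coeff m' f = 0 := by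
    intro m' hle
    apply coeff_eq_zero_of_totalDegree_lt
    have : m'.degree = ∑ i ∈ m'.support, m' i := rfl
    omega
  rw [DD_apply, coeff_sub, coeff_C_mul, coeff_C_mul, coeff_pderiv_zero_of h3 0 m le_rfl,
    coeff_pderiv_zero_of h3 1 m le_rfl]
  ring

lemma cr_eq_zero_iff {A : Type*} [CommRing A] {u v : Fin 3 → A} (h : cr u v = 0) (i j : Fin 3) :
    u i * v j = u j * v i := by
  have h0 := congrFun h 0
  have h1 := congrFun h 1
  have h2 := congrFun h 2
  simp only [cr_zero', cr_one', cr_two', Pi.zero_apply] at h0 h1 h2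
  fin_cases i <;> fin_cases j <;> simp only [Fin.zero_eta, Fin.mk_one, Fin.reduceFinMk]
  · linear_combination h2
  · linear_combination -h1
  · linear_combination -h2
  · linear_combination h0
  · linear_combination h1
  · linear_combination -h0

lemma constant_direction [CharZero K]
    (h : Fin 3 → MvPolynomial (Fin 2) (MvPolynomial (Fin 2) K))
    (hcr : cr h (fun i => DD (h i)) = 0) :
    ∃ (c : MvPolynomial (Fin 2) (MvPolynomial (Fin 2) K)) (τ : Fin 3 → MvPolynomial (Fin 3) K),
      ∀ i, h i = c * phi (τ i) := by
  classical
  by_cases h0 : h = 0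
  · exact ⟨0, 0, fun i => by simp [h0]⟩
  let _ : NormalizedGCDMonoid (MvPolynomial (Fin 2) (MvPolynomial (Fin 2) K)) :=
    Classical.arbitrary _
  obtain ⟨σ, hσ, hgcd⟩ := Finset.extract_gcd (s := Finset.univ) h Finset.univ_nonempty
  set g := Finset.univ.gcd h
  have hg : g ≠ 0 := by
    intro hg
    exact h0 (funext fun i => by rw [hσ i (Finset.mem_univ _), hg, zero_mul]; rfl)
  have hpar : ∀ i j, σ i * DD (σ j) = σ j * DD (σ i) := by
    intro i j
    have h1 := cr_eq_zero_iff hcr i j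
    simp only [hσ i (Finset.mem_univ _), hσ j (Finset.mem_univ _), DD_mul] at h1
    apply mul_left_cancel₀ (mul_ne_zero hg hg)
    linear_combination h1
  have hD : ∀ i, DD (σ i) = 0 := by
    intro i
    apply DD_eq_zero_of_dvd
    have h1 : σ i ∣ Finset.univ.gcd fun j => σ j * DD (σ i) :=
      Finset.dvd_gcd fun j _ => ⟨DD (σ j), (hpar i j).symm⟩
    have h2 := h1.trans (Finset.gcd_mul_right' (s := Finset.univ) (f := σ) (DD (σ i))).dvd
    rwa [hgcd, one_mul] at h2
  have hex : ∀ i, ∃ p, phi p = σ i := fun i =>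
    ker_DD ((σ i).totalDegree + 1) (σ i) (fun m hm' => by
      apply coeff_eq_zero_of_totalDegree_lt
      have : m.degree = ∑ i ∈ m.support, m i := rfl
      omega) (hD i)
  choose τ hτ using hex
  exact ⟨g, τ, fun i => by rw [hτ, hσ i (Finset.mem_univ _)]⟩

/-! ### Degrees of the coefficients -/

lemma hm_coeff_of_evp [Infinite K] {σ : Type*} {p : MvPolynomial (Fin 2) (MvPolynomial σ K)} {n : ℤ}
    (h : ∀ pt, hm (evp pt p) n) (m : Fin 2 →₀ ℕ) : hm (coeff m p) n :=
  coeff_mem_of_eval (weightedHomogeneousSubmodule K (fun _ : σ => (1 : ℤ)) n) p h m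

lemma hm_evp_of_coeff {σ : Type*} {p : MvPolynomial (Fin 2) (MvPolynomial σ K)} {n : ℤ}
    (h : ∀ m, hm (coeff m p) n) (pt : Fin 2 → K) : hm (evp pt p) n := by
  rw [evp, eval_eq']
  refine hm_sum _ _ fun m _ => ?_
  have : ∏ i, (C (pt i) : MvPolynomial σ K) ^ m i = C (∏ i, pt i ^ m i) := by
    rw [map_prod]; simp
  rw [this, mul_comm]
  exact hm_C_mul _ (h m)

lemma hm_DD [Infinite K] {f : MvPolynomial (Fin 2) (MvPolynomial (Fin 2) K)} {n : ℤ}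
    (h : ∀ pt, hm (evp pt f) n) (pt : Fin 2 → K) : hm (evp pt (DD f)) (n + 1) := by
  have h1 : ∀ i, hm (evp pt (pderiv i f)) n := by
    intro i
    refine hm_evp_of_coeff (fun m => ?_) pt
    rw [coeff_pderiv, mul_comm]
    have h2 : ((m i : MvPolynomial (Fin 2) K) + 1) = C ((m i : K) + 1) := by simp
    rw [h2]
    exact hm_C_mul _ (hm_coeff_of_evp h _)
  rw [DD_apply, map_sub, map_mul, map_mul, evp_C, evp_C]
  exact hm_sub (hm_mul' (hm_X _) (h1 0) (by ring)) (hm_mul' (hm_X _) (h1 1) (by ring))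

lemma eq_zero_of_evp [Infinite K] {σ : Type*} {p : MvPolynomial (Fin 2) (MvPolynomial σ K)}
    (h : ∀ pt, evp pt p = 0) : p = 0 := by
  ext1 m
  rw [coeff_zero]
  exact coeff_mem_of_eval (K := K) (⊥ : Submodule K (MvPolynomial σ K)) p h m

/-! ### Graded pieces of the quotient -/

lemma hm_aeval {σ τ : Type*} {g : σ → MvPolynomial τ K} (hg : ∀ i, hm (g i) 1)
    {p : MvPolynomial σ K} {n : ℤ} (hp : hm p n) : hm (aeval g p) n := by
  rw [p.as_sum, map_sum]
  refine hm_sum _ _ fun m hm' => ?_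
  rw [aeval_monomial]
  refine hm_C_mul _ ?_
  have hw := hp (mem_support_iff.1 hm')
  have h1 : hm (∏ i ∈ m.support, g i ^ m i) (∑ i ∈ m.support, (m i : ℤ)) := by
    refine IsWeightedHomogeneous.prod m.support (fun i => g i ^ m i) (fun i => (m i : ℤ))
      fun i _ => ?_
    have := hm_pow (hg i) (m i)
    rwa [mul_one] at this
  rw [Finsupp.weight_apply] at hw
  have h2 : (∑ i ∈ m.support, (m i : ℤ)) = n := by
    rw [← hw]
    simp [Finsupp.sum]
  rw [h2] at h1
  exact h1

lemma hm_rho (pt : Fin 2 → K) {p : MvPolynomial (Fin 3) K} {n : ℤ} (hp : hm p n) :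
    hm (rho pt p) n := by
  refine hm_aeval (fun i => ?_) hp
  revert i
  apply fin3_cases
  · exact hm_X 0
  · exact hm_X 1
  · exact hm_add (hm_C_mul _ (hm_X 0)) (hm_C_mul _ (hm_X 1))

lemma hm_Lpt (pt : Fin 2 → K) : hm (Lpt pt) 1 :=
  hm_sub (hm_sub (hm_X 2) (hm_C_mul _ (hm_X 0))) (hm_C_mul _ (hm_X 1))

lemma hm_of_homog {p : MvPolynomial (Fin 3) K} {n : ℤ} (h : homog p n) : hm p n := h

lemma homog_Lpt (pt : Fin 2 → K) : homog (Lpt pt) 1 := hm_Lpt pt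

lemma homog_X (i : Fin 3) : homog (X i : MvPolynomial (Fin 3) K) 1 := hm_X i

lemma Lpt_ne_zero (pt : Fin 2 → K) : Lpt pt ≠ 0 := by
  intro h
  have := congrArg (eval ![0, 0, 1]) h
  simp [Lpt] at this

lemma LQ_ne_zero : LQ K ≠ 0 := by
  intro h
  have := congrArg (evp (0 : Fin 2 → K)) h
  rw [evp_LQ, map_zero] at this
  exact Lpt_ne_zero _ this

/-- The class of a form in the graded piece of the quotient. -/
def cls (I : Ideal (MvPolynomial (Fin 3) K)) {d : ℤ} (p : MvPolynomial (Fin 3) K) (hp : hm p d) :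
    Ad I d := Submodule.Quotient.mk ⟨p, hp⟩

lemma cls_eq_iff (I : Ideal (MvPolynomial (Fin 3) K)) {d : ℤ} {p q : MvPolynomial (Fin 3) K}
    (hp : hm p d) (hq : hm q d) : cls I p hp = cls I q hq ↔ p - q ∈ I := by
  rw [cls, cls, Submodule.Quotient.eq]
  rfl

lemma cls_surj (I : Ideal (MvPolynomial (Fin 3) K)) {d : ℤ} (a : Ad I d) :
    ∃ p, ∃ hp : hm p d, cls I p hp = a := by
  obtain ⟨⟨p, hp⟩, rfl⟩ := Submodule.Quotient.mk_surjective _ a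
  exact ⟨p, hp, rfl⟩

lemma cls_eq_zero_iff (I : Ideal (MvPolynomial (Fin 3) K)) {d : ℤ} {p : MvPolynomial (Fin 3) K}
    (hp : hm p d) : cls I p hp = 0 ↔ p ∈ I := by
  rw [cls, Submodule.Quotient.mk_eq_zero]
  rfl

lemma mulA_cls (I : Ideal (MvPolynomial (Fin 3) K)) {d : ℤ} {L p : MvPolynomial (Fin 3) K}
    (hL : homog L 1) (hp : hm p (d - 1)) :
    mulA I L hL d (cls I p hp) = cls I (L * p) (hm_mul' (hm_of_homog hL) hp (by ring)) := rfl

lemma sum_smul_cls (I : Ideal (MvPolynomial (Fin 3) K)) {d : ℤ} {ι : Type*} [Fintype ι]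
    (a : ι → K) (G : ι → MvPolynomial (Fin 3) K) (hG : ∀ j, hm (G j) d) :
    ∑ j, a j • cls I (G j) (hG j) = cls I (∑ j, C (a j) * G j)
      (hm_sum _ _ fun j _ => hm_C_mul _ (hG j)) := by
  have h1 : ∀ j, cls I (G j) (hG j) =
      (IdealPiece I d).mkQ (⟨G j, hG j⟩ : ↥(Rdeg (K := K) d)) := fun j => rfl
  simp only [h1, ← map_smul, ← map_sum]
  rw [Submodule.mkQ_apply, cls]
  congr 1
  apply Subtype.ext
  rw [AddSubmonoidClass.coe_finsetSum]
  refine Finset.sum_congr rfl fun j _ => ?_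
  rw [← smul_eq_C_mul]
  rfl

lemma finite_Ad (I : Ideal (MvPolynomial (Fin 3) K)) [Module.Finite K (MvPolynomial (Fin 3) K ⧸ I)]
    (d : ℤ) : Module.Finite K (Ad I d) := by
  let f : Ad I d →ₗ[K] (MvPolynomial (Fin 3) K ⧸ (I.restrictScalars K)) :=
    Submodule.mapQ (IdealPiece I d) (I.restrictScalars K) (Rdeg (K := K) d).subtype le_rfl
  have : Module.Finite K (MvPolynomial (Fin 3) K ⧸ (I.restrictScalars K)) :=
    inferInstanceAs (Module.Finite K (MvPolynomial (Fin 3) K ⧸ I))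
  refine Module.Finite.of_injective f ?_
  rw [← LinearMap.ker_eq_bot, LinearMap.ker_eq_bot']
  intro a ha
  obtain ⟨p, hp, rfl⟩ := cls_surj I a
  rw [cls_eq_zero_iff]
  have h1 : Submodule.Quotient.mk (p := I.restrictScalars K) p = 0 := ha
  rwa [Submodule.Quotient.mk_eq_zero] at h1

lemma lift_mem (pt : Fin 2 → K) (F : Fin 3 → MvPolynomial (Fin 3) K) (p : MvPolynomial (Fin 3) K)
    (h : rho pt p ∈ Ideal.span (Set.range fun i => rho pt (F i))) :
    ∃ (c : Fin 3 → MvPolynomial (Fin 3) K) (q : MvPolynomial (Fin 3) K),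
      p = ∑ i, c i * F i + q * Lpt pt := by
  obtain ⟨c, hc⟩ := (Ideal.mem_span_range_iff_exists_fun).1 h
  obtain ⟨a, ha⟩ := Lpt_dvd pt p
  choose b hb using fun i => Lpt_dvd pt (F i)
  refine ⟨fun i => iota (c i), a - ∑ i, iota (c i) * b i, ?_⟩
  have h1 := congrArg iota hc
  rw [map_sum, Fin.sum_univ_three, map_mul, map_mul, map_mul] at h1
  rw [Fin.sum_univ_three, Fin.sum_univ_three]
  linear_combination ha - h1 - iota (c 0) * hb 0 - iota (c 1) * hb 1 - iota (c 2) * hb 2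

lemma surj_of (F : Fin 3 → MvPolynomial (Fin 3) K) (e : Fin 3 → ℤ) (hF : ∀ i, hm (F i) (e i))
    (pt : Fin 2 → K) (d : ℤ)
    (h : ∀ w, hm w d → w ∈ Ideal.span (Set.range fun i => rho pt (F i))) :
    Function.Surjective (mulA (Ideal.span (Set.range F)) (Lpt pt) (homog_Lpt pt) d) := by
  intro a
  obtain ⟨p, hp, rfl⟩ := cls_surj _ a
  obtain ⟨c, q, hcq⟩ := lift_mem pt F p (h _ (hm_rho pt hp))
  refine ⟨cls _ (hcomp (d - 1) q) (hm_hcomp _ _), ?_⟩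
  rw [mulA_cls, cls_eq_iff]
  have h1 := congrArg (hcomp d) hcq
  rw [hcomp_same hp, map_add, map_sum, hcomp_mul _ (hm_Lpt pt)] at h1
  have h2 : Lpt pt * hcomp (d - 1) q - p = - ∑ i, hcomp d (c i * F i) := by
    linear_combination -h1
  rw [h2]
  refine neg_mem (Ideal.sum_mem _ fun i _ => ?_)
  rw [hcomp_mul _ (hF i)]
  exact Ideal.mul_mem_left _ _ (Ideal.subset_span ⟨i, rfl⟩)

/-! ### The main step -/

lemma core [IsAlgClosed K] [CharZero K] (F : Fin 3 → MvPolynomial (Fin 3) K) (e : Fin 3 → ℤ)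
    (hF : ∀ i, hm (F i) (e i)) {N : ℕ} (hx : X 0 ^ N ∈ Ideal.span (Set.range F))
    (hy : X 1 ^ N ∈ Ideal.span (Set.range F)) (d : ℤ)
    (hns : ∀ pt, ∃ w, hm w d ∧ w ∉ Ideal.span (Set.range fun i => rho pt (F i)))
    (G : MvPolynomial (Fin 2) (MvPolynomial (Fin 3) K))
    (hG : ∀ pt, hm (evp pt G) (d - 1))
    (hk : ∀ pt, Lpt pt * evp pt G ∈ Ideal.span (Set.range F)) (pt : Fin 2 → K) :
    evp pt G ∈ Ideal.span (Set.range F) := by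
  classical
  have hinf : Infinite K := CharZero.infinite K
  have hmemc : ∀ m, coeff m (LQ K * G) ∈ Ideal.span (Set.range F) := fun m =>
    coeff_mem_of_eval (K := K) ((Ideal.span (Set.range F)).restrictScalars K) _ (fun pt => by
      have h1 := hk pt
      rw [← evp_LQ, ← map_mul] at h1
      exact h1) m
  have hhmc : ∀ m, hm (coeff m (LQ K * G)) d := hm_coeff_of_evp fun pt => by
    rw [map_mul, evp_LQ]
    exact hm_mul' (hm_Lpt pt) (hG pt) (by ring)
  choose c hcd hcs using fun m => exists_hm_coeffs F e hF (hhmc m) (hmemc m)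
  set H : Fin 3 → MvPolynomial (Fin 2) (MvPolynomial (Fin 3) K) := fun i =>
    ∑ m ∈ (LQ K * G).support, monomial m (c m i) with hH
  have hHd : ∀ i pt, hm (evp pt (H i)) (d - e i) := by
    intro i
    refine hm_evp_of_coeff fun m' => ?_
    rw [hH]
    simp only [coeff_sum, coeff_monomial]
    refine hm_sum _ _ fun m _ => ?_
    split_ifs
    · exact hcd m i
    · exact hm_zero _
  have hHs : LQ K * G = ∑ i, H i * C (F i) := by
    conv_lhs => rw [(LQ K * G).as_sum]
    simp only [hH, Finset.sum_mul]
    rw [Finset.sum_comm]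
    refine Finset.sum_congr rfl fun m _ => ?_
    rw [← hcs m, map_sum]
    refine Finset.sum_congr rfl fun i _ => ?_
    rw [mul_comm (monomial m _), C_mul_monomial, mul_comm]
  set h : Fin 3 → MvPolynomial (Fin 2) (MvPolynomial (Fin 2) K) := fun i => Phi (H i) with hh
  have hs : ∑ i, h i * phi (F i) = 0 := by
    have h1 := congrArg Phi hHs
    rw [map_mul, Phi_LQ, zero_mul, map_sum] at h1
    simp only [map_mul, Phi_C] at h1
    exact h1.symm
  have hDs : ∑ i, DD (h i) * phi (F i) = 0 := by
    have h1 := congrArg DD hs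
    rw [Fin.sum_univ_three, DD_add, DD_add, DD_mul, DD_mul, DD_mul, DD_phi, DD_phi, DD_phi,
      DD_zero] at h1
    rw [Fin.sum_univ_three]
    linear_combination h1
  have hhd : ∀ i pt, hm (evp pt (h i)) (d - e i) := fun i pt => by
    rw [hh]
    simp only [evp_Phi]
    exact hm_rho pt (hHd i pt)
  have hev : ∀ (pt : Fin 2 → K) (u : Fin 3 → MvPolynomial (Fin 2) (MvPolynomial (Fin 2) K)),
      ∑ i, u i * phi (F i) = 0 → ∑ i, evp pt (u i) * rho pt (F i) = 0 := by
    intro pt u hu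
    have h1 := congrArg (evp pt) hu
    rw [map_sum, map_zero] at h1
    simpa only [map_mul, evp_phi] using h1
  have hXN : ∀ pt, X 0 ^ N ∈ Ideal.span (Set.range fun i => rho pt (F i)) ∧
      X 1 ^ N ∈ Ideal.span (Set.range fun i => rho pt (F i)) := by
    intro pt
    have h1 : ∀ p ∈ Ideal.span (Set.range F),
        rho pt p ∈ Ideal.span (Set.range fun i => rho pt (F i)) := by
      intro p hp
      have := Ideal.mem_map_of_mem (rho pt) hp
      rwa [Ideal.map_span, ← Set.range_comp] at this
    refine ⟨?_, ?_⟩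
    · have := h1 _ hx
      rwa [map_pow, rho_X0] at this
    · have := h1 _ hy
      rwa [map_pow, rho_X1] at this
  have hcr : cr h (fun i => DD (h i)) = 0 := by
    funext j
    apply eq_zero_of_evp
    intro pt
    have h1 : cr (fun i => evp pt (h i)) (fun i => evp pt (DD (h i))) = 0 := by
      by_contra hne
      obtain ⟨w, hw, hwn⟩ := hns pt
      refine hwn (syz_main (fun i => rho pt (F i)) e (fun i => hm_rho pt (hF i)) (hXN pt).1
        (hXN pt).2 (p := d) (q := d + 1) (fun i => evp pt (h i)) (fun i => evp pt (DD (h i)))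
        (by omega) le_rfl (fun i => hhd i pt) (fun i => ?_) (hev pt _ hs) (hev pt _ hDs) hne w hw)
      have := hm_DD (fun pt => hhd i pt) pt
      rwa [sub_add_eq_add_sub] at this
    have h2 := congrFun h1 j
    revert j
    apply fin3_cases
    · intro h2
      simpa [cr_zero'] using h2
    · intro h2
      simpa [cr_one'] using h2
    · intro h2
      simpa [cr_two'] using h2
  obtain ⟨γ, τ, hτ⟩ := constant_direction h hcr
  choose A hA using fun i => LQ_dvd (H i)
  choose B hB using fun i => LQ_dvd (C (τ i))
  have hpsi : psi γ * C (∑ i, τ i * F i) = 0 := by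
    by_cases hγ : γ = 0
    · rw [hγ, map_zero, zero_mul]
    · have h1 : phi (∑ i, τ i * F i) = 0 := by
        apply mul_left_cancel₀ hγ
        rw [mul_zero, ← hs, map_sum, Finset.mul_sum]
        refine Finset.sum_congr rfl fun i _ => ?_
        rw [hτ, map_mul, mul_assoc]
      rw [phi_injective _ h1, map_zero, mul_zero]
  have hHeq : ∀ i, H i = psi γ * C (τ i) + LQ K * (A i - psi γ * B i) := by
    intro i
    have h1 := hA i
    have h2 := hB i
    have h3 : psi (Phi (H i)) = psi γ * psi (phi (τ i)) := by
      rw [← map_mul, ← hτ]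
    rw [Phi_C] at h2
    rw [h3] at h1
    linear_combination h1 - psi γ * h2
  have hGeq : G = ∑ i, (A i - psi γ * B i) * C (F i) := by
    apply mul_left_cancel₀ (LQ_ne_zero (K := K))
    rw [hHs, Finset.mul_sum]
    rw [map_sum, Finset.mul_sum] at hpsi
    rw [← sub_eq_zero, ← Finset.sum_sub_distrib, ← hpsi]
    refine Finset.sum_congr rfl fun i _ => ?_
    rw [map_mul, hHeq i]
    ring
  rw [hGeq, map_sum]
  refine Ideal.sum_mem _ fun i _ => ?_
  rw [map_mul, evp_C]
  exact Ideal.mul_mem_left _ _ (Ideal.subset_span ⟨i, rfl⟩)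

lemma mulA_Lpt (I : Ideal (MvPolynomial (Fin 3) K)) (d : ℤ) (pt : Fin 2 → K) :
    mulA I (Lpt pt) (homog_Lpt pt) d = mulA I (X 2) (homog_X 2) d - pt 0 • mulA I (X 0) (homog_X 0) d -
      pt 1 • mulA I (X 1) (homog_X 1) d := by
  apply LinearMap.ext
  intro a
  obtain ⟨p, hp, rfl⟩ := cls_surj I a
  rw [LinearMap.sub_apply, LinearMap.sub_apply, LinearMap.smul_apply, LinearMap.smul_apply]
  simp only [mulA_cls]
  simp only [cls, ← Submodule.Quotient.mk_smul, ← Submodule.Quotient.mk_sub]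
  congr 1
  apply Subtype.ext
  change Lpt pt * p = X 2 * p - pt 0 • (X 0 * p) - pt 1 • (X 1 * p)
  rw [smul_eq_C_mul, smul_eq_C_mul, Lpt]
  ring

lemma degree_step [IsAlgClosed K] [CharZero K] (F : Fin 3 → MvPolynomial (Fin 3) K) (e : Fin 3 → ℤ)
    (hF : ∀ i, hm (F i) (e i)) {N : ℕ} (hx : X 0 ^ N ∈ Ideal.span (Set.range F))
    (hy : X 1 ^ N ∈ Ideal.span (Set.range F))
    (hfin : Module.Finite K (MvPolynomial (Fin 3) K ⧸ Ideal.span (Set.range F))) (d : ℤ) :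
    ∃ q : MvPolynomial (Fin 2) K, q ≠ 0 ∧ ∀ pt, eval pt q ≠ 0 →
      Function.Injective (mulA (Ideal.span (Set.range F)) (Lpt pt) (homog_Lpt pt) d) ∨
      Function.Surjective (mulA (Ideal.span (Set.range F)) (Lpt pt) (homog_Lpt pt) d) := by
  classical
  have hinf : Infinite K := CharZero.infinite K
  set I := Ideal.span (Set.range F) with hI
  have hf1 := finite_Ad I d
  have hf2 := finite_Ad I (d - 1)
  let bV := Module.finBasis K (Ad I (d - 1))
  let bW := Module.finBasis K (Ad I d)
  let M : (Fin 2 → K) → Ad I (d - 1) →ₗ[K] Ad I d := fun pt => mulA I (Lpt pt) (homog_Lpt pt) d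
  let T : Fin 3 → Matrix _ _ K := fun i => LinearMap.toMatrix bV bW (mulA I (X i) (homog_X i) d)
  let A : Matrix (Fin (Module.finrank K (Ad I d))) (Fin (Module.finrank K (Ad I (d - 1))))
      (MvPolynomial (Fin 2) K) := fun i j => C (T 2 i j) - X 0 * C (T 0 i j) - X 1 * C (T 1 i j)
  have hA : ∀ pt, LinearMap.toMatrix bV bW (M pt) = A.map (eval pt) := by
    intro pt
    have h1 : M pt = _ := mulA_Lpt I d pt
    rw [h1, map_sub, map_sub, map_smul, map_smul]
    ext i j
    rw [Matrix.map_apply]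
    simp [A, T]
  rcases family_inj bV bW M A hA with ⟨q, hq, h⟩ | ⟨v, hv, h⟩
  · exact ⟨q, hq, fun pt hpt => Or.inl (h pt hpt)⟩
  by_cases hsurj : ∃ pt₀, Function.Surjective (M pt₀)
  · obtain ⟨pt₀, h₀⟩ := hsurj
    obtain ⟨q, hq, h⟩ := family_surj bV bW M A hA pt₀ h₀
    exact ⟨q, hq, fun pt hpt => Or.inr (h pt hpt)⟩
  exfalso
  have hns : ∀ pt, ∃ w, hm w d ∧ w ∉ Ideal.span (Set.range fun i => rho pt (F i)) := by
    intro pt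
    by_contra! hcon
    exact hsurj ⟨pt, surj_of F e hF pt d hcon⟩
  choose G hGd hGc using fun j => cls_surj I (bV j)
  set GG : MvPolynomial (Fin 2) (MvPolynomial (Fin 3) K) :=
    ∑ j, MvPolynomial.map C (v j) * C (G j) with hGG
  have hGe : ∀ pt, evp pt GG = ∑ j, C (eval pt (v j)) * G j := by
    intro pt
    rw [hGG, map_sum]
    refine Finset.sum_congr rfl fun j _ => ?_
    rw [map_mul, evp_C]
    congr 1
    rw [evp, eval_map]
    have h1 := eval₂_comp_left (C : K →+* MvPolynomial (Fin 3) K) (RingHom.id K) pt (v j)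
    rw [RingHom.comp_id] at h1
    exact h1.symm
  have hGhm : ∀ pt, hm (evp pt GG) (d - 1) := fun pt => by
    rw [hGe]
    exact hm_sum _ _ fun j _ => hm_C_mul _ (hGd j)
  have hcl : ∀ pt, ∑ j, eval pt (v j) • bV j = cls I (evp pt GG) (hGhm pt) := by
    intro pt
    simp only [← hGc, hGe]
    exact sum_smul_cls I _ G hGd
  have hk : ∀ pt, Lpt pt * evp pt GG ∈ I := by
    intro pt
    have h1 := h pt
    rw [hcl] at h1
    change mulA I (Lpt pt) (homog_Lpt pt) d _ = 0 at h1
    rwa [mulA_cls, cls_eq_zero_iff] at h1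
  have hzero := core F e hF hx hy d hns GG hGhm hk
  apply hv
  funext j
  apply MvPolynomial.funext
  intro pt
  have h1 := hcl pt
  rw [(cls_eq_zero_iff I (hGhm pt)).2 (hzero pt)] at h1
  rw [Pi.zero_apply, map_zero]
  exact Fintype.linearIndependent_iff.1 bV.linearIndependent _ h1 j


/-- If `F₁, F₂, F₃` are homogeneous polynomials of positive degree forming a
regular sequence in `R = K[x,y,z]`, then the Artinian graded algebra `A = R/(F₁, F₂, F₃)` has
the Weak Lefschetz Property: there is a linear form `L` such that multiplication by `L` from
each graded piece of `A` to the next is injective or surjective. -/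
theorem statement5 {K : Type*} [Field K] [IsAlgClosed K] [CharZero K]
    (F : Fin 3 → MvPolynomial (Fin 3) K)
    (hdeg : ∀ i, ∃ e : ℤ, 0 < e ∧ homog (F i) e)
    (hreg : RingTheory.Sequence.IsRegular (MvPolynomial (Fin 3) K) [F 0, F 1, F 2]) :
    ∃ (L : MvPolynomial (Fin 3) K) (hL : homog L 1),
      ∀ d : ℤ, Function.Injective (mulA (Ideal.span {F 0, F 1, F 2}) L hL d) ∨
        Function.Surjective (mulA (Ideal.span {F 0, F 1, F 2}) L hL d) := by
  have hinf : Infinite K := CharZero.infinite K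
  have hset : ({F 0, F 1, F 2} : Set (MvPolynomial (Fin 3) K)) = Set.range F := by
    ext p
    simp [Fin.exists_fin_succ, eq_comm]
  rw [hset]
  choose e he hF using hdeg
  have hF' : ∀ i, hm (F i) (e i) := hF
  obtain ⟨N0, hN0⟩ := exists_X_pow_mem F e hF' hreg 0
  obtain ⟨N1, hN1⟩ := exists_X_pow_mem F e hF' hreg 1
  obtain ⟨N, hx, hy⟩ : ∃ N : ℕ, X 0 ^ N ∈ Ideal.span (Set.range F) ∧
      X 1 ^ N ∈ Ideal.span (Set.range F) :=
    ⟨N0 + N1, Ideal.pow_mem_of_pow_mem _ hN0 (by omega), Ideal.pow_mem_of_pow_mem _ hN1 (by omega)⟩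
  choose q hq hqs using fun d : ℤ => degree_step F e hF' hx hy (finite_quot F hreg) d
  have hprod : ∏ d ∈ Finset.Icc (0 : ℤ) (2 * N), q d ≠ 0 :=
    Finset.prod_ne_zero_iff.2 fun d _ => hq d
  obtain ⟨pt, hpt⟩ : ∃ pt, eval pt (∏ d ∈ Finset.Icc (0 : ℤ) (2 * N), q d) ≠ 0 := by
    by_contra! hcon
    exact hprod (MvPolynomial.funext fun pt => by rw [hcon pt, map_zero])
  rw [map_prod, Finset.prod_ne_zero_iff] at hpt
  refine ⟨Lpt pt, homog_Lpt pt, fun d => ?_⟩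
  rcases lt_or_ge d 0 with hd | hd
  · left
    intro a b _
    obtain ⟨p, hp, rfl⟩ := cls_surj _ a
    obtain ⟨p', hp', rfl⟩ := cls_surj _ b
    rw [cls_eq_iff, hm_neg_eq_zero hp (by omega), hm_neg_eq_zero hp' (by omega), sub_zero]
    exact zero_mem _
  rcases le_or_gt d (2 * N) with hd2 | hd2
  · exact hqs d pt (hpt d (Finset.mem_Icc.2 ⟨hd, hd2⟩))
  · right
    refine surj_of F e hF' pt d fun w hw => ?_
    have h1 : ∀ p ∈ Ideal.span (Set.range F),
        rho pt p ∈ Ideal.span (Set.range fun i => rho pt (F i)) := by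
      intro p hp
      have := Ideal.mem_map_of_mem (rho pt) hp
      rwa [Ideal.map_span, ← Set.range_comp] at this
    refine hm_mem_of_large _ (N := N) ?_ ?_ hw hd2.le
    · have := h1 _ hx
      rwa [map_pow, rho_X0] at this
    · have := h1 _ hy
      rwa [map_pow, rho_X1] at this

end
end
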